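/- arXiv:1503.04038 — 5 statements merged into one kernel-verified Lean document; each statement's English description precedes it below -/
import Mathlib

section
/- Fix positive real numbers α and β with αβ = 4, and let s be a real number with s ∉ αℤ. If f ∈ L¹((0,∞), ℂ) satisfies ∫₀^∞ e^{iπαmt} f(t) dt = 0 for all m ∈ ℤ, ∫₀^∞ e^{−iπβn/t} f(t) dt = 0 for all n ∈ ℤ, and additionally ∫₀^∞ e^{iπst} f(t) dt = 0, then f = 0 almost everywhere on (0,∞). -/
open MeasureTheory Real

/-- If all Fourier coefficients of the signed measure `g μ`, transported to the circle by `τ`,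
vanish, then `g` annihilates every continuous function on the circle. -/
theorem integral_circle_continuous_eq_zero {X : Type*} [MeasurableSpace X] {μ : Measure X}
    {τ : X → ℝ} (hτ : Measurable τ) {g : X → ℝ} (hg : Integrable g μ)
    (h : ∀ m : ℤ, ∫ x, Complex.exp (2 * π * Complex.I * m * τ x) * g x ∂μ = 0)
    (F : C(UnitAddCircle, ℂ)) :
    ∫ x, F (τ x : UnitAddCircle) * g x ∂μ = 0 := by
  have hq : Measurable fun x => (τ x : UnitAddCircle) := AddCircle.measurable_mk'.comp hτ
  have hintegrable : ∀ F : C(UnitAddCircle, ℂ),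
      Integrable (fun x => F (τ x : UnitAddCircle) * (g x : ℂ)) μ := fun F =>
    hg.ofReal.bdd_mul (F.continuous.measurable.comp hq).aestronglyMeasurable
      (Filter.Eventually.of_forall fun x => F.norm_coe_le_norm _)
  let Λ : C(UnitAddCircle, ℂ) →L[ℂ] ℂ := LinearMap.mkContinuous
    { toFun := fun F => ∫ x, F (τ x : UnitAddCircle) * g x ∂μ
      map_add' := fun F G => by
        simp only [ContinuousMap.add_apply, add_mul]
        exact integral_add (hintegrable F) (hintegrable G)
      map_smul' := fun c F => by
        simp only [ContinuousMap.smul_apply, smul_eq_mul, mul_assoc, RingHom.id_apply]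
        exact integral_const_mul _ _ } (∫ x, ‖g x‖ ∂μ) (fun F => by
        rw [mul_comm, ← integral_const_mul]
        refine norm_integral_le_of_norm_le (hg.norm.const_mul _)
          (Filter.Eventually.of_forall fun x => ?_)
        rw [norm_mul, Complex.norm_real]
        exact mul_le_mul_of_nonneg_right (F.norm_coe_le_norm _) (norm_nonneg _))
  have hΛ : Λ = 0 := by
    refine ContinuousLinearMap.ext_on
      ((Submodule.dense_iff_topologicalClosure_eq_top).2
        (span_fourier_closure_eq_top (T := 1))) ?_
    rintro _ ⟨m, rfl⟩
    change ∫ x, fourier m (τ x : UnitAddCircle) * (g x : ℂ) ∂μ = 0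
    simpa [fourier_coe_apply] using h m
  exact congrArg (fun L => L F) hΛ

/-- If all Fourier coefficients of the signed measure `g μ`, transported to the circle by `τ`,
vanish, then `g` annihilates every bounded measurable function of the fractional part of `τ`. -/
theorem integral_fract_eq_zero {X : Type*} [MeasurableSpace X] {μ : Measure X}
    {τ : X → ℝ} (hτ : Measurable τ) {g : X → ℝ} (hg : Integrable g μ)
    (h : ∀ m : ℤ, ∫ x, Complex.exp (2 * π * Complex.I * m * τ x) * g x ∂μ = 0)
    {k : ℝ → ℝ} (hk : Measurable k) (hb : ∀ x, |k x| ≤ 1) :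
    ∫ x, k (Int.fract (τ x)) * g x ∂μ = 0 := by
  have hq : Measurable fun x => (τ x : UnitAddCircle) := AddCircle.measurable_mk'.comp hτ
  have hsplit : ∀ (F : UnitAddCircle → ℝ) (C : ℝ), Measurable F → (∀ y, |F y| ≤ C) →
      ∫ x, F (τ x : UnitAddCircle) * g x ∂μ =
        (∫ y, F y ∂((μ.withDensity fun x => ENNReal.ofReal (g x)).map
          fun x => (τ x : UnitAddCircle))) -
        ∫ y, F y ∂((μ.withDensity fun x => ENNReal.ofReal (-g x)).map
          fun x => (τ x : UnitAddCircle)) := by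
    intro F C hF hC
    rw [integral_map hq.aemeasurable hF.aestronglyMeasurable,
      integral_map hq.aemeasurable hF.aestronglyMeasurable,
      integral_withDensity_eq_integral_toReal_smul₀ hg.1.aemeasurable.ennreal_ofReal
        (Filter.Eventually.of_forall fun _ => ENNReal.ofReal_lt_top),
      integral_withDensity_eq_integral_toReal_smul₀
        (f := fun x => ENNReal.ofReal (-g x)) hg.1.aemeasurable.neg.ennreal_ofReal
        (Filter.Eventually.of_forall fun _ => ENNReal.ofReal_lt_top), ← integral_sub]
    · refine integral_congr_ae (Filter.Eventually.of_forall fun x => ?_)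
      simp only [smul_eq_mul, ENNReal.toReal_ofReal', ← sub_mul]
      rw [mul_comm, max_zero_sub_max_neg_zero_eq_self]
    · simp only [smul_eq_mul, ENNReal.toReal_ofReal']
      exact hg.pos_part.mul_bdd (c := C) (hF.comp hq).aestronglyMeasurable
        (Filter.Eventually.of_forall fun x => hC _)
    · simp only [smul_eq_mul, ENNReal.toReal_ofReal']
      exact hg.neg_part.mul_bdd (c := C) (hF.comp hq).aestronglyMeasurable
        (Filter.Eventually.of_forall fun x => hC _)
  have hfin : ∀ {g : X → ℝ}, Integrable g μ →
      IsFiniteMeasure (μ.withDensity fun x => ENNReal.ofReal (g x)) := fun hg =>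
    isFiniteMeasure_withDensity_ofReal hg.2
  have := hfin hg
  have : IsFiniteMeasure (μ.withDensity fun x => ENNReal.ofReal (-g x)) := hfin hg.neg
  have hmeas : (μ.withDensity fun x => ENNReal.ofReal (g x)).map
      (fun x => (τ x : UnitAddCircle)) =
      (μ.withDensity fun x => ENNReal.ofReal (-g x)).map fun x => (τ x : UnitAddCircle) := by
    refine ext_of_forall_integral_eq_of_IsFiniteMeasure fun F => ?_
    rw [← sub_eq_zero, ← hsplit F ‖F‖ F.continuous.measurable fun y => F.norm_coe_le_norm y]
    have := integral_circle_continuous_eq_zero hτ hg h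
      ⟨fun y => (F y : ℂ), Complex.continuous_ofReal.comp F.continuous⟩
    simp only [ContinuousMap.coe_mk, ← Complex.ofReal_mul] at this
    exact_mod_cast integral_complex_ofReal.symm.trans this
  have hkm : Measurable fun y : UnitAddCircle =>
      k (AddCircle.measurableEquivIco (1 : ℝ) 0 y : ℝ) :=
    hk.comp (measurable_subtype_coe.comp (AddCircle.measurableEquivIco (1 : ℝ) 0).measurable)
  have := hsplit _ 1 hkm fun y => hb _
  rw [hmeas, sub_self] at this
  rw [← this]
  refine integral_congr_ae (Filter.Eventually.of_forall fun x => ?_)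
  have hfr : ((AddCircle.measurableEquivIco (1 : ℝ) 0 (τ x : UnitAddCircle) : _) : ℝ) =
      Int.fract (τ x) := by
    have := AddCircle.coe_equivIco_mk_apply (p := (1 : ℝ)) (τ x)
    rw [div_one, mul_one] at this
    exact this
  simp only [hfr]
/-- The Gauss map `x ↦ {1/x}`. -/
noncomputable def gaussMap (x : ℝ) : ℝ := Int.fract x⁻¹

/-- The probability with which the inverse branch `x ↦ 1/(k+1+x)` is chosen by the
Gauss transfer operator. -/
noncomputable def gaussWeight (k : ℕ) (x : ℝ) : ℝ :=
  (1 + x) / ((k + 1 + x) * (k + 2 + x))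

/-- The transfer operator of the Gauss map with respect to its invariant measure `dx/(1+x)`. -/
noncomputable def gaussOp (φ : ℝ → ℝ) (x : ℝ) : ℝ :=
  ∑' k : ℕ, gaussWeight k x * φ (k + 1 + x)⁻¹

theorem measurable_gaussMap : Measurable gaussMap :=
  measurable_fract.comp measurable_inv

theorem gaussWeight_pos (k : ℕ) {x : ℝ} (hx : 0 ≤ x) : 0 < gaussWeight k x := by
  unfold gaussWeight; positivity

theorem hasSum_gaussWeight {x : ℝ} (hx : 0 ≤ x) : HasSum (fun k => gaussWeight k x) 1 := by
  rw [hasSum_iff_tendsto_nat_of_nonneg fun k => (gaussWeight_pos k hx).le]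
  have hsum : ∀ n : ℕ, ∑ k ∈ Finset.range n, gaussWeight k x = 1 - (1 + x) * (n + (1 + x))⁻¹ := by
    intro n
    induction n with
    | zero => simp; field_simp; simp
    | succ n ih =>
      rw [Finset.sum_range_succ, ih, gaussWeight]
      push_cast
      field_simp
      ring
  simp only [hsum]
  have : Filter.Tendsto (fun n : ℕ => ((n : ℝ) + (1 + x))⁻¹) Filter.atTop (nhds 0) :=
    tendsto_inv_atTop_zero.comp
      (Filter.tendsto_atTop_add_const_right _ _ tendsto_natCast_atTop_atTop)
  simpa using (this.const_mul (1 + x)).const_sub 1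

theorem inv_branch_mem (k : ℕ) {x : ℝ} (hx : 0 ≤ x) :
    ((k : ℝ) + 1 + x)⁻¹ ∈ Set.Icc (0 : ℝ) 1 :=
  ⟨by positivity, inv_le_one_of_one_le₀ (by linarith [k.cast_nonneg (α := ℝ)])⟩

theorem summable_gaussOp {φ : ℝ → ℝ} {C : ℝ} (hφ : ∀ x ∈ Set.Icc (0 : ℝ) 1, |φ x| ≤ C) {x : ℝ}
    (hx : 0 ≤ x) : Summable fun k : ℕ => gaussWeight k x * φ (k + 1 + x)⁻¹ := by
  refine .of_norm_bounded ((hasSum_gaussWeight hx).summable.mul_right C) fun k => ?_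
  rw [norm_mul, Real.norm_of_nonneg (gaussWeight_pos k hx).le]
  exact mul_le_mul_of_nonneg_left (hφ _ (inv_branch_mem k hx)) (gaussWeight_pos k hx).le

/-- Weighted averages of an antitone sequence against two probability weights with
single crossing compare. -/
theorem tsum_mul_le_tsum_mul_of_crossing {p q a : ℕ → ℝ} (hp : HasSum p 1) (hq : HasSum q 1)
    (hpa : Summable fun k => p k * a k) (hqa : Summable fun k => q k * a k) (ha : Antitone a)
    (hcross : ∀ j k, j ≤ k → p j ≤ q j → p k ≤ q k) :
    ∑' k, q k * a k ≤ ∑' k, p k * a k := by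
  have hex : ∃ c, ∀ k, 0 ≤ (p k - q k) * (a k - c) := by
    by_cases h : ∃ k, p k ≤ q k
    · classical
      refine ⟨a (Nat.find h), fun k => ?_⟩
      rcases lt_or_ge k (Nat.find h) with hk | hk
      · exact mul_nonneg (by linarith [not_le.1 (Nat.find_min h hk)]) (sub_nonneg.2 (ha hk.le))
      · exact mul_nonneg_of_nonpos_of_nonpos
          (sub_nonpos.2 (hcross _ _ hk (Nat.find_spec h))) (sub_nonpos.2 (ha hk))
    · push Not at h
      exact absurd (hasSum_lt (fun k => (h k).le) (h 0) hq hp) (lt_irrefl _)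
  obtain ⟨c, hc⟩ := hex
  have h1 : HasSum (fun k => (p k - q k) * (a k - c))
      ((∑' k, p k * a k - ∑' k, q k * a k) - (1 - 1) * c) := by
    refine ((hpa.hasSum.sub hqa.hasSum).sub ((hp.sub hq).mul_right c)).congr_fun ?_
    intro k; ring
  have := h1.nonneg hc
  linarith

theorem gaussWeight_crossing {x y : ℝ} (hx : 0 ≤ x) (hxy : x ≤ y) (j k : ℕ) (hjk : j ≤ k)
    (h : gaussWeight j x ≤ gaussWeight j y) : gaussWeight k x ≤ gaussWeight k y := by
  have hy := hx.trans hxy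
  have hjk' : (j : ℝ) ≤ k := by exact_mod_cast hjk
  have hj := j.cast_nonneg (α := ℝ)
  have hk := k.cast_nonneg (α := ℝ)
  unfold gaussWeight at h ⊢
  rw [div_le_div_iff₀ (by positivity) (by positivity)] at h ⊢
  have key : ((k : ℝ) + 1 + y) * (k + 2 + y) * ((j + 1 + x) * (j + 2 + x)) ≤
      ((j : ℝ) + 1 + y) * (j + 2 + y) * ((k + 1 + x) * (k + 2 + x)) := by
    have h1 : ((k : ℝ) + 1 + y) * (j + 1 + x) ≤ (j + 1 + y) * (k + 1 + x) := by nlinarith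
    have h2 : ((k : ℝ) + 2 + y) * (j + 2 + x) ≤ (j + 2 + y) * (k + 2 + x) := by nlinarith
    calc _ = (((k : ℝ) + 1 + y) * (j + 1 + x)) * (((k : ℝ) + 2 + y) * (j + 2 + x)) := by ring
      _ ≤ ((j + 1 + y) * (k + 1 + x)) * ((j + 2 + y) * (k + 2 + x)) := by gcongr
      _ = _ := by ring
  have hD : 0 < ((j : ℝ) + 1 + x) * (j + 2 + x) := by positivity
  refine le_of_mul_le_mul_right ?_ hD
  calc (1 + x) * (((k : ℝ) + 1 + y) * (k + 2 + y)) * ((j + 1 + x) * (j + 2 + x))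
      = (1 + x) * (((k : ℝ) + 1 + y) * (k + 2 + y) * ((j + 1 + x) * (j + 2 + x))) := by ring
    _ ≤ (1 + x) * (((j : ℝ) + 1 + y) * (j + 2 + y) * ((k + 1 + x) * (k + 2 + x))) := by gcongr
    _ = (1 + x) * (((j : ℝ) + 1 + y) * (j + 2 + y)) * ((k + 1 + x) * (k + 2 + x)) := by ring
    _ ≤ (1 + y) * (((j : ℝ) + 1 + x) * (j + 2 + x)) * ((k + 1 + x) * (k + 2 + x)) := by gcongr
    _ = _ := by ring

theorem abs_le_of_monotoneOn {φ : ℝ → ℝ} (hφ : MonotoneOn φ (Set.Icc 0 1)) :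
    ∀ x ∈ Set.Icc (0 : ℝ) 1, |φ x| ≤ max |φ 0| |φ 1| := fun x hx =>
  abs_le_max_abs_abs (hφ (by simp) hx hx.1) (hφ hx (by simp) hx.2)

theorem MonotoneOn.gaussOp_antitoneOn {φ : ℝ → ℝ} (hφ : MonotoneOn φ (Set.Icc 0 1)) :
    AntitoneOn (gaussOp φ) (Set.Icc 0 1) := by
  intro x hx y hy hxy
  have hb := abs_le_of_monotoneOn hφ
  have hsx := summable_gaussOp hb hx.1
  have hsxy : Summable fun k : ℕ => gaussWeight k y * φ (k + 1 + x)⁻¹ := by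
    refine .of_norm_bounded ((hasSum_gaussWeight hy.1).summable.mul_right (max |φ 0| |φ 1|))
      fun k => ?_
    rw [norm_mul, Real.norm_of_nonneg (gaussWeight_pos k hy.1).le]
    exact mul_le_mul_of_nonneg_left (hb _ (inv_branch_mem k hx.1)) (gaussWeight_pos k hy.1).le
  calc gaussOp φ y ≤ ∑' k : ℕ, gaussWeight k y * φ (k + 1 + x)⁻¹ := by
        refine (summable_gaussOp hb hy.1).tsum_le_tsum (fun k => ?_) hsxy
        refine mul_le_mul_of_nonneg_left ?_ (gaussWeight_pos k hy.1).le
        have := hx.1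
        exact hφ (inv_branch_mem k hy.1) (inv_branch_mem k hx.1) (by gcongr)
    _ ≤ gaussOp φ x := by
        refine tsum_mul_le_tsum_mul_of_crossing (hasSum_gaussWeight hx.1)
          (hasSum_gaussWeight hy.1) hsx hsxy (fun j k hjk => ?_) (gaussWeight_crossing hx.1 hxy)
        have := hx.1
        exact hφ (inv_branch_mem k hx.1) (inv_branch_mem j hx.1) (by gcongr)

theorem MonotoneOn.gaussOp_osc_le {φ : ℝ → ℝ} (hφ : MonotoneOn φ (Set.Icc 0 1)) :
    gaussOp φ 0 - gaussOp φ 1 ≤ 2 / 3 * (φ 1 - φ 0) := by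
  have hb := abs_le_of_monotoneOn hφ
  have hsplit : ∀ x : ℝ, 0 ≤ x → gaussOp φ x = gaussWeight 0 x * φ (1 + x)⁻¹ +
      ∑' k : ℕ, gaussWeight (k + 1) x * φ (((k + 1 : ℕ) : ℝ) + 1 + x)⁻¹ := fun x hx => by
    rw [gaussOp, (summable_gaussOp hb hx).tsum_eq_zero_add]
    simp
  have htail : ∀ x : ℝ, 0 ≤ x →
      HasSum (fun k => gaussWeight (k + 1) x) (1 - gaussWeight 0 x) := fun x hx => by
    simpa using (hasSum_nat_add_iff' (f := fun k => gaussWeight k x) 1).2 (hasSum_gaussWeight hx)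
  have h12 : (1 / 2 : ℝ) ∈ Set.Icc (0 : ℝ) 1 := by norm_num
  have hup : gaussOp φ 0 ≤ 1 / 2 * φ 1 + 1 / 2 * φ (1 / 2) := by
    rw [hsplit 0 le_rfl]
    have h1 := ((summable_gaussOp hb le_rfl).comp_injective (add_left_injective 1)).tsum_le_tsum
      (g := fun k => gaussWeight (k + 1) 0 * φ (1 / 2)) (fun k => by
        refine mul_le_mul_of_nonneg_left ?_ (gaussWeight_pos _ le_rfl).le
        refine hφ (inv_branch_mem _ le_rfl) h12 ?_
        rw [one_div]; gcongr; push_cast; linarith [k.cast_nonneg (α := ℝ)])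
      ((htail 0 le_rfl).summable.mul_right _)
    rw [tsum_mul_right, (htail 0 le_rfl).tsum_eq] at h1
    norm_num [gaussWeight] at h1 ⊢
    linarith
  have hlow : 1 / 3 * φ (1 / 2) + 2 / 3 * φ 0 ≤ gaussOp φ 1 := by
    rw [hsplit 1 zero_le_one]
    have h1 := ((htail 1 zero_le_one).summable.mul_right (φ 0)).tsum_le_tsum
      (fun k => by
        refine mul_le_mul_of_nonneg_left ?_ (gaussWeight_pos _ zero_le_one).le
        exact hφ (by simp) (inv_branch_mem (k + 1) zero_le_one)
          (inv_branch_mem (k + 1) zero_le_one).1)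
      ((summable_gaussOp hb zero_le_one).comp_injective (add_left_injective 1))
    rw [tsum_mul_right, (htail 1 zero_le_one).tsum_eq] at h1
    norm_num [gaussWeight] at h1 ⊢
    linarith
  have := hφ h12 (by simp : (1 : ℝ) ∈ Set.Icc (0 : ℝ) 1) (by norm_num)
  have := hφ (by simp : (0 : ℝ) ∈ Set.Icc (0 : ℝ) 1) h12 (by norm_num)
  linarith

theorem image_inv_Ioo_zero_one : (fun x : ℝ => x⁻¹) '' Set.Ioo 0 1 = Set.Ioi 1 := by
  ext y
  constructor
  · rintro ⟨x, hx, rfl⟩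
    exact (one_lt_inv₀ hx.1).2 hx.2
  · intro hy
    have hy' : (1 : ℝ) < y := hy
    exact ⟨y⁻¹, ⟨by positivity, inv_lt_one_of_one_lt₀ hy'⟩, inv_inv y⟩

theorem hasDerivWithinAt_inv_Ioo {x : ℝ} (hx : x ∈ Set.Ioo (0 : ℝ) 1) :
    HasDerivWithinAt (fun x : ℝ => x⁻¹) (-(x ^ 2)⁻¹) (Set.Ioo 0 1) x :=
  (hasDerivAt_inv hx.1.ne').hasDerivWithinAt

theorem abs_neg_inv_sq (x : ℝ) : |-(x ^ 2)⁻¹| = (x ^ 2)⁻¹ := by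
  rw [abs_neg, abs_of_nonneg (by positivity)]

theorem setIntegral_Ioi_one_eq_inv {E : Type*} [NormedAddCommGroup E] [NormedSpace ℝ E]
    (g : ℝ → E) :
    ∫ x in Set.Ioi (1 : ℝ), g x = ∫ x in Set.Ioo (0 : ℝ) 1, (x ^ 2)⁻¹ • g x⁻¹ := by
  rw [← image_inv_Ioo_zero_one, integral_image_eq_integral_abs_deriv_smul measurableSet_Ioo
    (fun x hx => hasDerivWithinAt_inv_Ioo hx) inv_injective.injOn]
  simp only [abs_neg_inv_sq]

theorem integrableOn_Ioi_one_iff_inv {E : Type*} [NormedAddCommGroup E] [NormedSpace ℝ E]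
    (g : ℝ → E) :
    IntegrableOn g (Set.Ioi (1 : ℝ)) ↔
      IntegrableOn (fun x => (x ^ 2)⁻¹ • g x⁻¹) (Set.Ioo (0 : ℝ) 1) := by
  rw [← image_inv_Ioo_zero_one, integrableOn_image_iff_integrableOn_abs_deriv_smul
    measurableSet_Ioo (fun x hx => hasDerivWithinAt_inv_Ioo hx) inv_injective.injOn]
  simp only [abs_neg_inv_sq]

theorem iUnion_Ioc_natCast_add_one :
    ⋃ k : ℕ, Set.Ioc ((k : ℝ) + 1) (k + 1 + 1) = Set.Ioi 1 := by
  ext x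
  simp only [Set.mem_iUnion, Set.mem_Ioc, Set.mem_Ioi]
  constructor
  · rintro ⟨k, hk, -⟩
    linarith [k.cast_nonneg (α := ℝ)]
  · intro hx
    have h2 : 2 ≤ ⌈x⌉₊ := Nat.succ_le_of_lt (Nat.lt_ceil.2 (by exact_mod_cast hx))
    obtain ⟨k, hk⟩ := Nat.exists_eq_add_of_le h2
    have h3 := Nat.le_ceil x
    have h4 := Nat.ceil_lt_add_one (by linarith : (0 : ℝ) ≤ x)
    rw [hk] at h3 h4
    push_cast at h3 h4
    exact ⟨k, by linarith, by linarith⟩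

theorem pairwise_disjoint_Ioc_natCast_add_one :
    Pairwise (Function.onFun Disjoint fun k : ℕ => Set.Ioc ((k : ℝ) + 1) (k + 1 + 1)) := by
  intro i j hij
  refine Set.disjoint_left.2 fun x hx hx' => hij ?_
  have h1 : (i : ℝ) < j + 1 := by linarith [hx.1, hx'.2]
  have h2 : (j : ℝ) < i + 1 := by linarith [hx.2, hx'.1]
  have h1' : i < j + 1 := by exact_mod_cast h1
  have h2' : j < i + 1 := by exact_mod_cast h2
  omega

theorem setIntegral_Ioc_natCast_add_one (G : ℝ → ℝ) (k : ℕ) :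
    ∫ x in Set.Ioc ((k : ℝ) + 1) (k + 1 + 1), G x = ∫ x in Set.Ioo (0 : ℝ) 1, G (k + 1 + x) := by
  rw [← integral_Ioc_eq_integral_Ioo, ← intervalIntegral.integral_of_le zero_le_one,
    intervalIntegral.integral_comp_add_left (fun x => G x) ((k : ℝ) + 1), add_zero,
    intervalIntegral.integral_of_le (by linarith)]

/-- Integration over `(1, ∞)` as integration over `(0, 1)` of the periodization. -/
theorem setIntegral_Ioi_one_eq_tsum {G : ℝ → ℝ} (hG : IntegrableOn G (Set.Ioi 1)) :
    ∫ x in Set.Ioi (1 : ℝ), G x = ∫ x in Set.Ioo (0 : ℝ) 1, ∑' k : ℕ, G (k + 1 + x) := by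
  have hsum : ∀ {G : ℝ → ℝ}, IntegrableOn G (Set.Ioi 1) →
      HasSum (fun k : ℕ => ∫ x in Set.Ioo (0 : ℝ) 1, G (k + 1 + x))
        (∫ x in Set.Ioi (1 : ℝ), G x) := by
    intro G hG
    rw [← iUnion_Ioc_natCast_add_one] at hG ⊢
    simpa only [setIntegral_Ioc_natCast_add_one] using hasSum_integral_iUnion
      (fun k : ℕ => measurableSet_Ioc) pairwise_disjoint_Ioc_natCast_add_one hG
  have hintegrable : ∀ k : ℕ, IntegrableOn (fun x => G (k + 1 + x)) (Set.Ioo 0 1) := by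
    intro k
    have h1 : IntervalIntegrable G volume ((k : ℝ) + 1) (k + 1 + 1) := by
      rw [intervalIntegrable_iff_integrableOn_Ioc_of_le (by linarith)]
      exact hG.mono_set fun x hx => by
        have := hx.1
        have hk := k.cast_nonneg (α := ℝ)
        exact lt_of_le_of_lt (by linarith) this
    have h2 := h1.comp_add_left ((k : ℝ) + 1)
    rw [sub_self, add_sub_cancel_left,
      intervalIntegrable_iff_integrableOn_Ioc_of_le zero_le_one] at h2
    exact h2.mono_set Set.Ioo_subset_Ioc_self
  exact (hsum hG).unique (hasSum_integral_of_summable_integral_norm hintegrable (hsum hG.norm).summable)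

theorem integrableOn_mul_comp_of_abs_le_one {u k : ℝ → ℝ} {τ : ℝ → ℝ} {s : Set ℝ}
    (hu : IntegrableOn u s) (hk : Measurable k) (hτ : Measurable τ) (hb : ∀ x, |k x| ≤ 1) :
    IntegrableOn (fun x => u x * k (τ x)) s :=
  hu.mul_bdd (c := 1) (hk.comp hτ).aestronglyMeasurable
    (Filter.Eventually.of_forall fun _ => hb _)

theorem integrableOn_mul_inv_one_add {φ : ℝ → ℝ} (hφ : IntegrableOn φ (Set.Ioo 0 1)) :
    IntegrableOn (fun x => φ x * (1 + x)⁻¹) (Set.Ioo 0 1) := by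
  refine hφ.mul_bdd (c := 1) (by fun_prop) ?_
  filter_upwards [ae_restrict_mem measurableSet_Ioo] with x hx
  rw [norm_inv, Real.norm_of_nonneg (by linarith [hx.1])]
  exact inv_le_one_of_one_le₀ (by linarith [hx.1])

/-- `gaussOp` is dual to composition with the Gauss map. -/
theorem integral_mul_comp_gaussMap {φ k : ℝ → ℝ} (hφ : IntegrableOn φ (Set.Ioo 0 1))
    (hk : Measurable k) (hb : ∀ x, |k x| ≤ 1) :
    ∫ x in Set.Ioo (0 : ℝ) 1, φ x * (1 + x)⁻¹ * k (gaussMap x) =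
      ∫ x in Set.Ioo (0 : ℝ) 1, gaussOp φ x * (1 + x)⁻¹ * k x := by
  set G : ℝ → ℝ := fun t => φ t⁻¹ * (t * (t + 1))⁻¹ * k (Int.fract t) with hGdef
  have heq : ∀ x ∈ Set.Ioo (0 : ℝ) 1,
      φ x * (1 + x)⁻¹ * k (gaussMap x) = (x ^ 2)⁻¹ • G x⁻¹ := by
    intro x hx
    have := hx.1
    simp only [hGdef, smul_eq_mul, inv_inv, gaussMap]
    field_simp
  have hG : IntegrableOn G (Set.Ioi 1) := by
    rw [integrableOn_Ioi_one_iff_inv, ← integrableOn_congr_fun heq measurableSet_Ioo]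
    exact integrableOn_mul_comp_of_abs_le_one (integrableOn_mul_inv_one_add hφ) hk measurable_gaussMap hb
  rw [setIntegral_congr_fun measurableSet_Ioo heq, ← setIntegral_Ioi_one_eq_inv,
    setIntegral_Ioi_one_eq_tsum hG]
  refine setIntegral_congr_fun measurableSet_Ioo fun x hx => ?_
  simp only [gaussOp]
  rw [← tsum_mul_right, ← tsum_mul_right]
  refine tsum_congr fun j => ?_
  have hfr : Int.fract ((j : ℝ) + 1 + x) = x := by
    rw [show (j : ℝ) + 1 + x = x + ((j + 1 : ℕ) : ℝ) by push_cast; ring, Int.fract_add_natCast,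
      Int.fract_eq_self.2 ⟨hx.1.le, hx.2⟩]
  have := hx.1
  simp only [hGdef, hfr, gaussWeight]
  field_simp
  ring_nf

theorem MonotoneOn.integrableOn_Ioo {φ : ℝ → ℝ} (hφ : MonotoneOn φ (Set.Icc 0 1)) :
    IntegrableOn φ (Set.Ioo 0 1) :=
  (hφ.integrableOn_isCompact isCompact_Icc).mono_set Set.Ioo_subset_Icc_self

theorem abs_setIntegral_weighted_le {φ k : ℝ → ℝ} {C : ℝ}
    (hφ : ∀ x ∈ Set.Icc (0 : ℝ) 1, |φ x| ≤ C) (hb : ∀ x, |k x| ≤ 1) :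
    |∫ x in Set.Ioo (0 : ℝ) 1, φ x * (1 + x)⁻¹ * k x| ≤ C := by
  have := norm_setIntegral_le_of_norm_le_const (μ := volume) (s := Set.Ioo (0 : ℝ) 1) (C := C)
    (f := fun x => φ x * (1 + x)⁻¹ * k x) (by simp) (fun x hx => by
      have hx0 := hx.1
      have h1 : |(1 + x)⁻¹| ≤ 1 := by
        rw [abs_inv, abs_of_pos (by linarith)]
        exact inv_le_one_of_one_le₀ (by linarith)
      rw [Real.norm_eq_abs, abs_mul, abs_mul]
      have h2 := hφ x ⟨hx.1.le, hx.2.le⟩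
      calc |φ x| * |(1 + x)⁻¹| * |k x| ≤ C * 1 * 1 := by
            have : 0 ≤ C := (abs_nonneg _).trans h2
            gcongr
            exact hb x
        _ = C := by ring)
  simpa using this

/-- Exponential decay of correlations of monotone functions under the Gauss map. -/
theorem MonotoneOn.exists_correlation_le (n : ℕ) {φ : ℝ → ℝ}
    (hφ : MonotoneOn φ (Set.Icc 0 1)) :
    ∃ c : ℝ, ∀ k : ℝ → ℝ, Measurable k → (∀ x, |k x| ≤ 1) →
      |(∫ x in Set.Ioo (0 : ℝ) 1, φ x * (1 + x)⁻¹ * k (gaussMap^[n] x)) -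
        c * ∫ x in Set.Ioo (0 : ℝ) 1, (1 + x)⁻¹ * k x| ≤ (2 / 3) ^ n * (φ 1 - φ 0) := by
  induction n generalizing φ with
  | zero =>
    refine ⟨φ 0, fun k hk hb => ?_⟩
    have hi := integrableOn_mul_comp_of_abs_le_one
      (integrableOn_mul_inv_one_add hφ.integrableOn_Ioo) hk measurable_id hb
    have h1 : IntegrableOn (fun _ : ℝ => φ 0) (Set.Ioo 0 1) := by simp
    have hi1 := integrableOn_mul_comp_of_abs_le_one
      (integrableOn_mul_inv_one_add h1) hk measurable_id hb
    simp only [id] at hi hi1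
    rw [← integral_const_mul]
    simp only [← mul_assoc, Function.iterate_zero, id, pow_zero, one_mul]
    rw [← integral_sub hi hi1]
    simp only [← sub_mul]
    refine abs_setIntegral_weighted_le (fun x hx => ?_) hb
    have h0 := hφ (by simp) hx hx.1
    have h1 := hφ hx (by simp) hx.2
    rw [abs_of_nonneg (by linarith)]
    linarith
  | succ n ih =>
    have hanti := hφ.gaussOp_antitoneOn
    obtain ⟨c, hc⟩ := ih hanti.neg
    refine ⟨-c, fun k hk hb => ?_⟩
    have hdual := integral_mul_comp_gaussMap hφ.integrableOn_Ioo
      (hk.comp (measurable_gaussMap.iterate n)) fun x => hb _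
    simp only [Function.comp_apply] at hdual
    simp only [Function.iterate_succ, Function.comp_apply]
    rw [hdual]
    have h1 := hc k hk hb
    simp only [neg_mul, integral_neg] at h1
    have h2 := hφ.gaussOp_osc_le
    rw [← abs_neg]
    calc _ = _ := by congr 1; ring
      _ ≤ _ := h1
      _ = (2 / 3 : ℝ) ^ n * (gaussOp φ 0 - gaussOp φ 1) := by ring
      _ ≤ (2 / 3 : ℝ) ^ n * (2 / 3 * (φ 1 - φ 0)) := by gcongr
      _ = _ := by ring

/-- Decay of correlations of polynomials under the Gauss map. -/
theorem Polynomial.eventually_exists_correlation_le (p : Polynomial ℝ) :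
    ∀ ε > 0, ∀ᶠ n in Filter.atTop, ∃ c : ℝ, ∀ k : ℝ → ℝ, Measurable k → (∀ x, |k x| ≤ 1) →
      |(∫ x in Set.Ioo (0 : ℝ) 1, p.eval x * (1 + x)⁻¹ * k (gaussMap^[n] x)) -
        c * ∫ x in Set.Ioo (0 : ℝ) 1, (1 + x)⁻¹ * k x| ≤ ε := by
  have hpow : ∀ C : ℝ, ∀ ε > 0, ∀ᶠ n : ℕ in Filter.atTop, (2 / 3 : ℝ) ^ n * C ≤ ε := by
    intro C ε hε
    have := (tendsto_pow_atTop_nhds_zero_of_lt_one (r := (2 / 3 : ℝ)) (by norm_num)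
      (by norm_num)).mul_const C
    rw [zero_mul] at this
    exact (this.eventually (gt_mem_nhds hε)).mono fun n hn => hn.le
  induction p using Polynomial.induction_on' with
  | add p q hp hq =>
    intro ε hε
    filter_upwards [hp (ε / 2) (half_pos hε), hq (ε / 2) (half_pos hε)] with n hpn hqn
    obtain ⟨c, hc⟩ := hpn
    obtain ⟨d, hd⟩ := hqn
    refine ⟨c + d, fun k hk hb => ?_⟩
    have hi : ∀ p : Polynomial ℝ, IntegrableOn
        (fun x => p.eval x * (1 + x)⁻¹ * k (gaussMap^[n] x)) (Set.Ioo 0 1) := fun p =>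
      integrableOn_mul_comp_of_abs_le_one (integrableOn_mul_inv_one_add
        ((p.continuous.continuousOn.integrableOn_Icc).mono_set Set.Ioo_subset_Icc_self)) hk
        (measurable_gaussMap.iterate n) hb
    simp only [Polynomial.eval_add, add_mul]
    rw [integral_add (hi p) (hi q)]
    calc _ = |((∫ x in Set.Ioo (0 : ℝ) 1, p.eval x * (1 + x)⁻¹ * k (gaussMap^[n] x)) -
        c * ∫ x in Set.Ioo (0 : ℝ) 1, (1 + x)⁻¹ * k x) +
        ((∫ x in Set.Ioo (0 : ℝ) 1, q.eval x * (1 + x)⁻¹ * k (gaussMap^[n] x)) -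
        d * ∫ x in Set.Ioo (0 : ℝ) 1, (1 + x)⁻¹ * k x)| := by congr 1; ring
      _ ≤ ε / 2 + ε / 2 := (abs_add_le _ _).trans (add_le_add (hc k hk hb) (hd k hk hb))
      _ = ε := add_halves ε
  | monomial m a =>
    intro ε hε
    have hmono : ∀ b : ℝ, 0 ≤ b → MonotoneOn (fun x => (Polynomial.monomial m b).eval x)
        (Set.Icc 0 1) := by
      intro b hb x hx y hy hxy
      have := hx.1
      simp only [Polynomial.eval_monomial]
      gcongr
    rcases le_total 0 a with ha | ha
    · filter_upwards [hpow _ ε hε] with n hn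
      obtain ⟨c, hc⟩ := (hmono a ha).exists_correlation_le n
      exact ⟨c, fun k hk hb => (hc k hk hb).trans hn⟩
    · filter_upwards [hpow _ ε hε] with n hn
      obtain ⟨c, hc⟩ := (hmono (-a) (neg_nonneg.2 ha)).exists_correlation_le n
      refine ⟨-c, fun k hk hb => ?_⟩
      have := (hc k hk hb).trans hn
      simp only [Polynomial.eval_monomial, neg_mul, integral_neg] at this ⊢
      rw [abs_le] at this ⊢
      constructor <;> linarith

/-- Integrable functions on `(0, 1)` are approximated in mean by polynomials. -/
theorem exists_polynomial_integral_sub_le {v : ℝ → ℝ} (hv : IntegrableOn v (Set.Ioo 0 1))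
    {ε : ℝ} (hε : 0 < ε) :
    ∃ p : Polynomial ℝ, ∫ x in Set.Ioo (0 : ℝ) 1, |v x - p.eval x| ≤ ε := by
  obtain ⟨g, -, hg, hgc, hgi⟩ :=
    Integrable.exists_hasCompactSupport_integral_sub_le hv (half_pos hε)
  obtain ⟨p, hp⟩ := exists_polynomial_near_of_continuousOn 0 1 g hgc.continuousOn (ε / 2)
    (half_pos hε)
  have hpi : IntegrableOn (fun x => p.eval x) (Set.Ioo 0 1) :=
    (p.continuous.continuousOn.integrableOn_Icc).mono_set Set.Ioo_subset_Icc_self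
  refine ⟨p, ?_⟩
  have hc : IntegrableOn (fun _ : ℝ => ε / 2) (Set.Ioo 0 1) := by simp
  calc ∫ x in Set.Ioo (0 : ℝ) 1, |v x - p.eval x|
      ≤ ∫ x in Set.Ioo (0 : ℝ) 1, (‖v x - g x‖ + ε / 2) := by
        refine setIntegral_mono_on (hv.sub hpi).abs ((hv.sub hgi).norm.add hc)
          measurableSet_Ioo fun x hx => ?_
        have h1 := hp x ⟨hx.1.le, hx.2.le⟩
        rw [abs_sub_comm] at h1
        rw [Real.norm_eq_abs]
        exact (abs_sub_le _ (g x) _).trans (by linarith)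
    _ = (∫ x in Set.Ioo (0 : ℝ) 1, ‖v x - g x‖) + ε / 2 := by
        rw [integral_add (f := fun x => ‖v x - g x‖) (hv.sub hgi).norm hc]; simp
    _ ≤ ε := by linarith

theorem integral_inv_one_add_pos : 0 < ∫ x in Set.Ioo (0 : ℝ) 1, (1 + x)⁻¹ := by
  have h1 : IntegrableOn (fun _ : ℝ => (1 : ℝ)) (Set.Ioo 0 1) := by simp
  have h2 := integrableOn_mul_inv_one_add h1
  simp only [one_mul] at h2
  have : ∫ x in Set.Ioo (0 : ℝ) 1, (1 / 2 : ℝ) ≤ ∫ x in Set.Ioo (0 : ℝ) 1, (1 + x)⁻¹ := by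
    refine setIntegral_mono_on (by simp) h2 measurableSet_Ioo fun x hx => ?_
    rw [one_div]
    have := hx.1
    gcongr
    linarith [hx.2]
  simp at this
  linarith

/-- An integrable density of mean zero which is carried to a unimodular multiple of itself by the
Gauss map vanishes. -/
theorem ae_eq_zero_of_gaussMap_eigen {u : ℝ → ℝ} (hu : IntegrableOn u (Set.Ioo 0 1))
    (h0 : ∫ x in Set.Ioo (0 : ℝ) 1, u x = 0) {σ : ℝ} (hσ : |σ| = 1)
    (h : ∀ k : ℝ → ℝ, Measurable k → (∀ x, |k x| ≤ 1) →
      ∫ x in Set.Ioo (0 : ℝ) 1, u x * k (gaussMap x) =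
        σ * ∫ x in Set.Ioo (0 : ℝ) 1, u x * k x) :
    ∀ᵐ x ∂volume.restrict (Set.Ioo (0 : ℝ) 1), u x = 0 := by
  have hiter : ∀ (n : ℕ) (k : ℝ → ℝ), Measurable k → (∀ x, |k x| ≤ 1) →
      |∫ x in Set.Ioo (0 : ℝ) 1, u x * k (gaussMap^[n] x)| =
        |∫ x in Set.Ioo (0 : ℝ) 1, u x * k x| := by
    intro n
    induction n with
    | zero => simp
    | succ n ih =>
      intro k hk hb
      have := h _ (hk.comp (measurable_gaussMap.iterate n)) fun x => hb _
      simp only [Function.comp_apply] at this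
      simp only [Function.iterate_succ, Function.comp_apply]
      rw [this, abs_mul, hσ, one_mul, ih k hk hb]
  set K := ∫ x in Set.Ioo (0 : ℝ) 1, (1 + x)⁻¹ with hK
  have hKpos : 0 < K := integral_inv_one_add_pos
  have hzero : ∀ k : ℝ → ℝ, Measurable k → (∀ x, |k x| ≤ 1) →
      ∫ x in Set.Ioo (0 : ℝ) 1, u x * k x = 0 := by
    intro k hk hb
    rw [← abs_eq_zero]
    refine le_antisymm (le_of_forall_pos_le_add fun ε hε => ?_) (abs_nonneg _)
    set δ := ε / (2 + 2 / K) with hδ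
    have hδpos : 0 < δ := by positivity
    have hv : IntegrableOn (fun x => u x * (1 + x)) (Set.Ioo 0 1) := by
      refine hu.mul_bdd (c := 2) (by fun_prop) ?_
      filter_upwards [ae_restrict_mem measurableSet_Ioo] with x hx
      rw [Real.norm_of_nonneg (by linarith [hx.1])]
      linarith [hx.2]
    obtain ⟨p, hp⟩ := exists_polynomial_integral_sub_le hv hδpos
    obtain ⟨n, c, hc⟩ := (p.eventually_exists_correlation_le δ hδpos).exists
    have hpi : IntegrableOn (fun x => p.eval x) (Set.Ioo 0 1) :=
      (p.continuous.continuousOn.integrableOn_Icc).mono_set Set.Ioo_subset_Icc_self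
    have happrox : ∀ k : ℝ → ℝ, Measurable k → (∀ x, |k x| ≤ 1) →
        |(∫ x in Set.Ioo (0 : ℝ) 1, u x * k (gaussMap^[n] x)) -
          ∫ x in Set.Ioo (0 : ℝ) 1, p.eval x * (1 + x)⁻¹ * k (gaussMap^[n] x)| ≤ δ := by
      intro k hk hb
      rw [← integral_sub
        (integrableOn_mul_comp_of_abs_le_one hu hk (measurable_gaussMap.iterate n) hb)
        (integrableOn_mul_comp_of_abs_le_one (integrableOn_mul_inv_one_add hpi) hk
          (measurable_gaussMap.iterate n) hb), ← Real.norm_eq_abs]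
      refine (norm_integral_le_of_norm_le (hv.sub hpi).abs ?_).trans hp
      filter_upwards [ae_restrict_mem measurableSet_Ioo] with x hx
      have hx0 := hx.1
      have h1 : |(1 + x)⁻¹| ≤ 1 := by
        rw [abs_inv, abs_of_pos (by linarith)]
        exact inv_le_one_of_one_le₀ (by linarith)
      have h2 : u x * k (gaussMap^[n] x) - p.eval x * (1 + x)⁻¹ * k (gaussMap^[n] x) =
          (u x * (1 + x) - p.eval x) * (1 + x)⁻¹ * k (gaussMap^[n] x) := by
        field_simp
      rw [h2, Real.norm_eq_abs, abs_mul, abs_mul]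
      calc _ ≤ |u x * (1 + x) - p.eval x| * 1 * 1 := by
            gcongr
            exact hb _
        _ = |u x * (1 + x) - p.eval x| := by ring
    have hone := happrox (fun _ => 1) measurable_const (by simp)
    have hcone := hc (fun _ => 1) measurable_const (by simp)
    have hak := happrox k hk hb
    have hck := hc k hk hb
    simp only [mul_one, h0, ← hK] at hone hcone
    have hkK : |∫ x in Set.Ioo (0 : ℝ) 1, (1 + x)⁻¹ * k x| ≤ 1 := by
      simpa using abs_setIntegral_weighted_le (φ := fun _ => 1) (C := 1) (by simp) hb
    have hcK : |c| * K ≤ 2 * δ := by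
      rw [← abs_of_pos hKpos, ← abs_mul]
      rw [abs_le] at hone hcone ⊢
      constructor <;> linarith
    have hcb : |c| ≤ 2 / K * δ := by
      rw [div_mul_eq_mul_div, le_div_iff₀ hKpos]; exact hcK
    have hcI : |c * ∫ x in Set.Ioo (0 : ℝ) 1, (1 + x)⁻¹ * k x| ≤ 2 / K * δ := by
      rw [abs_mul]
      calc _ ≤ |c| * 1 := by gcongr
        _ ≤ _ := by rwa [mul_one]
    have hε' : (2 + 2 / K) * δ = ε := by rw [hδ]; field_simp
    rw [← hiter n k hk hb, zero_add]
    rw [abs_le] at hak hck hcI ⊢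
    constructor <;> linarith
  refine Integrable.ae_eq_zero_of_forall_setIntegral_eq_zero hu fun s hs _ => ?_
  have := hzero (s.indicator fun _ => 1) (measurable_const.indicator hs) fun x => by
    by_cases hx : x ∈ s <;> simp [hx]
  rw [← integral_indicator hs]
  refine Eq.trans (integral_congr_ae (Filter.Eventually.of_forall fun x => ?_)) this
  by_cases hx : x ∈ s <;> simp [hx]

theorem ae_restrict_Ioi_one_of_inv {p : ℝ → Prop}
    (h : ∀ᵐ x ∂volume.restrict (Set.Ioo (0 : ℝ) 1), p x⁻¹) :
    ∀ᵐ x ∂volume.restrict (Set.Ioi (1 : ℝ)), p x := by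
  rw [ae_restrict_iff' measurableSet_Ioo, ae_iff] at h
  rw [ae_restrict_iff' measurableSet_Ioi, ae_iff]
  set s : Set ℝ := {x | ¬(x ∈ Set.Ioo (0 : ℝ) 1 → p x⁻¹)}
  have hs : s ⊆ Set.Ioo 0 1 := fun x hx => (Classical.not_imp.1 hx).1
  refine measure_mono_null ?_ (addHaar_image_eq_zero_of_differentiableOn_of_addHaar_eq_zero
    (f := fun x : ℝ => x⁻¹) volume
    (fun x hx => (hasDerivAt_inv (hs hx).1.ne').differentiableAt.differentiableWithinAt) h)
  intro x hx
  obtain ⟨hx1, hx2⟩ := Classical.not_imp.1 hx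
  have hx1' : (1 : ℝ) < x := hx1
  refine ⟨x⁻¹, fun hp => hx2 ?_, inv_inv x⟩
  simpa using hp ⟨by positivity, inv_lt_one_of_one_lt₀ hx1'⟩

theorem setIntegral_Ioi_zero_eq_add {E : Type*} [NormedAddCommGroup E] [NormedSpace ℝ E]
    {g : ℝ → E} (hg : IntegrableOn g (Set.Ioi 0)) :
    ∫ x in Set.Ioi (0 : ℝ), g x =
      (∫ x in Set.Ioo (0 : ℝ) 1, g x) + ∫ x in Set.Ioi (1 : ℝ), g x := by
  rw [← Set.Ioc_union_Ioi_eq_Ioi (zero_le_one (α := ℝ)),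
    setIntegral_union (Set.Ioc_disjoint_Ioi le_rfl) measurableSet_Ioi
      (hg.mono_set Set.Ioc_subset_Ioi_self) (hg.mono_set (Set.Ioi_subset_Ioi zero_le_one)),
    integral_Ioc_eq_integral_Ioo]

theorem ae_restrict_Ioi_zero {p : ℝ → Prop}
    (h0 : ∀ᵐ x ∂volume.restrict (Set.Ioo (0 : ℝ) 1), p x)
    (h1 : ∀ᵐ x ∂volume.restrict (Set.Ioi (1 : ℝ)), p x) :
    ∀ᵐ x ∂volume.restrict (Set.Ioi (0 : ℝ)), p x := by
  rw [← Set.Ioc_union_Ioi_eq_Ioi (zero_le_one (α := ℝ)), ae_restrict_union_iff]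
  rw [restrict_Ioo_eq_restrict_Ioc] at h0
  exact ⟨h0, h1⟩

/-- The density spanning the annihilator of the critical lattice-cross. -/
noncomputable def crossKernel (x : ℝ) : ℝ := if x < 1 then (1 + x)⁻¹ else -(x * (1 + x))⁻¹

/-- Real densities annihilating all bounded functions of `{x}` and of `{1/x}` are multiples of
`crossKernel`. -/
theorem exists_ae_eq_mul_crossKernel {f : ℝ → ℝ} (hf : IntegrableOn f (Set.Ioi 0))
    (hA : ∀ k : ℝ → ℝ, Measurable k → (∀ x, |k x| ≤ 1) →
      ∫ x in Set.Ioi (0 : ℝ), k (Int.fract x) * f x = 0)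
    (hB : ∀ k : ℝ → ℝ, Measurable k → (∀ x, |k x| ≤ 1) →
      ∫ x in Set.Ioi (0 : ℝ), k (Int.fract x⁻¹) * f x = 0) :
    ∃ c : ℝ, ∀ᵐ x ∂volume.restrict (Set.Ioi (0 : ℝ)), f x = c * crossKernel x := by
  set g : ℝ → ℝ := fun x => (x ^ 2)⁻¹ * f x⁻¹ with hgdef
  have hf0 : IntegrableOn f (Set.Ioo 0 1) := hf.mono_set Set.Ioo_subset_Ioi_self
  have hg : IntegrableOn g (Set.Ioo 0 1) := by
    simpa only [smul_eq_mul] using (integrableOn_Ioi_one_iff_inv f).1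
      (hf.mono_set (Set.Ioi_subset_Ioi zero_le_one))
  have hfract : ∀ x ∈ Set.Ioo (0 : ℝ) 1, Int.fract x = x := fun x hx =>
    Int.fract_eq_self.2 ⟨hx.1.le, hx.2⟩
  have hA' : ∀ k : ℝ → ℝ, Measurable k → (∀ x, |k x| ≤ 1) →
      (∫ x in Set.Ioo (0 : ℝ) 1, f x * k x) + ∫ x in Set.Ioo (0 : ℝ) 1, g x * k (gaussMap x)
        = 0 := by
    intro k hk hb
    have h := hA k hk hb
    have hi := integrableOn_mul_comp_of_abs_le_one hf hk measurable_fract hb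
    simp only [mul_comm (f _)] at hi
    rw [setIntegral_Ioi_zero_eq_add hi, setIntegral_Ioi_one_eq_inv] at h
    refine Eq.trans (congrArg₂ (· + ·) ?_ ?_) h
    · refine setIntegral_congr_fun measurableSet_Ioo fun x hx => ?_
      simp only [hfract x hx, mul_comm]
    · refine setIntegral_congr_fun measurableSet_Ioo fun x hx => ?_
      simp only [hgdef, gaussMap, smul_eq_mul]
      ring
  have hB' : ∀ k : ℝ → ℝ, Measurable k → (∀ x, |k x| ≤ 1) →
      (∫ x in Set.Ioo (0 : ℝ) 1, f x * k (gaussMap x)) + ∫ x in Set.Ioo (0 : ℝ) 1, g x * k x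
        = 0 := by
    intro k hk hb
    have h := hB k hk hb
    have hi := integrableOn_mul_comp_of_abs_le_one hf hk measurable_gaussMap hb
    simp only [mul_comm (f _), gaussMap] at hi
    rw [setIntegral_Ioi_zero_eq_add hi, setIntegral_Ioi_one_eq_inv] at h
    refine Eq.trans (congrArg₂ (· + ·) ?_ ?_) h
    · refine setIntegral_congr_fun measurableSet_Ioo fun x hx => ?_
      simp only [gaussMap, mul_comm]
    · refine setIntegral_congr_fun measurableSet_Ioo fun x hx => ?_
      simp only [hgdef, inv_inv, hfract x hx, smul_eq_mul]
      ring
  have hintegrable : ∀ {w k : ℝ → ℝ}, IntegrableOn w (Set.Ioo 0 1) → Measurable k → (∀ x, |k x| ≤ 1) →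
      IntegrableOn (fun x => w x * k x) (Set.Ioo 0 1) ∧
      IntegrableOn (fun x => w x * k (gaussMap x)) (Set.Ioo 0 1) := fun hw hk hb =>
    ⟨integrableOn_mul_comp_of_abs_le_one hw hk measurable_id hb,
      integrableOn_mul_comp_of_abs_le_one hw hk measurable_gaussMap hb⟩
  have hsum : ∀ᵐ x ∂volume.restrict (Set.Ioo (0 : ℝ) 1), f x + g x = 0 := by
    have hk : ∀ k : ℝ → ℝ, Measurable k → (∀ x, |k x| ≤ 1) →
        ∫ x in Set.Ioo (0 : ℝ) 1, (f x + g x) * k (gaussMap x) =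
          -1 * ∫ x in Set.Ioo (0 : ℝ) 1, (f x + g x) * k x := by
      intro k hk hb
      simp only [add_mul]
      rw [integral_add (hintegrable hf0 hk hb).2 (hintegrable hg hk hb).2,
        integral_add (hintegrable hf0 hk hb).1 (hintegrable hg hk hb).1]
      linarith [hA' k hk hb, hB' k hk hb]
    refine ae_eq_zero_of_gaussMap_eigen (u := fun x => f x + g x) (hf0.add hg) ?_ (by simp) hk
    have := hk (fun _ => 1) measurable_const (by simp)
    simp only [mul_one] at this
    linarith
  set K := ∫ x in Set.Ioo (0 : ℝ) 1, (1 + x)⁻¹ with hK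
  have hKpos : 0 < K := integral_inv_one_add_pos
  set c := (∫ x in Set.Ioo (0 : ℝ) 1, (f x - g x)) / K with hc
  have hinv : IntegrableOn (fun x : ℝ => c * (1 + x)⁻¹) (Set.Ioo 0 1) :=
    integrableOn_mul_inv_one_add (φ := fun _ => c) (by simp)
  have hdiff : ∀ᵐ x ∂volume.restrict (Set.Ioo (0 : ℝ) 1), f x - g x - c * (1 + x)⁻¹ = 0 := by
    refine ae_eq_zero_of_gaussMap_eigen (u := fun x => f x - g x - c * (1 + x)⁻¹)
      ((hf0.sub hg).sub hinv) ?_ (σ := 1) (by simp) ?_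
    · rw [integral_sub (f := fun x => f x - g x) (hf0.sub hg) hinv, integral_const_mul, ← hK, hc]
      field_simp
      ring
    · intro k hk hb
      have h1 := integral_mul_comp_gaussMap (φ := fun _ => c) (by simp) hk hb
      have h2 : ∀ x ∈ Set.Ioo (0 : ℝ) 1, gaussOp (fun _ => c) x * (1 + x)⁻¹ * k x =
          c * (1 + x)⁻¹ * k x := by
        intro x hx
        simp only [gaussOp]
        rw [tsum_mul_right, (hasSum_gaussWeight hx.1.le).tsum_eq, one_mul]
      rw [setIntegral_congr_fun measurableSet_Ioo h2] at h1
      simp only [sub_mul]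
      rw [integral_sub (f := fun x => f x * k (gaussMap x) - g x * k (gaussMap x))
          ((hintegrable hf0 hk hb).2.sub (hintegrable hg hk hb).2) (hintegrable hinv hk hb).2,
        integral_sub (hintegrable hf0 hk hb).2 (hintegrable hg hk hb).2,
        integral_sub (f := fun x => f x * k x - g x * k x)
          ((hintegrable hf0 hk hb).1.sub (hintegrable hg hk hb).1) (hintegrable hinv hk hb).1,
        integral_sub (hintegrable hf0 hk hb).1 (hintegrable hg hk hb).1]
      linarith [hA' k hk hb, hB' k hk hb]
  refine ⟨c / 2, ae_restrict_Ioi_zero ?_ (ae_restrict_Ioi_one_of_inv ?_)⟩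
  · filter_upwards [hsum, hdiff, ae_restrict_mem measurableSet_Ioo] with x h1 h2 hx
    rw [crossKernel, if_pos hx.2]
    linarith
  · filter_upwards [hsum, hdiff, ae_restrict_mem measurableSet_Ioo] with x h1 h2 hx
    have hx0 := hx.1
    have h3 : g x = -(c / 2) * (1 + x)⁻¹ := by linarith
    have h4 : f x⁻¹ = x ^ 2 * g x := by
      simp only [hgdef]; field_simp
    rw [crossKernel, if_neg (not_lt.2 ((one_lt_inv₀ hx0).2 hx.2).le), h4, h3]
    field_simp
    ring

theorem integral_exp_mul_re_im_eq_zero {X : Type*} [MeasurableSpace X] {μ : Measure X}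
    {τ : X → ℝ} (hτ : Measurable τ) {f : X → ℂ} (hf : Integrable f μ)
    (h : ∀ m : ℤ, ∫ x, Complex.exp (2 * π * Complex.I * m * τ x) * f x ∂μ = 0) (m : ℤ) :
    ∫ x, Complex.exp (2 * π * Complex.I * m * τ x) * (f x).re ∂μ = 0 ∧
    ∫ x, Complex.exp (2 * π * Complex.I * m * τ x) * (f x).im ∂μ = 0 := by
  have hconj : ∫ x, Complex.exp (2 * π * Complex.I * m * τ x) * (starRingEnd ℂ) (f x) ∂μ = 0 := by
    have := congrArg (starRingEnd ℂ) (h (-m))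
    rw [← integral_conj, map_zero] at this
    rw [← this]
    refine integral_congr_ae (Filter.Eventually.of_forall fun x => ?_)
    simp [← Complex.exp_conj, Complex.conj_ofNat]
  have hintegrable : ∀ {f : X → ℂ}, Integrable f μ →
      Integrable (fun x => Complex.exp (2 * π * Complex.I * m * τ x) * f x) μ := fun hf =>
    hf.bdd_mul (c := 1) (by fun_prop) (Filter.Eventually.of_forall fun x => by
      rw [show 2 * (π : ℂ) * Complex.I * m * τ x = ((2 * π * m * τ x : ℝ) : ℂ) * Complex.I by
        push_cast; ring, Complex.norm_exp_ofReal_mul_I])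
  have hfc : Integrable (fun x => (starRingEnd ℂ) (f x)) μ :=
    (LinearIsometryEquiv.integrable_comp_iff Complex.conjLIE).2 hf
  constructor
  · have h1 := integral_add (hintegrable hf) (hintegrable hfc)
    rw [h m, hconj, add_zero] at h1
    have h2 : ∀ x, Complex.exp (2 * π * Complex.I * m * τ x) * f x +
        Complex.exp (2 * π * Complex.I * m * τ x) * (starRingEnd ℂ) (f x) =
        2 * (Complex.exp (2 * π * Complex.I * m * τ x) * (f x).re) := fun x => by
      rw [← mul_add, Complex.add_conj]; push_cast; ring
    simp only [h2, integral_const_mul] at h1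
    simpa using h1
  · have h1 := integral_sub (hintegrable hf) (hintegrable hfc)
    rw [h m, hconj, sub_zero] at h1
    have h2 : ∀ x, Complex.exp (2 * π * Complex.I * m * τ x) * f x -
        Complex.exp (2 * π * Complex.I * m * τ x) * (starRingEnd ℂ) (f x) =
        (2 * Complex.I) * (Complex.exp (2 * π * Complex.I * m * τ x) * (f x).im) := fun x => by
      rw [← mul_sub, Complex.sub_conj]; push_cast; ring
    simp only [h2, integral_const_mul] at h1
    simpa using h1

/-- Complex densities annihilating the lattice-cross are multiples of `crossKernel`. -/
theorem exists_ae_eq_complex_mul_crossKernel {f : ℝ → ℂ} (hf : IntegrableOn f (Set.Ioi 0))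
    (h1 : ∀ m : ℤ, ∫ x in Set.Ioi (0 : ℝ), Complex.exp (2 * π * Complex.I * m * x) * f x = 0)
    (h2 : ∀ m : ℤ, ∫ x in Set.Ioi (0 : ℝ),
      Complex.exp (2 * π * Complex.I * m * (x⁻¹ : ℝ)) * f x = 0) :
    ∃ c : ℂ, ∀ᵐ x ∂volume.restrict (Set.Ioi (0 : ℝ)), f x = c * crossKernel x := by
  have h1' := integral_exp_mul_re_im_eq_zero measurable_id hf h1
  have h2' := integral_exp_mul_re_im_eq_zero measurable_inv hf h2
  obtain ⟨a, ha⟩ := exists_ae_eq_mul_crossKernel hf.re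
    (fun k hk hb => integral_fract_eq_zero measurable_id hf.re (fun m => (h1' m).1) hk hb)
    (fun k hk hb => integral_fract_eq_zero measurable_inv hf.re (fun m => (h2' m).1) hk hb)
  obtain ⟨b, hb⟩ := exists_ae_eq_mul_crossKernel hf.im
    (fun k hk hb => integral_fract_eq_zero measurable_id hf.im (fun m => (h1' m).2) hk hb)
    (fun k hk hb => integral_fract_eq_zero measurable_inv hf.im (fun m => (h2' m).2) hk hb)
  refine ⟨⟨a, b⟩, ?_⟩
  filter_upwards [ha, hb] with x hax hbx
  refine Complex.ext ?_ ?_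
  · simpa using hax
  · simpa using hbx

/-- Fubini for the Fourier transform of a superposition of nonnegative functions. -/
theorem integral_exp_mul_superposition (ω : ℝ) {s : Set ℝ} (hs : MeasurableSet s)
    {κ : ℝ → ℝ → ℝ} {K : ℝ → ℝ} (hκ : Continuous fun z : ℝ × ℝ => κ z.1 z.2)
    (hpos : ∀ x ∈ s, ∀ u ∈ Set.Ioi (0 : ℝ), 0 ≤ κ x u)
    (hintegrable : ∀ x ∈ s, IntegrableOn (κ x) (Set.Ioi 0))
    (heq : ∀ x ∈ s, ∫ u in Set.Ioi (0 : ℝ), κ x u = K x) (hK : IntegrableOn K s) :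
    IntegrableOn (fun u => ∫ x in s, Complex.exp (Complex.I * ω * x) * κ x u) (Set.Ioi 0) ∧
    ∫ x in s, Complex.exp (Complex.I * ω * x) * K x =
      ∫ u in Set.Ioi (0 : ℝ), ∫ x in s, Complex.exp (Complex.I * ω * x) * κ x u := by
  have hnorm : ∀ x : ℝ, ‖Complex.exp (Complex.I * ω * x)‖ = 1 := fun x => by
    rw [show Complex.I * ω * x = ((ω * x : ℝ) : ℂ) * Complex.I by push_cast; ring,
      Complex.norm_exp_ofReal_mul_I]
  have hprod : Integrable (Function.uncurry fun x u : ℝ =>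
      Complex.exp (Complex.I * ω * x) * (κ x u : ℂ))
      ((volume.restrict s).prod (volume.restrict (Set.Ioi (0 : ℝ)))) := by
    rw [integrable_prod_iff]
    · constructor
      · filter_upwards [ae_restrict_mem hs] with x hx
        have h : Integrable (fun u => (κ x u : ℂ)) (volume.restrict (Set.Ioi 0)) :=
          (hintegrable x hx).ofReal
        exact h.const_mul (Complex.exp (Complex.I * ω * x))
      · refine hK.congr ?_
        filter_upwards [ae_restrict_mem hs] with x hx
        rw [← heq x hx]
        refine setIntegral_congr_fun measurableSet_Ioi fun u hu => ?_
        simp only [Function.uncurry_apply_pair, norm_mul, hnorm, one_mul, Complex.norm_real]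
        rw [Real.norm_of_nonneg (hpos x hx u hu)]
    · refine Continuous.aestronglyMeasurable ?_
      simp only [Function.uncurry_def]
      fun_prop
  refine ⟨hprod.integral_prod_right, ?_⟩
  rw [← integral_integral_swap hprod]
  refine setIntegral_congr_fun hs fun x hx => ?_
  simp only [integral_const_mul]
  rw [← heq x hx, integral_complex_ofReal]

theorem I_mul_sub_ofReal_ne_zero {ω u : ℝ} (hu : u ∈ Set.Ioi (0 : ℝ)) :
    Complex.I * ω - u ≠ 0 := fun h => by
  have := congrArg Complex.re h
  simp at this
  exact (Set.mem_Ioi.1 hu).ne' this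

theorem integrableOn_Ioi_exp_neg_mul {a : ℝ} (ha : 0 < a) :
    IntegrableOn (fun u : ℝ => rexp (-a * u)) (Set.Ioi 0) ∧
      ∫ u in Set.Ioi (0 : ℝ), rexp (-a * u) = a⁻¹ := by
  refine ⟨integrableOn_exp_mul_Ioi (neg_lt_zero.2 ha) 0, ?_⟩
  rw [integral_exp_mul_Ioi (neg_lt_zero.2 ha) 0]
  simp

theorem integrableOn_Ioi_inv_mul_one_add :
    IntegrableOn (fun x : ℝ => (x * (1 + x))⁻¹) (Set.Ioi 1) := by
  rw [integrableOn_Ioi_one_iff_inv]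
  have h := integrableOn_mul_inv_one_add (φ := fun _ => 1) (by simp)
  refine (integrableOn_congr_fun (fun x hx => ?_) measurableSet_Ioo).1 h
  have := hx.1
  simp only [smul_eq_mul]
  field_simp
  ring

/-- The Fourier transform of `crossKernel` as a Laplace-type integral. -/
theorem integral_exp_mul_crossKernel (ω : ℝ) :
    ∫ x in Set.Ioi (0 : ℝ), Complex.exp (Complex.I * ω * x) * crossKernel x =
      (Complex.exp (Complex.I * ω) - 1) *
        ∫ u in Set.Ioi (0 : ℝ), rexp (-u) * (Complex.I * ω - u)⁻¹ := by
  have hK0 : IntegrableOn (fun x : ℝ => (1 + x)⁻¹) (Set.Ioo 0 1) := by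
    simpa using integrableOn_mul_inv_one_add (φ := fun _ => 1) (by simp)
  obtain ⟨hAi, hA⟩ := integral_exp_mul_superposition ω measurableSet_Ioo
    (κ := fun x u => rexp (-(1 + x) * u)) (K := fun x => (1 + x)⁻¹) (by fun_prop)
    (fun _ _ _ _ => (Real.exp_pos _).le)
    (fun x hx => (integrableOn_Ioi_exp_neg_mul (by linarith [hx.1])).1)
    (fun x hx => (integrableOn_Ioi_exp_neg_mul (by linarith [hx.1])).2) hK0
  obtain ⟨hBi, hB⟩ := integral_exp_mul_superposition ω (measurableSet_Ioi (a := (1 : ℝ)))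
    (κ := fun x u => rexp (-x * u) - rexp (-(1 + x) * u)) (K := fun x => (x * (1 + x))⁻¹)
    (by fun_prop)
    (fun x hx u hu => by
      have hu' : (0 : ℝ) < u := hu
      exact sub_nonneg.2 (Real.exp_le_exp.2 (by linarith)))
    (fun x hx => by
      have hx' : (1 : ℝ) < x := hx
      exact (integrableOn_Ioi_exp_neg_mul (by linarith)).1.sub
        (integrableOn_Ioi_exp_neg_mul (by linarith)).1)
    (fun x hx => by
      have hx' : (1 : ℝ) < x := hx
      have h1 := integrableOn_Ioi_exp_neg_mul (a := x) (by linarith)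
      have h2 := integrableOn_Ioi_exp_neg_mul (a := 1 + x) (by linarith)
      rw [integral_sub h1.1 h2.1, h1.2, h2.2]
      field_simp
      ring) integrableOn_Ioi_inv_mul_one_add
  have hnorm : ∀ x : ℝ, ‖Complex.exp (Complex.I * ω * x)‖ ≤ 1 := fun x => by
    rw [show Complex.I * ω * x = ((ω * x : ℝ) : ℂ) * Complex.I by push_cast; ring,
      Complex.norm_exp_ofReal_mul_I]
  have hcross : IntegrableOn crossKernel (Set.Ioi 0) := by
    rw [← Set.Ioc_union_Ioi_eq_Ioi (zero_le_one (α := ℝ)), integrableOn_union,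
      integrableOn_Ioc_iff_integrableOn_Ioo]
    constructor
    · refine (integrableOn_congr_fun (fun x hx => ?_) measurableSet_Ioo).1 hK0
      rw [crossKernel, if_pos hx.2]
    · refine (integrableOn_congr_fun (fun x hx => ?_) measurableSet_Ioi).1
        integrableOn_Ioi_inv_mul_one_add.neg
      rw [crossKernel, if_neg (not_lt.2 (le_of_lt hx))]
      rfl
  have hi : IntegrableOn (fun x : ℝ => Complex.exp (Complex.I * ω * x) * (crossKernel x : ℂ))
      (Set.Ioi 0) :=
    hcross.ofReal.bdd_mul (c := 1) (by fun_prop) (Filter.Eventually.of_forall hnorm)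
  rw [setIntegral_Ioi_zero_eq_add hi]
  have h0 : ∫ x in Set.Ioo (0 : ℝ) 1, Complex.exp (Complex.I * ω * x) * (crossKernel x : ℂ) =
      ∫ x in Set.Ioo (0 : ℝ) 1, Complex.exp (Complex.I * ω * x) * ((1 + x)⁻¹ : ℝ) :=
    setIntegral_congr_fun measurableSet_Ioo fun x hx => by
      simp only [crossKernel, if_pos hx.2]
  have h1 : ∫ x in Set.Ioi (1 : ℝ), Complex.exp (Complex.I * ω * x) * (crossKernel x : ℂ) =
      -∫ x in Set.Ioi (1 : ℝ), Complex.exp (Complex.I * ω * x) * ((x * (1 + x))⁻¹ : ℝ) := by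
    rw [← integral_neg]
    refine setIntegral_congr_fun measurableSet_Ioi fun x hx => ?_
    simp only [crossKernel, if_neg (not_lt.2 (Set.mem_Ioi.1 hx).le), Complex.ofReal_neg, mul_neg]
  rw [h0, h1, hA, hB, ← sub_eq_add_neg, ← integral_sub hAi hBi, ← integral_const_mul]
  refine setIntegral_congr_fun measurableSet_Ioi fun u hu => ?_
  have hne := I_mul_sub_ofReal_ne_zero (ω := ω) hu
  have hre : (Complex.I * ω - u).re < 0 := by simpa using hu
  have hAu : ∫ x in Set.Ioo (0 : ℝ) 1,
      Complex.exp (Complex.I * ω * x) * (rexp (-(1 + x) * u) : ℂ) =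
      Complex.exp (-u) * ((Complex.exp (Complex.I * ω - u) - 1) / (Complex.I * ω - u)) := by
    have h := integral_exp_mul_complex (a := 0) (b := 1) hne
    rw [intervalIntegral.integral_of_le zero_le_one, integral_Ioc_eq_integral_Ioo] at h
    simp only [Complex.ofReal_one, mul_one, Complex.ofReal_zero, mul_zero, Complex.exp_zero] at h
    rw [← h, ← integral_const_mul]
    congr 1
    funext x
    push_cast
    rw [← Complex.exp_add, ← Complex.exp_add]
    congr 1
    ring
  have hBu : ∫ x in Set.Ioi (1 : ℝ), Complex.exp (Complex.I * ω * x) *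
      ((rexp (-x * u) - rexp (-(1 + x) * u) : ℝ) : ℂ) =
      (1 - Complex.exp (-u)) * (-Complex.exp (Complex.I * ω - u) / (Complex.I * ω - u)) := by
    have h := integral_exp_mul_complex_Ioi hre 1
    simp only [Complex.ofReal_one, mul_one] at h
    rw [← h, ← integral_const_mul]
    congr 1
    funext x
    push_cast
    rw [mul_sub, sub_mul, one_mul, ← Complex.exp_add, ← Complex.exp_add, ← Complex.exp_add]
    congr 2 <;> ring
  simp only [hAu, hBu]
  rw [Complex.exp_sub, Complex.exp_neg, Complex.ofReal_exp, Complex.ofReal_neg, Complex.exp_neg]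
  have := Complex.exp_ne_zero (u : ℂ)
  field_simp
  ring

/-- The Nielsen spiral avoids the origin. -/
theorem integral_exp_neg_mul_inv_ne_zero {ω : ℝ} (hω : ω ≠ 0) :
    ∫ u in Set.Ioi (0 : ℝ), (rexp (-u) : ℂ) * (Complex.I * ω - u)⁻¹ ≠ 0 := by
  have hE : IntegrableOn (fun u : ℝ => rexp (-u)) (Set.Ioi 0) := by
    simpa using (integrableOn_Ioi_exp_neg_mul one_pos).1
  have hi : IntegrableOn (fun u : ℝ => (rexp (-u) : ℂ) * (Complex.I * ω - u)⁻¹) (Set.Ioi 0) := by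
    refine hE.ofReal.mul_bdd (c := |ω|⁻¹) (by fun_prop) ?_
    refine Filter.Eventually.of_forall fun u => ?_
    rw [norm_inv]
    have h1 : |ω| ≤ ‖Complex.I * ω - u‖ := by
      simpa using Complex.abs_im_le_norm (Complex.I * ω - u)
    have h2 := abs_pos.2 hω
    gcongr
  intro h
  have him := congrArg Complex.im h
  have him' := integral_im (𝕜 := ℂ) hi
  simp only [RCLike.im_to_complex] at him'
  rw [← him', Complex.zero_im] at him
  have hpt : ∀ u : ℝ, ((rexp (-u) : ℂ) * (Complex.I * ω - u)⁻¹).im =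
      -ω * (rexp (-u) * (u ^ 2 + ω ^ 2)⁻¹) := fun u => by
    rw [Complex.im_ofReal_mul, Complex.inv_im, Complex.normSq_apply]
    simp
    ring
  simp only [hpt, integral_const_mul] at him
  have hpos : 0 < ∫ u in Set.Ioi (0 : ℝ), rexp (-u) * (u ^ 2 + ω ^ 2)⁻¹ := by
    have hp : ∀ u : ℝ, 0 < rexp (-u) * (u ^ 2 + ω ^ 2)⁻¹ := fun u => by positivity
    rw [setIntegral_pos_iff_support_of_nonneg_ae
      (Filter.Eventually.of_forall fun u => (hp u).le)]
    · have : Function.support (fun u : ℝ => rexp (-u) * (u ^ 2 + ω ^ 2)⁻¹) = Set.univ :=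
        Function.support_eq_univ fun u => (hp u).ne'
      rw [this]
      simp
    · have := (hi.im).const_mul (-ω)⁻¹
      simp only [RCLike.im_to_complex, hpt] at this
      refine this.congr (Filter.Eventually.of_forall fun u => ?_)
      field_simp
  exact mul_ne_zero (neg_ne_zero.2 hω) hpos.ne' him

/-- Critical regime `αβ = 4` for one branch of the hyperbola: adding one extra
frequency point `s ∉ αℤ` on the first axis restores uniqueness. -/
theorem stmt_3 (α β : ℝ) (hα : 0 < α) (hβ : 0 < β) (hcrit : α * β = 4)
    (s : ℝ) (hs : ∀ m : ℤ, s ≠ α * m)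
    (f : ℝ → ℂ) (hf : IntegrableOn f (Set.Ioi 0))
    (h1 : ∀ m : ℤ, ∫ t in Set.Ioi (0:ℝ), Complex.exp (Complex.I * π * α * m * t) * f t = 0)
    (h2 : ∀ n : ℤ, ∫ t in Set.Ioi (0:ℝ), Complex.exp (-(Complex.I * π * β * n) / t) * f t = 0)
    (h3 : ∫ t in Set.Ioi (0:ℝ), Complex.exp (Complex.I * π * s * t) * f t = 0) :
    ∀ᵐ t ∂(volume.restrict (Set.Ioi (0:ℝ))), f t = 0 := by
  have hb : 0 < 2 / α := by positivity
  have hαC : (α : ℂ) ≠ 0 := by exact_mod_cast hα.ne'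
  have hscale : ∀ e : ℝ → ℂ, ∫ t in Set.Ioi (0 : ℝ), e t * f t = 0 →
      ∫ x in Set.Ioi (0 : ℝ), e (2 / α * x) * f (2 / α * x) = 0 := fun e he => by
    rw [integral_comp_mul_left_Ioi (fun t => e t * f t) 0 hb, mul_zero, he, smul_zero]
  have hg : IntegrableOn (fun x => f (2 / α * x)) (Set.Ioi 0) := by
    rw [integrableOn_Ioi_comp_mul_left_iff f 0 hb, mul_zero]
    exact hf
  obtain ⟨c, hc⟩ := exists_ae_eq_complex_mul_crossKernel hg
    (fun m => by
      rw [← hscale _ (h1 m)]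
      refine setIntegral_congr_fun measurableSet_Ioi fun x hx => ?_
      congr 2
      push_cast
      field_simp)
    (fun m => by
      rw [← hscale _ (h2 (-m))]
      refine setIntegral_congr_fun measurableSet_Ioi fun x hx => ?_
      have hx' : (x : ℂ) ≠ 0 := by exact_mod_cast (Set.mem_Ioi.1 hx).ne'
      have hβC : (β : ℂ) = 4 / α := by
        rw [eq_div_iff hαC, mul_comm]; exact_mod_cast hcrit
      congr 2
      push_cast
      rw [hβC]
      field_simp
      ring)
  set ω : ℝ := 2 * π * (s / α) with hω
  have hker : c * ∫ x in Set.Ioi (0 : ℝ), Complex.exp (Complex.I * ω * x) * crossKernel x = 0 := by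
    rw [← hscale _ h3, ← integral_const_mul]
    refine integral_congr_ae ?_
    filter_upwards [hc] with x hx
    rw [hx, hω, mul_left_comm]
    congr 2
    push_cast
    field_simp
  have hexp : Complex.exp (Complex.I * ω) - 1 ≠ 0 := by
    rw [sub_ne_zero]
    intro h
    obtain ⟨n, hn⟩ := Complex.exp_eq_one_iff.1 h
    have hre : ω = n * (2 * π) := by simpa using congrArg Complex.im hn
    refine hs n ?_
    rw [hω, mul_comm (n : ℝ)] at hre
    have := mul_left_cancel₀ (by positivity : 2 * π ≠ 0) hre
    rw [div_eq_iff hα.ne'] at this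
    rw [this, mul_comm]
  have hω0 : ω ≠ 0 := fun h => hexp (by simp [h])
  have hc0 : c = 0 := by
    rw [integral_exp_mul_crossKernel] at hker
    exact (mul_eq_zero.1 hker).resolve_right
      (mul_ne_zero hexp (integral_exp_neg_mul_inv_ne_zero hω0))
  have hzero : ∀ᵐ x ∂volume.restrict (Set.Ioi (0 : ℝ)), f (2 / α * x) = 0 := by
    filter_upwards [hc] with x hx
    rw [hx, hc0, zero_mul]
  have hnorm : ∫ t in Set.Ioi (0 : ℝ), ‖f t‖ = 0 := by
    have h := integral_comp_mul_left_Ioi (fun t => ‖f t‖) 0 hb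
    rw [mul_zero, integral_eq_zero_of_ae (by filter_upwards [hzero] with x hx; simp [hx])] at h
    exact (smul_eq_zero.1 h.symm).resolve_left (by positivity)
  rw [integral_eq_zero_iff_of_nonneg (fun _ => norm_nonneg _) hf.norm] at hnorm
  filter_upwards [hnorm] with t ht
  simpa using ht
end

section
/- Fix positive real numbers α and β with αβ < 4. If f ∈ L¹(ℝ, ℂ) satisfies ∫_ℝ e^{iπαmt} f(t) dt = 0 for all m ∈ ℤ and ∫_ℝ e^{−iπβn/t} f(t) dt = 0 for all n ∈ ℤ, and f(t) = 0 for almost every t < 0, then f = 0 almost everywhere on ℝ. -/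
open MeasureTheory Real
open scoped ENNReal

/-- The transfer operator of the map `x ↦ {γ / x}` restricted to `(0, γ)`. -/
noncomputable def gaussTransfer (γ : ℝ) (u : ℝ → ℝ≥0∞) (x : ℝ) : ℝ≥0∞ :=
  ∑' k : ℕ, ENNReal.ofReal (γ / (x + (k + 1)) ^ 2) * u (γ / (x + (k + 1)))

/-- The Gauss density `1 / (1 + x)`. -/
noncomputable def gaussDensity (x : ℝ) : ℝ≥0∞ := ENNReal.ofReal (1 / (1 + x))

lemma measurable_gaussDensity : Measurable gaussDensity := by
  unfold gaussDensity; fun_prop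

lemma measurable_gaussTransfer (γ : ℝ) {u : ℝ → ℝ≥0∞} (hu : Measurable u) :
    Measurable (gaussTransfer γ u) := by
  unfold gaussTransfer; fun_prop

lemma div_add_mem_Ioo {γ x : ℝ} (h0 : 0 < γ) (h1 : γ < 1) (hx : 0 < x) (k : ℕ) :
    γ / (x + (k + 1)) ∈ Set.Ioo (0 : ℝ) 1 := by
  have : (0 : ℝ) ≤ k := k.cast_nonneg
  refine ⟨by positivity, ?_⟩
  rw [div_lt_one (by positivity)]
  linarith

lemma gaussTransfer_mono {γ : ℝ} (h0 : 0 < γ) (h1 : γ < 1) {u v : ℝ → ℝ≥0∞}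
    (h : ∀ x ∈ Set.Ioo (0 : ℝ) 1, u x ≤ v x) {x : ℝ} (hx : x ∈ Set.Ioo (0 : ℝ) 1) :
    gaussTransfer γ u x ≤ gaussTransfer γ v x :=
  ENNReal.tsum_le_tsum fun k ↦ mul_le_mul_right (h _ (div_add_mem_Ioo h0 h1 hx.1 k)) _

lemma gaussTransfer_add (γ : ℝ) (u v : ℝ → ℝ≥0∞) :
    gaussTransfer γ (u + v) = gaussTransfer γ u + gaussTransfer γ v := by
  ext x
  simp [gaussTransfer, mul_add, ENNReal.tsum_add]

lemma gaussTransfer_const_mul (γ : ℝ) (c : ℝ≥0∞) (u : ℝ → ℝ≥0∞) :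
    gaussTransfer γ (fun x ↦ c * u x) = fun x ↦ c * gaussTransfer γ u x := by
  ext x
  simp only [gaussTransfer, ← ENNReal.tsum_mul_left]
  exact tsum_congr fun k ↦ by ring

lemma gaussTransfer_gaussDensity_le {γ : ℝ} (h0 : 0 < γ) (h1 : γ < 1) {x : ℝ}
    (hx : x ∈ Set.Ioo (0 : ℝ) 1) :
    gaussTransfer γ gaussDensity x ≤ ENNReal.ofReal (2 * γ / (1 + γ)) * gaussDensity x := by
  have hx0 := hx.1
  have hterm (k : ℕ) : γ / (x + (k + 1)) ^ 2 * (1 / (1 + γ / (x + (k + 1)))) ≤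
      2 * γ / (1 + γ) * (1 / (1 + x + k) - 1 / (1 + x + (k + 1 : ℕ))) := by
    have hk : (0 : ℝ) ≤ k := k.cast_nonneg
    have hy : 1 < x + (k + 1) := by linarith
    push_cast
    rw [show 1 + x + (k : ℝ) = x + (k + 1) by ring,
      show 1 + x + ((k : ℝ) + 1) = x + (k + 1) + 1 by ring]
    generalize x + ((k : ℝ) + 1) = y at hy
    have hy0 : 0 < y := by linarith
    have e1 : γ / y ^ 2 * (1 / (1 + γ / y)) = γ / (y * (y + γ)) := by field_simp
    have e2 : 2 * γ / (1 + γ) * (1 / y - 1 / (y + 1)) =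
        2 * γ / ((1 + γ) * (y * (y + 1))) := by field_simp; ring
    rw [e1, e2, div_le_div_iff₀ (by positivity) (by positivity)]
    have : (1 + γ) * (y + 1) ≤ 2 * (y + γ) := by nlinarith
    have h3 : 0 ≤ γ * y := by positivity
    nlinarith [mul_le_mul_of_nonneg_left this h3]
  unfold gaussTransfer gaussDensity
  refine ENNReal.tsum_le_of_sum_range_le fun n ↦ ?_
  have hc : 0 ≤ 2 * γ / (1 + γ) := by positivity
  rw [← ENNReal.ofReal_mul hc]
  have hsum : ∀ k ∈ Finset.range n, ENNReal.ofReal (γ / (x + (k + 1)) ^ 2) *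
      ENNReal.ofReal (1 / (1 + γ / (x + (k + 1)))) =
      ENNReal.ofReal (γ / (x + (k + 1)) ^ 2 * (1 / (1 + γ / (x + (k + 1))))) := fun k _ ↦
    (ENNReal.ofReal_mul (by positivity)).symm
  rw [Finset.sum_congr rfl hsum, ← ENNReal.ofReal_sum_of_nonneg fun k _ ↦ by positivity]
  refine ENNReal.ofReal_le_ofReal ((Finset.sum_le_sum fun k _ ↦ hterm k).trans ?_)
  rw [← Finset.mul_sum, Finset.sum_range_sub' (fun k : ℕ ↦ 1 / (1 + x + (k : ℝ)))]
  refine mul_le_mul_of_nonneg_left ?_ hc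
  have : 0 ≤ 1 / (1 + x + (n : ℝ)) := by positivity
  simpa using this

lemma lintegral_gaussTransfer_le {γ : ℝ} (h0 : 0 < γ) (h1 : γ < 1) {v : ℝ → ℝ≥0∞}
    (hv : Measurable v) :
    ∫⁻ x in Set.Ioo 0 1, gaussTransfer γ v x ≤ ∫⁻ x in Set.Ioo 0 1, v x := by
  unfold gaussTransfer
  rw [lintegral_tsum fun k ↦ by fun_prop]
  have himg (k : ℕ) : ∫⁻ x in Set.Ioo (0 : ℝ) 1,
      ENNReal.ofReal (γ / (x + (k + 1)) ^ 2) * v (γ / (x + (k + 1))) =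
      ∫⁻ y in (fun x : ℝ ↦ γ / (x + (k + 1))) '' Set.Ioo 0 1, v y := by
    rw [lintegral_image_eq_lintegral_abs_deriv_mul (f' := fun x ↦ -(γ / (x + (k + 1)) ^ 2))
      measurableSet_Ioo]
    · refine setLIntegral_congr_fun measurableSet_Ioo fun x hx ↦ ?_
      have : 0 < x := hx.1
      simp only [abs_neg]
      rw [abs_of_pos (by positivity)]
    · intro x hx
      have : 0 < x := hx.1
      have hd := ((hasDerivAt_id x).add_const ((k : ℝ) + 1)).inv
        (by simp only [id]; positivity) |>.const_mul γ
      refine (hd.congr_deriv ?_).hasDerivWithinAt.congr (fun y _ ↦ ?_) ?_ <;>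
        simp [div_eq_mul_inv]
    · intro x hx y hy hxy
      have h1 : 0 < x := hx.1
      have h2 : 0 < y := hy.1
      have hk : (0 : ℝ) ≤ k := k.cast_nonneg
      simp only at hxy
      rw [div_eq_div_iff (by positivity) (by positivity)] at hxy
      have := mul_left_cancel₀ h0.ne' hxy
      linarith
  have hsub (k : ℕ) : (fun x : ℝ ↦ γ / (x + (k + 1))) '' Set.Ioo 0 1 ⊆
      Set.Ioo (γ / ((k + 1 : ℕ) + 1)) (γ / (k + 1)) := by
    rintro _ ⟨x, hx, rfl⟩
    have := hx.1
    have := hx.2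
    have hk : (0 : ℝ) ≤ k := k.cast_nonneg
    push_cast
    constructor <;> refine div_lt_div_of_pos_left h0 (by positivity) ?_ <;> linarith
  simp_rw [himg]
  calc ∑' k : ℕ, ∫⁻ y in (fun x : ℝ ↦ γ / (x + (k + 1))) '' Set.Ioo 0 1, v y
      ≤ ∑' k : ℕ, ∫⁻ y in Set.Ioo (γ / ((k + 1 : ℕ) + 1)) (γ / (k + 1)), v y :=
        ENNReal.tsum_le_tsum fun k ↦ lintegral_mono_set (hsub k)
    _ = ∫⁻ y in ⋃ k : ℕ, Set.Ioo (γ / ((k + 1 : ℕ) + 1)) (γ / (k + 1)), v y := by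
        rw [lintegral_iUnion (fun k ↦ measurableSet_Ioo)]
        have hanti : Antitone fun k : ℕ ↦ γ / ((k : ℝ) + 1) := fun a b hab ↦ by
          dsimp only; gcongr
        simpa using hanti.pairwise_disjoint_on_Ioo_succ
    _ ≤ ∫⁻ y in Set.Ioo 0 1, v y := by
        refine lintegral_mono_set (Set.iUnion_subset fun k ↦ Set.Ioo_subset_Ioo (by positivity) ?_)
        have hk : (0 : ℝ) ≤ k := k.cast_nonneg
        rw [div_le_one (by positivity)]
        linarith

lemma lintegral_eq_zero_of_le_gaussTransfer {γ : ℝ} (h0 : 0 < γ) (h1 : γ < 1) {u : ℝ → ℝ≥0∞}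
    (hu : Measurable u) (hfin : ∫⁻ x in Set.Ioo 0 1, u x ≠ ∞) (htop : ∀ x, u x ≠ ∞)
    (hle : ∀ᵐ x, x ∈ Set.Ioo (0 : ℝ) 1 → u x ≤ gaussTransfer γ (gaussTransfer γ u) x) :
    ∫⁻ x in Set.Ioo 0 1, u x = 0 := by
  set c : ℝ≥0∞ := ENNReal.ofReal (2 * γ / (1 + γ)) with hc
  have hc1 : c < 1 := by
    rw [hc, ENNReal.ofReal_lt_one, div_lt_one (by positivity)]
    linarith
  have hρ := measurable_gaussDensity
  set φ : ℝ≥0∞ → ℝ≥0∞ := fun M ↦ ∫⁻ x in Set.Ioo 0 1, (u x - M * gaussDensity x)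
  have hstep (M : ℝ≥0∞) : φ (c ^ 2 * M) ≤ φ M := by
    set b : ℝ → ℝ≥0∞ := fun x ↦ u x - M * gaussDensity x
    have hbm : Measurable b := by fun_prop
    have hbound (x : ℝ) (hx : x ∈ Set.Ioo (0 : ℝ) 1) :
        gaussTransfer γ u x ≤
          ((fun x ↦ (M * c) * gaussDensity x) + gaussTransfer γ b) x := by
      have hub : ∀ x ∈ Set.Ioo (0 : ℝ) 1, u x ≤ ((fun x ↦ M * gaussDensity x) + b) x :=
        fun x _ ↦ le_add_tsub
      refine (gaussTransfer_mono h0 h1 hub hx).trans ?_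
      rw [gaussTransfer_add, gaussTransfer_const_mul]
      simp only [Pi.add_apply, mul_assoc]
      gcongr
      exact gaussTransfer_gaussDensity_le h0 h1 hx
    calc φ (c ^ 2 * M)
        ≤ ∫⁻ x in Set.Ioo 0 1, gaussTransfer γ (gaussTransfer γ b) x := by
          refine lintegral_mono_ae ((ae_restrict_iff' measurableSet_Ioo).2 ?_)
          filter_upwards [hle] with x hx hxI
          rw [tsub_le_iff_left]
          refine (hx hxI).trans ((gaussTransfer_mono h0 h1 hbound hxI).trans ?_)
          rw [gaussTransfer_add, gaussTransfer_const_mul]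
          simp only [Pi.add_apply]
          refine add_le_add_left ?_ _
          calc M * c * gaussTransfer γ gaussDensity x
              ≤ M * c * (c * gaussDensity x) := by
                gcongr; exact gaussTransfer_gaussDensity_le h0 h1 hxI
            _ = c ^ 2 * M * gaussDensity x := by ring
      _ ≤ ∫⁻ x in Set.Ioo 0 1, gaussTransfer γ b x :=
          lintegral_gaussTransfer_le h0 h1 (measurable_gaussTransfer γ hbm)
      _ ≤ φ M := lintegral_gaussTransfer_le h0 h1 hbm
  have hiter (M : ℝ≥0∞) (n : ℕ) : φ ((c ^ 2) ^ n * M) ≤ φ M := by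
    induction n with
    | zero => simp
    | succ n ih =>
      rw [pow_succ', mul_assoc]
      exact (hstep _).trans ih
  have hρ1 : ∫⁻ x in Set.Ioo 0 1, gaussDensity x ≤ 1 := by
    calc ∫⁻ x in Set.Ioo 0 1, gaussDensity x ≤ ∫⁻ x in Set.Ioo (0 : ℝ) 1, 1 := by
          refine setLIntegral_mono' measurableSet_Ioo fun x hx ↦ ?_
          have := hx.1
          rw [gaussDensity, ENNReal.ofReal_le_one, div_le_one (by positivity)]
          linarith
      _ = 1 := by simp
  have hsplit (M : ℝ≥0∞) : ∫⁻ x in Set.Ioo 0 1, u x ≤ M + φ M := by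
    calc ∫⁻ x in Set.Ioo 0 1, u x
        ≤ ∫⁻ x in Set.Ioo 0 1, (M * gaussDensity x + (u x - M * gaussDensity x)) :=
          lintegral_mono fun x ↦ le_add_tsub
      _ = M * (∫⁻ x in Set.Ioo 0 1, gaussDensity x) + φ M := by
          rw [lintegral_add_left (by fun_prop), lintegral_const_mul _ hρ]
      _ ≤ M + φ M := by gcongr; exact mul_le_of_le_one_right' hρ1
  have hle_φ (N : ℕ) : ∫⁻ x in Set.Ioo 0 1, u x ≤ φ N := by
    have hlim : Filter.Tendsto (fun n : ℕ ↦ (c ^ 2) ^ n * (N : ℝ≥0∞) + φ N) Filter.atTop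
        (nhds (0 * (N : ℝ≥0∞) + φ N)) := by
      refine Filter.Tendsto.add_const _ (ENNReal.Tendsto.mul_const ?_ (Or.inr (by simp)))
      exact ENNReal.tendsto_pow_atTop_nhds_zero_of_lt_one (pow_lt_one₀ (zero_le) hc1 two_ne_zero)
    rw [zero_mul, zero_add] at hlim
    exact ge_of_tendsto' hlim fun n ↦ (hsplit _).trans (add_le_add_right (hiter _ n) _)
  have hφ0 : Filter.Tendsto (fun N : ℕ ↦ φ N) Filter.atTop (nhds 0) := by
    have := tendsto_lintegral_of_dominated_convergence (μ := volume.restrict (Set.Ioo (0 : ℝ) 1))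
      (F := fun (N : ℕ) x ↦ u x - N * gaussDensity x) (f := fun _ ↦ 0) u
      (fun N ↦ by fun_prop) (fun N ↦ ae_of_all _ fun x ↦ tsub_le_self) hfin ?_
    · simpa using this
    · refine (ae_restrict_iff' measurableSet_Ioo).2 (ae_of_all _ fun x hx ↦ ?_)
      have hx0 := hx.1
      have hpos : gaussDensity x ≠ 0 := by
        rw [gaussDensity, ne_eq, ENNReal.ofReal_eq_zero, not_le]
        positivity
      obtain ⟨n, hn⟩ := ENNReal.exists_nat_mul_gt hpos (htop x)
      refine tendsto_const_nhds.congr' ?_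
      filter_upwards [Filter.eventually_ge_atTop n] with N hN
      refine (tsub_eq_zero_of_le (hn.le.trans ?_)).symm
      gcongr
  exact le_antisymm (ge_of_tendsto' hφ0 hle_φ) (zero_le)

/-- An integrable function whose Fourier transform vanishes on the integers annihilates all
continuous `1`-periodic functions. -/
lemma integral_continuousMap_mul_eq_zero {h : ℝ → ℂ} (hh : Integrable h)
    (hF : ∀ m : ℤ, ∫ t : ℝ, Complex.exp (2 * π * Complex.I * m * t) * h t = 0)
    (φ : C(AddCircle (1 : ℝ), ℂ)) : ∫ t : ℝ, φ (t : AddCircle (1 : ℝ)) * h t = 0 := by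
  have hmeas (ψ : C(AddCircle (1 : ℝ), ℂ)) :
      AEStronglyMeasurable (fun t : ℝ ↦ ψ (t : AddCircle (1 : ℝ))) :=
    (ψ.continuous.comp (AddCircle.continuous_mk' 1)).aestronglyMeasurable
  have hint (ψ : C(AddCircle (1 : ℝ), ℂ)) :
      Integrable fun t : ℝ ↦ ψ (t : AddCircle (1 : ℝ)) * h t :=
    hh.bdd_mul (hmeas ψ) (ae_of_all _ fun t ↦ ψ.norm_coe_le_norm _)
  let Λ : C(AddCircle (1 : ℝ), ℂ) →ₗ[ℂ] ℂ :=
    { toFun := fun ψ ↦ ∫ t : ℝ, ψ (t : AddCircle (1 : ℝ)) * h t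
      map_add' := fun ψ χ ↦ by
        simp only [ContinuousMap.add_apply, add_mul]
        exact integral_add (hint ψ) (hint χ)
      map_smul' := fun c ψ ↦ by
        simp only [ContinuousMap.smul_apply, smul_eq_mul, mul_assoc, RingHom.id_apply]
        exact integral_const_mul c _ }
  let Λc : C(AddCircle (1 : ℝ), ℂ) →L[ℂ] ℂ := Λ.mkContinuous (∫ t, ‖h t‖) fun ψ ↦ by
    calc ‖∫ t : ℝ, ψ (t : AddCircle (1 : ℝ)) * h t‖ ≤ ∫ t : ℝ, ‖ψ‖ * ‖h t‖ := by
          refine norm_integral_le_of_norm_le (hh.norm.const_mul _) (ae_of_all _ fun t ↦ ?_)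
          rw [norm_mul]
          gcongr
          exact ψ.norm_coe_le_norm _
      _ = (∫ t, ‖h t‖) * ‖ψ‖ := by rw [integral_const_mul, mul_comm]
  have hle : (Submodule.span ℂ (Set.range (@fourier (1 : ℝ)))).topologicalClosure ≤ Λc.ker := by
    refine Submodule.topologicalClosure_minimal _ (Submodule.span_le.2 ?_) Λc.isClosed_ker
    rintro _ ⟨m, rfl⟩
    change ∫ t : ℝ, fourier m (t : AddCircle (1 : ℝ)) * h t = 0
    simpa [fourier_coe_apply] using hF m
  rw [span_fourier_closure_eq_top] at hle
  exact hle (Submodule.mem_top (x := φ))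

lemma ae_tsum_int_translate_eq_zero {h : ℝ → ℂ} (hm : Measurable h) (hh : Integrable h)
    (hF : ∀ m : ℤ, ∫ t : ℝ, Complex.exp (2 * π * Complex.I * m * t) * h t = 0) :
    ∀ᵐ x : ℝ, x ∈ Set.Ioo (0 : ℝ) 1 → ∑' n : ℤ, h (x + n) = 0 := by
  have hsum {k : ℝ → ℂ} (hk : Integrable k) : ∫ x in Set.Ioc (0 : ℝ) 1, ∑' n : ℤ, k (x + n) =
      ∫ x, k x := by
    have h1 := hk.hasSum_intervalIntegral_comp_add_int
    have h2 := hk.norm.hasSum_intervalIntegral_comp_add_int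
    simp_rw [intervalIntegral.integral_of_le zero_le_one] at h1 h2
    exact (hasSum_integral_of_summable_integral_norm
      (fun n : ℤ ↦ (hk.comp_add_right (n : ℝ)).integrableOn) h2.summable).unique h1
  have hHint : IntegrableOn (fun x ↦ ∑' n : ℤ, h (x + n)) (Set.Ioc 0 1) := by
    have h2 := hh.norm.hasSum_intervalIntegral_comp_add_int
    simp_rw [intervalIntegral.integral_of_le zero_le_one] at h2
    refine ⟨(Measurable.tsum fun n ↦ by fun_prop).aestronglyMeasurable, ?_⟩
    calc ∫⁻ x in Set.Ioc 0 1, ‖∑' n : ℤ, h (x + n)‖ₑ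
        ≤ ∫⁻ x in Set.Ioc 0 1, ∑' n : ℤ, ‖h (x + n)‖ₑ :=
          lintegral_mono fun x ↦ enorm_tsum_le_tsum_enorm
      _ = ∑' n : ℤ, ∫⁻ x in Set.Ioc 0 1, ‖h (x + n)‖ₑ :=
          lintegral_tsum fun n ↦ by fun_prop
      _ = ∑' n : ℤ, ENNReal.ofReal (∫ x in Set.Ioc 0 1, ‖h (x + n)‖) :=
          tsum_congr fun n ↦ (ofReal_integral_norm_eq_lintegral_enorm
            (hh.comp_add_right (n : ℝ)).integrableOn).symm
      _ < ∞ := h2.summable.tsum_ofReal_lt_top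
  refine isOpen_Ioo.ae_eq_zero_of_integral_contDiff_smul_eq_zero
    (hHint.mono_set Set.Ioo_subset_Ioc_self).locallyIntegrableOn fun g hg _ hgs ↦ ?_
  have hg0 {x : ℝ} (hx : x ∉ Set.Ioo (0 : ℝ) 1) : g x = 0 :=
    image_eq_zero_of_notMem_tsupport fun h ↦ hx (hgs h)
  have hgc : Continuous fun x ↦ (g x : ℂ) := Complex.continuous_ofReal.comp hg.continuous
  have : Fact ((0 : ℝ) < 1) := ⟨one_pos⟩
  let φ : C(AddCircle (1 : ℝ), ℂ) := ⟨AddCircle.liftIco 1 0 fun x ↦ (g x : ℂ),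
    AddCircle.liftIco_zero_continuous (by simp [hg0]) hgc.continuousOn⟩
  have hφ {x : ℝ} (hx : x ∈ Set.Ioo (0 : ℝ) 1) (n : ℤ) :
      φ ((x + n : ℝ) : AddCircle (1 : ℝ)) = g x := by
    have : ((x + n : ℝ) : AddCircle (1 : ℝ)) = x := by
      simp
    rw [this]
    exact AddCircle.liftIco_zero_coe_apply (f := fun x ↦ (g x : ℂ)) (Set.Ioo_subset_Ico_self hx)
  have hint : Integrable fun t : ℝ ↦ φ (t : AddCircle (1 : ℝ)) * h t :=
    hh.bdd_mul ((φ.continuous.comp (AddCircle.continuous_mk' 1)).aestronglyMeasurable)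
      (ae_of_all _ fun t ↦ φ.norm_coe_le_norm _)
  rw [← setIntegral_eq_integral_of_forall_compl_eq_zero (s := Set.Ioo 0 1)
      fun x hx ↦ by rw [hg0 hx, zero_smul],
    ← integral_continuousMap_mul_eq_zero hh hF φ, ← hsum hint, integral_Ioc_eq_integral_Ioo]
  refine setIntegral_congr_fun measurableSet_Ioo fun x hx ↦ ?_
  simp only [hφ hx, tsum_mul_left, Complex.real_smul]

lemma ae_enorm_le_tsum_translate {h : ℝ → ℂ} (hm : Measurable h) (hh : Integrable h)
    (hF : ∀ m : ℤ, ∫ t : ℝ, Complex.exp (2 * π * Complex.I * m * t) * h t = 0)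
    (hneg : ∀ᵐ t : ℝ, t < 0 → h t = 0) :
    ∀ᵐ x : ℝ, x ∈ Set.Ioo (0 : ℝ) 1 → ‖h x‖ₑ ≤ ∑' n : ℕ, ‖h (x + (n + 1))‖ₑ := by
  have hneg' : ∀ᵐ x : ℝ, ∀ n : ℕ, x - (n + 1) < 0 → h (x - (n + 1)) = 0 := by
    refine ae_all_iff.2 fun n ↦ ?_
    exact (measurePreserving_sub_right volume ((n : ℝ) + 1)).quasiMeasurePreserving.ae hneg
  filter_upwards [ae_tsum_int_translate_eq_zero hm hh hF, hneg'] with x hx hxn hxI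
  by_cases htop : ∑' n : ℕ, ‖h (x + (n + 1))‖ₑ = ∞
  · simp [htop]
  have hs : Summable fun n : ℕ ↦ h (x + (n + 1)) := by
    refine Summable.of_norm ?_
    have := ENNReal.summable_toReal htop
    simpa using this
  have h0 (n : ℕ) : h (x - (n + 1)) = 0 := by
    refine hxn n ?_
    have := hxI.2
    have : (0 : ℝ) ≤ n := n.cast_nonneg
    linarith
  have hsum := HasSum.of_add_one_of_neg_add_one (f := fun n : ℤ ↦ h (x + n))
    (by simpa using hs.hasSum) (m' := 0) (by
      convert hasSum_zero using 2 with n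
      have := h0 n
      push_cast
      rwa [← sub_eq_add_neg, sub_eq_add_neg, neg_add_rev, add_comm (-1 : ℝ),
        ← neg_add_rev, add_comm (1 : ℝ), ← sub_eq_add_neg])
  have heq : h x = -∑' n : ℕ, h (x + (n + 1)) := by
    have := hsum.tsum_eq.symm.trans (hx hxI)
    simp only [Int.cast_zero, add_zero] at this
    linear_combination this
  rw [heq, enorm_neg]
  exact enorm_tsum_le_tsum_enorm

lemma hasDerivAt_const_div {γ s : ℝ} (hs : s ≠ 0) :
    HasDerivAt (fun x ↦ γ / x) (-(γ / s ^ 2)) s := by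
  simpa [div_eq_mul_inv] using (hasDerivAt_inv hs).const_mul γ

lemma image_const_div_Ioi {γ : ℝ} (h0 : 0 < γ) :
    (fun x : ℝ ↦ γ / x) '' Set.Ioi 0 = Set.Ioi 0 := by
  ext y
  constructor
  · rintro ⟨x, hx, rfl⟩
    exact div_pos h0 hx
  · intro hy
    exact ⟨γ / y, div_pos h0 hy, div_div_cancel₀ h0.ne'⟩

lemma injOn_const_div {γ : ℝ} (h0 : 0 < γ) : Set.InjOn (fun x : ℝ ↦ γ / x) (Set.Ioi 0) :=
  fun x _ y _ hxy ↦ by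
    rw [← div_div_cancel₀ (b := x) h0.ne', ← div_div_cancel₀ (b := y) h0.ne']
    exact congrArg (γ / ·) hxy

lemma ae_comp_const_div {γ : ℝ} (h0 : 0 < γ) {P : ℝ → Prop}
    (h : ∀ᵐ s : ℝ, s ∈ Set.Ioo (0 : ℝ) 1 → P s) : ∀ᵐ t : ℝ, γ < t → P (γ / t) := by
  have hnull : volume ((fun x : ℝ ↦ γ / x) '' {s | ¬(s ∈ Set.Ioo (0 : ℝ) 1 → P s)}) = 0 := by
    refine addHaar_image_eq_zero_of_differentiableOn_of_addHaar_eq_zero volume (fun s hs ↦ ?_) h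
    have hs' : s ∈ Set.Ioo (0 : ℝ) 1 := by
      by_contra hc
      exact hs fun h ↦ absurd h hc
    exact (hasDerivAt_const_div hs'.1.ne').differentiableAt.differentiableWithinAt
  refine measure_mono_null (fun t ht ↦ ?_) hnull
  simp only [Set.mem_compl_iff, Set.mem_ofPred_eq, Classical.not_imp] at ht
  have ht0 : 0 < t := h0.trans ht.1
  refine ⟨γ / t, fun hP ↦ ht.2 (hP ⟨div_pos h0 ht0, (div_lt_one ht0).2 ht.1⟩),
    div_div_cancel₀ h0.ne'⟩

/-- Fourier uniqueness on the normalized lattice-cross for densities on the half-line. -/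
theorem ae_eq_zero_of_lattice_cross {γ : ℝ} (h0 : 0 < γ) (h1 : γ < 1) {f : ℝ → ℂ}
    (hm : Measurable f) (hf : Integrable f)
    (hF : ∀ m : ℤ, ∫ t : ℝ, Complex.exp (2 * π * Complex.I * m * t) * f t = 0)
    (hG : ∀ n : ℤ, ∫ t : ℝ, Complex.exp (2 * π * Complex.I * n * (γ / t)) * f t = 0)
    (hneg : ∀ᵐ t : ℝ, t < 0 → f t = 0) : f =ᵐ[volume] 0 := by
  set u : ℝ → ℝ≥0∞ := fun t ↦ ‖f t‖ₑ with hu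
  have hum : Measurable u := hm.enorm
  set g : ℝ → ℂ := (Set.Ioi (0 : ℝ)).indicator fun s ↦ (γ / s ^ 2) • f (γ / s) with hg
  have hgm : Measurable g := Measurable.indicator (by fun_prop) measurableSet_Ioi
  have hderiv (s : ℝ) (hs : s ∈ Set.Ioi (0 : ℝ)) :
      HasDerivWithinAt (fun x ↦ γ / x) (-(γ / s ^ 2)) (Set.Ioi 0) s :=
    (hasDerivAt_const_div (ne_of_gt hs)).hasDerivWithinAt
  have habs (s : ℝ) : |-(γ / s ^ 2)| = γ / s ^ 2 := by
    rw [abs_neg, abs_of_nonneg (by positivity)]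
  have hgint : Integrable g := by
    rw [hg, integrable_indicator_iff measurableSet_Ioi]
    have := (integrableOn_image_iff_integrableOn_abs_deriv_smul measurableSet_Ioi hderiv
      (injOn_const_div h0) f).1 hf.integrableOn
    simpa only [habs] using this
  have hgF (m : ℤ) : ∫ s : ℝ, Complex.exp (2 * π * Complex.I * m * s) * g s = 0 := by
    rw [← hG m]
    have hR : ∫ t : ℝ, Complex.exp (2 * π * Complex.I * m * (γ / t)) * f t =
        ∫ t in Set.Ioi (0 : ℝ), Complex.exp (2 * π * Complex.I * m * (γ / t)) * f t := by
      refine (setIntegral_eq_integral_of_ae_compl_eq_zero ?_).symm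
      filter_upwards [hneg, Measure.ae_ne volume (0 : ℝ)] with t ht ht0 htI
      rw [ht (lt_of_le_of_ne (not_lt.1 htI) ht0), mul_zero]
    have hL : ∫ s : ℝ, Complex.exp (2 * π * Complex.I * m * s) * g s =
        ∫ s in Set.Ioi (0 : ℝ), Complex.exp (2 * π * Complex.I * m * s) * g s := by
      refine (setIntegral_eq_integral_of_forall_compl_eq_zero fun s hs ↦ ?_).symm
      rw [hg, Set.indicator_of_notMem hs, mul_zero]
    have hcv := integral_image_eq_integral_abs_deriv_smul measurableSet_Ioi hderiv
      (injOn_const_div h0) fun t : ℝ ↦ Complex.exp (2 * π * Complex.I * m * (γ / t)) * f t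
    rw [image_const_div_Ioi h0] at hcv
    rw [hL, hR, hcv]
    refine setIntegral_congr_fun measurableSet_Ioi fun s hs ↦ ?_
    have hcast : (γ : ℂ) / ((γ / s : ℝ) : ℂ) = s := by
      rw [← Complex.ofReal_div, div_div_cancel₀ h0.ne']
    simp only [habs, hg, Set.indicator_of_mem hs, hcast, mul_smul_comm]
  have hgneg : ∀ᵐ s : ℝ, s < 0 → g s = 0 :=
    ae_of_all _ fun s hs ↦ Set.indicator_of_notMem (not_lt.2 hs.le) _
  have hgnorm {s : ℝ} (hs : 0 < s) : ‖g s‖ₑ = ENNReal.ofReal (γ / s ^ 2) * u (γ / s) := by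
    rw [hg, Set.indicator_of_mem (Set.mem_Ioi.2 hs), enorm_smul, Real.enorm_of_nonneg (by positivity)]
  have hfar : ∀ᵐ t : ℝ, γ < t →
      u t ≤ ENNReal.ofReal (γ / t ^ 2) * gaussTransfer γ u (γ / t) := by
    filter_upwards [ae_comp_const_div h0
      (ae_enorm_le_tsum_translate hgm hgint hgF hgneg)] with t ht htγ
    have ht0 : 0 < t := h0.trans htγ
    have hs : 0 < γ / t := div_pos h0 ht0
    have hle : ENNReal.ofReal (γ / (γ / t) ^ 2) * u t ≤ gaussTransfer γ u (γ / t) := by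
      have := ht htγ
      rw [hgnorm hs, div_div_cancel₀ h0.ne'] at this
      refine this.trans_eq (tsum_congr fun n ↦ hgnorm (by positivity))
    calc u t = ENNReal.ofReal (γ / t ^ 2) * (ENNReal.ofReal (γ / (γ / t) ^ 2) * u t) := by
          rw [← mul_assoc, ← ENNReal.ofReal_mul (by positivity),
            show γ / t ^ 2 * (γ / (γ / t) ^ 2) = 1 by field_simp, ENNReal.ofReal_one, one_mul]
      _ ≤ _ := by gcongr
  have hnear : ∀ᵐ x : ℝ, x ∈ Set.Ioo (0 : ℝ) 1 →
      u x ≤ gaussTransfer γ (gaussTransfer γ u) x := by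
    have hfar' : ∀ᵐ x : ℝ, ∀ n : ℕ, γ < x + (n + 1) → u (x + (n + 1)) ≤
        ENNReal.ofReal (γ / (x + (n + 1)) ^ 2) * gaussTransfer γ u (γ / (x + (n + 1))) :=
      ae_all_iff.2 fun n ↦
        (measurePreserving_add_right volume ((n : ℝ) + 1)).quasiMeasurePreserving.ae hfar
    filter_upwards [ae_enorm_le_tsum_translate hm hf hF hneg, hfar'] with x hx hxf hxI
    refine (hx hxI).trans (ENNReal.tsum_le_tsum fun n ↦ hxf n ?_)
    have := hxI.1
    have : (0 : ℝ) ≤ n := n.cast_nonneg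
    linarith
  have hfin : ∫⁻ x in Set.Ioo 0 1, u x ≠ ∞ :=
    ((setLIntegral_le_lintegral _ _).trans_lt hf.2).ne
  have hzero := lintegral_eq_zero_of_le_gaussTransfer h0 h1 hum hfin (fun x ↦ enorm_ne_top) hnear
  have hTzero : ∫⁻ x in Set.Ioo 0 1, gaussTransfer γ u x = 0 :=
    le_antisymm ((lintegral_gaussTransfer_le h0 h1 hum).trans hzero.le) zero_le
  rw [lintegral_eq_zero_iff hum, Filter.EventuallyEq, ae_restrict_iff' measurableSet_Ioo] at hzero
  rw [lintegral_eq_zero_iff (measurable_gaussTransfer γ hum), Filter.EventuallyEq,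
    ae_restrict_iff' measurableSet_Ioo] at hTzero
  filter_upwards [hzero, ae_comp_const_div h0 hTzero, hfar, hneg,
    Measure.ae_ne volume (0 : ℝ)] with t ht1 ht2 ht3 ht4 ht5
  rcases lt_or_gt_of_ne ht5 with ht | ht
  · exact ht4 ht
  · by_cases htγ : γ < t
    · have := ht3 htγ
      rw [ht2 htγ] at this
      simpa [hu] using this
    · simpa [hu] using ht1 ⟨ht, (not_lt.1 htγ).trans_lt h1⟩

/-- Dynamical unique continuation: for `αβ < 4`, an annihilating `L¹` density
on the full hyperbola vanishing a.e. on the negative half-axis vanishes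
identically. -/
theorem stmt_4 (α β : ℝ) (hα : 0 < α) (hβ : 0 < β) (hsub : α * β < 4)
    (f : ℝ → ℂ) (hf : Integrable f)
    (h1 : ∀ m : ℤ, ∫ t : ℝ, Complex.exp (Complex.I * π * α * m * t) * f t = 0)
    (h2 : ∀ n : ℤ, ∫ t : ℝ, Complex.exp (-(Complex.I * π * β * n) / t) * f t = 0)
    (hneg : ∀ᵐ t : ℝ, t < 0 → f t = 0) :
    f =ᵐ[volume] 0 := by
  set g : ℝ → ℂ := hf.1.mk f
  have hfg : f =ᵐ[volume] g := hf.1.ae_eq_mk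
  have hgm : Measurable g := hf.1.stronglyMeasurable_mk.measurable
  have hp : 0 < 2 / α := by positivity
  have hα' : (α : ℂ) ≠ 0 := Complex.ofReal_ne_zero.2 hα.ne'
  have hquasi (a : ℝ) (ha : a ≠ 0) :
      Measure.QuasiMeasurePreserving (fun x : ℝ ↦ a * x) volume volume := by
    refine ⟨measurable_const_mul a, ?_⟩
    rw [Real.map_volume_mul_left ha]
    exact Measure.smul_absolutelyContinuous
  have hscale (e : ℝ → ℂ) (he : ∫ t, e t * f t = 0) :
      ∫ t, e (2 / α * t) * g (2 / α * t) = 0 := by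
    rw [Measure.integral_comp_mul_left (fun t ↦ e t * g t), ← integral_congr_ae
      (hfg.mono fun t ht ↦ show e t * f t = e t * g t by rw [ht]), he, smul_zero]
  have key : (fun t ↦ g (2 / α * t)) =ᵐ[volume] 0 := by
    refine ae_eq_zero_of_lattice_cross (γ := α * β / 4) (by positivity) (by linarith)
      (by fun_prop) ((hf.congr hfg).comp_mul_left' hp.ne') (fun m ↦ ?_) (fun n ↦ ?_) ?_
    · rw [← hscale _ (h1 m)]
      refine integral_congr_ae (ae_of_all _ fun t ↦ ?_)
      dsimp only
      congr 2
      push_cast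
      field_simp
    · rw [← hscale _ (h2 (-n))]
      refine integral_congr_ae (ae_of_all _ fun t ↦ ?_)
      dsimp only
      congr 2
      push_cast
      rcases eq_or_ne (t : ℂ) 0 with ht | ht
      · simp [ht]
      · field_simp
        ring
    · filter_upwards [(hquasi _ hp.ne').ae (hneg.and hfg)] with t ht htneg
      rw [← ht.2]
      exact ht.1 (mul_neg_of_pos_of_neg hp htneg)
  filter_upwards [hfg, (hquasi (α / 2) (by positivity)).ae key] with t ht ht'
  rw [ht]
  have : 2 / α * (α / 2 * t) = t := by field_simp
  simpa [this] using ht'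
end

section
/- Let (a, b) ∈ ℝ² be a pair with a < 0 or b > 0. Then there exists f ∈ L¹(ℝ, ℂ) such that ∫_ℝ e^{iyt} f(t) dt = 0 for every real y ≥ 0, while ∫_ℝ e^{i(at + b/t)} f(t) dt ≠ 0. -/
open MeasureTheory Real

open scoped Topology

/-- The change of variables `θ = π + 2 arctan t` from the unit circle to the real line. -/
lemma integral_circle_eq_integral_cauchy (g : ℝ → ℂ) :
    ∫ θ in (0 : ℝ)..2 * π, g θ = ∫ t : ℝ, (2 * (1 + t ^ 2)⁻¹ : ℝ) • g (π + 2 * arctan t) := by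
  have himage : (fun t : ℝ => π + 2 * arctan t) '' Set.univ = Set.Ioo 0 (2 * π) := by
    ext θ
    simp only [Set.image_univ, Set.mem_range, Set.mem_Ioo]
    constructor
    · rintro ⟨t, rfl⟩
      have h₁ := arctan_lt_pi_div_two t
      have h₂ := neg_pi_div_two_lt_arctan t
      constructor <;> linarith
    · rintro ⟨h₁, h₂⟩
      refine ⟨tan ((θ - π) / 2), ?_⟩
      rw [arctan_tan (by linarith) (by linarith)]
      ring
  have hderiv : ∀ t ∈ Set.univ, HasDerivWithinAt (fun t : ℝ => π + 2 * arctan t)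
      (2 * (1 + t ^ 2)⁻¹) Set.univ t := fun t _ => by
    simpa using ((hasDerivAt_arctan t).const_mul 2).const_add π
  have hinj : Set.InjOn (fun t : ℝ => π + 2 * arctan t) Set.univ := fun s _ t _ hst =>
    arctan_injective (by simpa using hst)
  rw [intervalIntegral.integral_of_le two_pi_pos.le, integral_Ioc_eq_integral_Ioo, ← himage,
    integral_image_eq_integral_abs_deriv_smul MeasurableSet.univ hderiv hinj,
    Measure.restrict_univ]
  refine integral_congr_ae (.of_forall fun t => ?_)
  have : 0 ≤ 2 * (1 + t ^ 2)⁻¹ := by positivity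
  simp only [abs_of_nonneg this]

lemma ofReal_add_I_ne_zero (t : ℝ) : (t : ℂ) + Complex.I ≠ 0 := fun h => by
  simpa using congrArg Complex.im h

lemma exp_pi_add_two_mul_arctan (t : ℝ) :
    Complex.exp ((π + 2 * arctan t : ℝ) * Complex.I) = (t - Complex.I) / (t + Complex.I) := by
  have hsin : Complex.sin (arctan t) = t * Complex.cos (arctan t) := by
    have h := tan_mul_cos (cos_arctan_pos t).ne'
    rw [tan_arctan] at h
    exact_mod_cast h.symm
  have hexp : Complex.exp (arctan t * Complex.I) =
      Complex.cos (arctan t) * (1 + t * Complex.I) := by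
    rw [Complex.exp_mul_I, hsin]; ring
  have hexp_neg : Complex.exp (-(arctan t * Complex.I)) =
      Complex.cos (arctan t) * (1 - t * Complex.I) := by
    rw [← neg_mul, Complex.exp_mul_I, Complex.cos_neg, Complex.sin_neg, hsin]; ring
  have hunit : Complex.cos (arctan t) * (1 + t * Complex.I) *
      (Complex.cos (arctan t) * (1 - t * Complex.I)) = 1 := by
    rw [← hexp, ← hexp_neg, ← Complex.exp_add]; simp
  have hsplit : (((π + 2 * arctan t : ℝ) : ℂ) * Complex.I) =
      π * Complex.I + (arctan t * Complex.I + arctan t * Complex.I) := by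
    push_cast; ring
  rw [hsplit, Complex.exp_add, Complex.exp_add, Complex.exp_pi_mul_I, hexp,
    eq_div_iff (ofReal_add_I_ne_zero t)]
  linear_combination (t - Complex.I) * hunit -
    2 * Complex.cos (arctan t) ^ 2 * t * (1 + t * Complex.I) * Complex.I_sq

/-- The boundary values of a bounded holomorphic function on the unit disc, transported to the
real line, average to its value at the centre. -/
lemma integral_boundary_eq_of_bounded {H : ℂ → ℂ} {h : ℝ → ℂ}
    (hH : DifferentiableOn ℂ H (Metric.ball 0 1)) (hbound : ∀ z ∈ Metric.ball (0 : ℂ) 1, ‖H z‖ ≤ 1)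
    (hcont : ∀ t : ℝ, t ≠ 0 → ContinuousAt H ((t - Complex.I) / (t + Complex.I)))
    (hh : ∀ t : ℝ, t ≠ 0 → H ((t - Complex.I) / (t + Complex.I)) = h t) :
    ∫ t : ℝ, h t * ((1 + t ^ 2)⁻¹ : ℝ) = π * H 0 := by
  set c : ℝ → ℂ := fun t => (t - Complex.I) / (t + Complex.I) with hc
  have hc_cont : Continuous c := by
    rw [hc]
    exact Continuous.div (by fun_prop) (by fun_prop) ofReal_add_I_ne_zero
  have hc_norm : ∀ t, ‖c t‖ = 1 := fun t => by
    simp only [hc]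
    rw [← exp_pi_add_two_mul_arctan, Complex.norm_exp_ofReal_mul_I]
  have hmem : ∀ r ∈ Set.Ioo (0 : ℝ) 1, ∀ t, (r : ℂ) * c t ∈ Metric.ball (0 : ℂ) 1 := by
    intro r hr t
    rw [mem_ball_zero_iff, norm_mul, hc_norm, mul_one, Complex.norm_real, norm_of_nonneg hr.1.le]
    exact hr.2
  have hev : ∀ᶠ r in 𝓝[<] (1 : ℝ), r ∈ Set.Ioo (0 : ℝ) 1 :=
    Ioo_mem_nhdsLT one_pos
  have hmean : ∀ r ∈ Set.Ioo (0 : ℝ) 1,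
      ∫ t : ℝ, H (r * c t) * ((1 + t ^ 2)⁻¹ : ℝ) = π * H 0 := by
    intro r hr
    have hsub : Metric.closedBall (0 : ℂ) r ⊆ Metric.ball 0 1 :=
      Metric.closedBall_subset_ball hr.2
    have hdiff : DiffContOnCl ℂ H (Metric.ball 0 |r|) := by
      rw [abs_of_pos hr.1]
      exact (hH.mono hsub).diffContOnCl_ball subset_rfl
    have hav := hdiff.circleAverage
    rw [circleAverage_def, integral_circle_eq_integral_cauchy] at hav
    have hcongr : ∀ t : ℝ, (2 * (1 + t ^ 2)⁻¹ : ℝ) • H (circleMap 0 r (π + 2 * arctan t)) =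
        2 * (H (r * c t) * ((1 + t ^ 2)⁻¹ : ℝ)) := fun t => by
      rw [circleMap_zero, exp_pi_add_two_mul_arctan, Complex.real_smul]
      push_cast
      ring
    simp_rw [hcongr] at hav
    rw [integral_const_mul, Complex.real_smul] at hav
    rw [← hav]
    have hpi : (π : ℂ) ≠ 0 := by exact_mod_cast pi_ne_zero
    push_cast
    field_simp
  have hlim : Filter.Tendsto (fun r : ℝ => ∫ t : ℝ, H (r * c t) * ((1 + t ^ 2)⁻¹ : ℝ))
      (𝓝[<] 1) (𝓝 (∫ t : ℝ, h t * ((1 + t ^ 2)⁻¹ : ℝ))) := by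
    refine tendsto_integral_filter_of_dominated_convergence (fun t => (1 + t ^ 2)⁻¹) ?_ ?_
      integrable_inv_one_add_sq ?_
    · filter_upwards [hev] with r hr
      have hHc : Continuous fun t => H (r * c t) :=
        hH.continuousOn.comp_continuous (by fun_prop) (hmem r hr)
      exact hHc.aestronglyMeasurable.mul (by fun_prop)
    · filter_upwards [hev] with r hr
      refine .of_forall fun t => ?_
      rw [norm_mul, Complex.norm_real, norm_of_nonneg (by positivity)]
      exact mul_le_of_le_one_left (by positivity) (hbound _ (hmem r hr t))
    · filter_upwards [compl_mem_ae_iff.mpr (measure_singleton (0 : ℝ))] with t ht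
      have ht0 : t ≠ 0 := ht
      rw [← hh t ht0]
      refine Filter.Tendsto.mul_const _ ((hcont t ht0).tendsto.comp ?_)
      have : ContinuousAt (fun r : ℝ => (r : ℂ) * c t) 1 := by fun_prop
      simpa using this.tendsto.mono_left nhdsWithin_le_nhds
  refine tendsto_nhds_unique hlim (tendsto_const_nhds.congr' ?_)
  filter_upwards [hev] with r hr using (hmean r hr).symm

lemma re_one_add_div_one_sub_nonneg {z : ℂ} (hz : ‖z‖ < 1) : 0 ≤ ((1 + z) / (1 - z)).re := by
  have hsq : z.re * z.re + z.im * z.im < 1 := by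
    rw [← Complex.normSq_apply, Complex.normSq_eq_norm_sq]
    nlinarith [norm_nonneg z]
  rw [Complex.div_re, ← add_div]
  refine div_nonneg ?_ (Complex.normSq_nonneg _)
  simp
  nlinarith

lemma integral_exp_mul_cauchy_one {p q : ℝ} (hp : 0 ≤ p) (hq : 0 ≤ q) :
    ∫ t : ℝ, Complex.exp (Complex.I * (p * t - q / t)) * ((1 + t ^ 2)⁻¹ : ℝ) =
      π * Complex.exp (-(p + q)) := by
  have hdiff : ∀ z : ℂ, 1 - z ≠ 0 → 1 + z ≠ 0 → DifferentiableAt ℂ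
      (fun z : ℂ => Complex.exp (-(p * ((1 + z) / (1 - z)) + q * ((1 - z) / (1 + z))))) z := by
    intro z h₁ h₂
    fun_prop (disch := assumption)
  have hne : ∀ t : ℝ, 1 - (t - Complex.I) / (t + Complex.I) = 2 * Complex.I / (t + Complex.I) ∧
      1 + (t - Complex.I) / (t + Complex.I) = 2 * t / (t + Complex.I) := by
    intro t
    have := ofReal_add_I_ne_zero t
    constructor <;> field_simp <;> ring
  have key := integral_boundary_eq_of_bounded
    (H := fun z : ℂ => Complex.exp (-(p * ((1 + z) / (1 - z)) + q * ((1 - z) / (1 + z)))))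
    (h := fun t : ℝ => Complex.exp (Complex.I * (p * t - q / t))) ?_ ?_ ?_ ?_
  · rw [key]; simp
  · intro z hz
    rw [mem_ball_zero_iff] at hz
    refine (hdiff z ?_ ?_).differentiableWithinAt
    · intro h
      rw [← sub_eq_zero.mp h] at hz
      simp at hz
    · intro h
      rw [← norm_neg, ← eq_neg_of_add_eq_zero_left h] at hz
      simp at hz
  · intro z hz
    rw [mem_ball_zero_iff] at hz
    have h₁ := re_one_add_div_one_sub_nonneg hz
    have h₂ := re_one_add_div_one_sub_nonneg (z := -z) (by rwa [norm_neg])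
    rw [← sub_eq_add_neg, sub_neg_eq_add] at h₂
    rw [Complex.norm_exp, exp_le_one_iff, Complex.neg_re, Complex.add_re, Complex.re_ofReal_mul,
      Complex.re_ofReal_mul]
    linarith [mul_nonneg hp h₁, mul_nonneg hq h₂]
  · intro t ht
    have ht' : (t : ℂ) ≠ 0 := by exact_mod_cast ht
    have := ofReal_add_I_ne_zero t
    refine (hdiff _ ?_ ?_).continuousAt
    · rw [(hne t).1]; simp [this]
    · rw [(hne t).2]; simp [this, ht]
  · intro t ht
    have ht' : (t : ℂ) ≠ 0 := by exact_mod_cast ht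
    have := ofReal_add_I_ne_zero t
    have hI := Complex.I_ne_zero
    simp only [(hne t).1, (hne t).2]
    congr 1
    field_simp
    linear_combination -(p * t ^ 2 : ℂ) * Complex.I_sq

/-- The Poisson integral of `e^{i(αt - β/t)}` with `α, β ≥ 0` at the point `iη`. -/
lemma integral_exp_mul_cauchy {α β η : ℝ} (hα : 0 ≤ α) (hβ : 0 ≤ β) (hη : 0 < η) :
    ∫ t : ℝ, Complex.exp (Complex.I * (α * t - β / t)) * ((1 + (t / η) ^ 2)⁻¹ : ℝ) =
      η * π * (rexp (-(α * η + β / η)) : ℝ) := by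
  have hη' : (η : ℂ) ≠ 0 := by exact_mod_cast hη.ne'
  have h := Measure.integral_comp_div (fun s : ℝ =>
    Complex.exp (Complex.I * ((α * η : ℝ) * s - (β / η : ℝ) / s)) * ((1 + s ^ 2)⁻¹ : ℝ)) η
  rw [integral_exp_mul_cauchy_one (by positivity) (by positivity), abs_of_pos hη,
    Complex.real_smul] at h
  calc _ = _ := ?_
    _ = _ := h
    _ = _ := by push_cast; ring
  refine integral_congr_ae (.of_forall fun t => ?_)
  have h₁ : ((α * η : ℝ) : ℂ) * ((t / η : ℝ) : ℂ) = α * t := by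
    push_cast; field_simp
  have h₂ : ((β / η : ℝ) : ℂ) / ((t / η : ℝ) : ℂ) = β / t := by
    push_cast; rw [div_div_div_cancel_right₀ hη']
  simp only [h₁, h₂]

lemma norm_exp_I_mul_sub_div (α β t : ℝ) :
    ‖Complex.exp (Complex.I * (α * t - β / t))‖ = 1 := by
  rw [mul_comm, ← Complex.norm_exp_ofReal_mul_I (α * t - β / t)]
  push_cast
  rfl

lemma integrable_exp_mul_cauchy (α β : ℝ) {η : ℝ} (hη : 0 < η) :
    Integrable fun t : ℝ =>
      Complex.exp (Complex.I * (α * t - β / t)) * ((1 + (t / η) ^ 2)⁻¹ : ℝ) := by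
  have hint : Integrable fun t : ℝ => (((1 + (t / η) ^ 2)⁻¹ : ℝ) : ℂ) :=
    (integrable_inv_one_add_sq.comp_div hη.ne').ofReal
  refine hint.bdd_mul (c := 1) ?_ (.of_forall fun t => (norm_exp_I_mul_sub_div α β t).le)
  exact Measurable.aestronglyMeasurable (by fun_prop)

lemma norm_integral_exp_mul_cauchy_le (α β : ℝ) {η : ℝ} (hη : 0 < η) :
    ‖∫ t : ℝ, Complex.exp (Complex.I * (α * t - β / t)) * ((1 + (t / η) ^ 2)⁻¹ : ℝ)‖ ≤ η * π := by
  refine (norm_integral_le_integral_norm _).trans_eq ?_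
  simp_rw [norm_mul, norm_exp_I_mul_sub_div, one_mul, Complex.norm_real]
  have h := Measure.integral_comp_div (fun s : ℝ => (1 + s ^ 2)⁻¹) η
  rw [integral_univ_inv_one_add_sq, abs_of_pos hη, smul_eq_mul] at h
  rw [← h]
  exact integral_congr_ae (.of_forall fun t => norm_of_nonneg (by positivity))

lemma exists_pos_mul_lt_div {a b : ℝ} (hab : a < 0 ∨ 0 < b) : ∃ η : ℝ, 0 < η ∧ a * η < b / η := by
  suffices h : ∃ η : ℝ, 0 < η ∧ a * η ^ 2 < b by
    obtain ⟨η, hη, h⟩ := h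
    exact ⟨η, hη, by rw [lt_div_iff₀ hη]; linarith⟩
  suffices h : ∃ x : ℝ, 0 < x ∧ a * x < b by
    obtain ⟨x, hx, h⟩ := h
    exact ⟨√x, sqrt_pos.mpr hx, by rwa [sq_sqrt hx.le]⟩
  rcases hab with ha | hb
  · refine ⟨(|b| + 1) / -a, div_pos (by positivity) (by linarith), ?_⟩
    have : a * ((|b| + 1) / -a) = -(|b| + 1) := by
      have := ha.ne
      field_simp
    linarith [neg_abs_le b]
  · refine ⟨b / (|a| + 1), by positivity, ?_⟩
    rw [← mul_div_assoc, div_lt_iff₀ (by positivity)]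
    nlinarith [le_abs_self a]

/-- If `(a, b)` lies outside the closed quadrant `{a ≥ 0, b ≤ 0}`, then there
is an `H¹₊(ℝ)` function whose integral against `e^{i(at + b/t)}` is nonzero. -/
theorem stmt_6 (a b : ℝ) (hab : a < 0 ∨ 0 < b) :
    ∃ f : ℝ → ℂ, Integrable f ∧
      (∀ y : ℝ, 0 ≤ y → ∫ t : ℝ, Complex.exp (Complex.I * y * t) * f t = 0) ∧
      (∫ t : ℝ, Complex.exp (Complex.I * (a * t + b / t)) * f t) ≠ 0 := by
  obtain ⟨η, hη, hlt⟩ := exists_pos_mul_lt_div hab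
  have ha : a⁺ - a⁻ = a := posPart_sub_negPart a
  have hb : b⁺ - b⁻ = b := posPart_sub_negPart b
  set A : ℝ := rexp (-(a⁻ * η + b⁺ / η)) with hA
  set k : ℝ → ℂ := fun t => ((1 + (t / η) ^ 2)⁻¹ : ℝ)
  have hint : ∀ α β : ℝ, Integrable fun t : ℝ =>
      Complex.exp (Complex.I * (α * t - β / t)) * k t :=
    fun α β => integrable_exp_mul_cauchy α β hη
  have hmul : ∀ α β γ δ t : ℝ, Complex.exp (Complex.I * (α * t - β / t)) *
      (Complex.exp (Complex.I * (γ * t - δ / t)) * k t) =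
      Complex.exp (Complex.I * ((α + γ : ℝ) * t - (β + δ : ℝ) / t)) * k t := by
    intro α β γ δ t
    rw [← mul_assoc, ← Complex.exp_add]
    congr 2
    push_cast
    ring
  have hpair : ∀ α β : ℝ, ∫ t : ℝ, Complex.exp (Complex.I * (α * t - β / t)) *
      (Complex.exp (Complex.I * ((a⁻ : ℝ) * t - (b⁺ : ℝ) / t)) * k t - A * k t) =
      (∫ t : ℝ, Complex.exp (Complex.I * ((α + a⁻ : ℝ) * t - (β + b⁺ : ℝ) / t)) * k t) -
        A * ∫ t : ℝ, Complex.exp (Complex.I * (α * t - β / t)) * k t := by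
    intro α β
    rw [← integral_const_mul, ← integral_sub (hint _ _) ((hint _ _).const_mul _)]
    refine integral_congr_ae (.of_forall fun t => ?_)
    linear_combination hmul α β a⁻ b⁺ t
  refine ⟨fun t => Complex.exp (Complex.I * ((a⁻ : ℝ) * t - (b⁺ : ℝ) / t)) * k t - A * k t,
    ?_, ?_, ?_⟩
  · have h₀ := hint 0 0
    simp only [Complex.ofReal_zero, zero_mul, zero_div, sub_zero, mul_zero, Complex.exp_zero,
      one_mul] at h₀
    exact (hint _ _).sub (h₀.const_mul _)
  · intro y hy
    have h := hpair y 0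
    rw [integral_exp_mul_cauchy (by positivity) (by positivity) hη,
      integral_exp_mul_cauchy hy le_rfl hη] at h
    have hexp : rexp (-((y + a⁻) * η + (0 + b⁺) / η)) = A * rexp (-(y * η + 0 / η)) := by
      rw [hA, ← Real.exp_add]
      congr 1
      ring
    rw [hexp] at h
    push_cast at h
    calc _ = _ := integral_congr_ae (.of_forall fun t => ?_)
      _ = _ := h
      _ = 0 := by ring
    simp [mul_assoc]
  · have h := hpair a (-b)
    have ha' : a + a⁻ = a⁺ := by linarith
    have hb' : -b + b⁺ = b⁻ := by linarith
    rw [ha', hb', integral_exp_mul_cauchy (by positivity) (by positivity) hη] at h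
    simp only [Complex.ofReal_neg, neg_div, sub_neg_eq_add] at h
    rw [h]
    intro hzero
    have hle := norm_integral_exp_mul_cauchy_le a (-b) hη
    simp only [Complex.ofReal_neg, neg_div, sub_neg_eq_add] at hle
    have hnorm := congrArg norm (sub_eq_zero.mp hzero)
    rw [norm_mul, norm_mul, norm_mul, Complex.norm_real, Complex.norm_real, Complex.norm_real,
      Complex.norm_real, norm_of_nonneg hη.le, norm_of_nonneg pi_pos.le,
      norm_of_nonneg (Real.exp_pos _).le, norm_of_nonneg (Real.exp_pos _).le] at hnorm
    have hAB : A < rexp (-(a⁺ * η + b⁻ / η)) := by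
      rw [hA, Real.exp_lt_exp]
      rw [← ha, ← hb, sub_mul, sub_div] at hlt
      linarith
    have hpos : 0 < η * π := by positivity
    have hApos : 0 < A := Real.exp_pos _
    nlinarith [mul_le_mul_of_nonneg_left hle hApos.le]
end

section
/- Fix a positive real number β, and let (a, b) ∈ ℝ² be a point that is neither of the form (m, 0) with m a nonnegative integer nor of the form (0, βn) with n a positive integer. Then there exists f ∈ L¹(ℝ, ℂ) such that ∫_ℝ e^{iπmt} f(t) dt = 0 for every integer m ≥ 0, ∫_ℝ e^{iπβn/t} f(t) dt = 0 for every integer n ≥ 1, and ∫_ℝ e^{iπ(at + b/t)} f(t) dt ≠ 0. -/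
open MeasureTheory Real
open Filter Set Topology

/-- Coefficients of the entire function `x ↦ J₁(2√x)/√x`. -/
noncomputable def besselCoeff (j : ℕ) : ℝ := (-1) ^ j / (j.factorial * (j + 1).factorial)

/-- The entire function `x ↦ J₁(2√x)/√x`, restricted to the real line. -/
noncomputable def besselKernel (x : ℝ) : ℝ := ∑' j : ℕ, besselCoeff j * x ^ j

lemma besselKernel_zero : besselKernel 0 = 1 := by
  rw [besselKernel, tsum_eq_single 0]
  · simp [besselCoeff]
  · intro j hj
    simp [hj]

lemma analyticOnNhd_besselKernel : AnalyticOnNhd ℝ besselKernel univ := by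
  have hr : (FormalMultilinearSeries.ofScalars ℝ besselCoeff).radius = ⊤ := by
    apply FormalMultilinearSeries.ofScalars_radius_eq_top_of_tendsto
    · filter_upwards with n
      simp [besselCoeff, Nat.factorial_ne_zero]
    · have h : Tendsto (fun n : ℕ => 1 / ((n : ℝ) + 1)) atTop (𝓝 0) :=
        tendsto_one_div_add_atTop_nhds_zero_nat
      refine squeeze_zero (fun n => by positivity) (fun n => ?_) h
      simp only [besselCoeff, norm_div, norm_pow, norm_neg, norm_one, one_pow, norm_mul,
        Nat.factorial_succ, Nat.succ_eq_add_one]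
      simp only [RCLike.norm_natCast]
      push_cast
      have h2 : (0 : ℝ) < n.factorial := by positivity
      rw [show (1 / (((n : ℝ) + 1) * n.factorial * (((n : ℝ) + 1 + 1) * ((n + 1) * n.factorial))) /
        (1 / (n.factorial * ((n + 1) * n.factorial)))) = 1 / (n + 1) * (1 / (n + 2)) by
          field_simp; ring]
      exact mul_le_of_le_one_right (by positivity) (by rw [div_le_one (by positivity)]; linarith)
  have h := FormalMultilinearSeries.hasFPowerSeriesOnBall
    (FormalMultilinearSeries.ofScalars ℝ besselCoeff) (by rw [hr]; simp)
  have e : (FormalMultilinearSeries.ofScalars ℝ besselCoeff).sum = besselKernel := by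
    funext x
    exact FormalMultilinearSeries.ofScalars_sum_eq besselCoeff x
  rw [hr, e] at h
  simpa using h.analyticOnNhd

lemma continuous_besselKernel : Continuous besselKernel :=
  continuousOn_univ.1 analyticOnNhd_besselKernel.continuousOn

lemma integrableOn_pow_mul_cexp_neg_mul {p : ℂ} (hp : 0 < p.re) (n : ℕ) :
    IntegrableOn (fun u : ℝ => (u : ℂ) ^ n * Complex.exp (-p * u)) (Ioi 0) := by
  have h := integrableOn_rpow_mul_exp_neg_mul_rpow (p := 1) (s := n) (b := p.re)
    (by have : (0 : ℝ) ≤ n := n.cast_nonneg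
        linarith) one_pos hp
  refine h.mono' (by fun_prop) ?_
  filter_upwards [ae_restrict_mem measurableSet_Ioi] with u hu
  simp [Complex.norm_exp, abs_of_pos (mem_Ioi.1 hu)]

lemma integral_pow_mul_cexp_neg_mul {p : ℂ} (hp : 0 < p.re) (n : ℕ) :
    ∫ u in Ioi (0 : ℝ), (u : ℂ) ^ n * Complex.exp (-p * u) = n.factorial / p ^ (n + 1) := by
  have hp0 : p ≠ 0 := by rintro rfl; simp at hp
  induction n with
  | zero =>
    have := integral_exp_mul_complex_Ioi (a := -p) (by simpa using hp) 0
    simpa using this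
  | succ n ih =>
    have hlim : Tendsto (fun u : ℝ => -((u : ℂ) ^ (n + 1) * Complex.exp (-p * u)) / p) atTop
        (𝓝 (-0 / p)) := by
      refine Tendsto.div_const (Tendsto.neg ?_) p
      rw [tendsto_zero_iff_norm_tendsto_zero]
      have h1 := tendsto_rpow_mul_exp_neg_mul_atTop_nhds_zero (n + 1 : ℝ) p.re hp
      refine h1.congr' ?_
      filter_upwards [eventually_gt_atTop 0] with u hu
      rw [norm_mul, norm_pow, Complex.norm_real, Complex.norm_exp, Real.norm_of_nonneg hu.le]
      norm_cast
      simp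
    have h := integral_Ioi_of_hasDerivAt_of_tendsto' (a := 0)
      (f := fun u : ℝ => -((u : ℂ) ^ (n + 1) * Complex.exp (-p * u)) / p)
      (f' := fun u : ℝ => (u : ℂ) ^ (n + 1) * Complex.exp (-p * u) -
        ((n + 1) / p) * ((u : ℂ) ^ n * Complex.exp (-p * u))) ?_ ?_ hlim
    · rw [integral_sub (integrableOn_pow_mul_cexp_neg_mul hp _)
        ((integrableOn_pow_mul_cexp_neg_mul hp _).const_mul _), integral_const_mul, ih] at h
      simp only [Complex.ofReal_zero, ne_eq, Nat.add_eq_zero_iff, one_ne_zero, and_false,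
        not_false_eq_true, zero_pow, zero_mul, neg_zero, zero_div, sub_zero] at h
      rw [sub_eq_zero.1 h, Nat.factorial_succ]
      push_cast
      field_simp
      ring
    · intro u _
      have h1 : HasDerivAt (fun u : ℝ => (u : ℂ) ^ (n + 1)) ((n + 1) * (u : ℂ) ^ n) u := by
        simpa using (hasDerivAt_pow (n + 1) (u : ℂ)).comp_ofReal
      have h2 : HasDerivAt (fun u : ℝ => Complex.exp (-p * u))
          (Complex.exp (-p * u) * (-p)) u := by
        simpa using (((hasDerivAt_id (u : ℂ)).const_mul (-p)).cexp).comp_ofReal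
      convert! ((h1.mul h2).neg.div_const p) using 1
      field_simp
      ring
    · exact (integrableOn_pow_mul_cexp_neg_mul hp _).sub
        ((integrableOn_pow_mul_cexp_neg_mul hp _).const_mul _)

lemma summable_integral_norm_besselTerm {p : ℂ} (hp : 0 < p.re) (a : ℝ) :
    Summable fun j : ℕ => ∫ u in Ioi (0 : ℝ),
      ‖((besselCoeff j * a ^ j : ℝ) : ℂ) * ((u : ℂ) ^ j * Complex.exp (-p * u))‖ := by
  have h (j : ℕ) : ∫ u in Ioi (0 : ℝ),
      ‖((besselCoeff j * a ^ j : ℝ) : ℂ) * ((u : ℂ) ^ j * Complex.exp (-p * u))‖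
      = |besselCoeff j| * |a| ^ j * (j.factorial / p.re ^ (j + 1)) := by
    have h1 := integral_pow_mul_cexp_neg_mul (p := p.re) (by simpa using hp) j
    simp_rw [norm_mul]
    rw [integral_const_mul]
    congr 1
    · simp
    · rw [← Complex.ofReal_inj, ← integral_complex_ofReal]
      push_cast
      rw [← h1]
      refine setIntegral_congr_fun measurableSet_Ioi fun u hu => ?_
      simp [Complex.norm_exp, abs_of_pos (mem_Ioi.1 hu)]
  simp_rw [h]
  refine ((Real.summable_pow_div_factorial (|a| / p.re)).mul_right (1 / p.re)).of_nonneg_of_le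
    (fun j => by positivity) fun j => ?_
  have h1 : |besselCoeff j| * j.factorial ≤ 1 / j.factorial := by
    simp only [besselCoeff, abs_div, abs_pow, abs_neg, abs_one, one_pow, abs_mul, Nat.abs_cast]
    have : (1 : ℝ) ≤ j.factorial := by exact_mod_cast Nat.factorial_pos j
    have h3 : (j.factorial : ℝ) ≤ (j + 1).factorial := by
      exact_mod_cast Nat.factorial_le (Nat.le_succ j)
    rw [div_mul_eq_mul_div, div_le_div_iff₀ (by positivity) (by positivity)]
    nlinarith
  calc |besselCoeff j| * |a| ^ j * (j.factorial / p.re ^ (j + 1))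
      = (|besselCoeff j| * j.factorial) * (|a| ^ j / p.re ^ (j + 1)) := by ring
    _ ≤ (1 / j.factorial) * (|a| ^ j / p.re ^ (j + 1)) := by gcongr
    _ = _ := by rw [div_pow, pow_succ]; field_simp

lemma tsum_besselTerm (p : ℂ) (a u : ℝ) :
    ∑' j : ℕ, ((besselCoeff j * a ^ j : ℝ) : ℂ) * ((u : ℂ) ^ j * Complex.exp (-p * u))
      = (besselKernel (a * u) : ℂ) * Complex.exp (-p * u) := by
  simp_rw [← mul_assoc]
  rw [tsum_mul_right, besselKernel, Complex.ofReal_tsum]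
  congr 2
  funext j
  push_cast
  ring

lemma abs_besselKernel_mul_le (x y : ℝ) :
    |besselKernel (x * y)| ≤ Real.exp |x| * Real.exp |y| := by
  have h : HasSum (fun j : ℕ => Real.exp |x| * (|y| ^ j / j.factorial))
      (Real.exp |x| * Real.exp |y|) := by
    have := NormedSpace.expSeries_div_hasSum_exp (𝔸 := ℝ) |y|
    rw [← Real.exp_eq_exp_ℝ] at this
    exact this.mul_left _
  rw [← Real.norm_eq_abs]
  refine tsum_of_norm_bounded h fun j => ?_
  have h1 := Real.pow_div_factorial_le_exp |x| (abs_nonneg x) j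
  have h3 : (j.factorial : ℝ) ≤ (j + 1).factorial := by
    exact_mod_cast Nat.factorial_le (Nat.le_succ j)
  calc ‖besselCoeff j * (x * y) ^ j‖
      = |x| ^ j / (j + 1).factorial * (|y| ^ j / j.factorial) := by
        simp only [besselCoeff, norm_div, norm_pow, norm_neg, norm_one, one_pow, norm_mul,
          RCLike.norm_natCast, Real.norm_eq_abs]
        rw [mul_pow]
        field_simp
    _ ≤ |x| ^ j / j.factorial * (|y| ^ j / j.factorial) := by gcongr
    _ ≤ _ := by gcongr

lemma integrableOn_besselKernel_mul_cexp {p : ℂ} (hp : 0 < p.re) (a : ℝ) :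
    IntegrableOn (fun u : ℝ => (besselKernel (a * u) : ℂ) * Complex.exp (-p * u)) (Ioi 0) := by
  have hc : 0 < p.re / 2 := by positivity
  refine Integrable.mono' ((integrableOn_exp_mul_Ioi (a := -(p.re / 2)) (by linarith) 0).const_mul
    (Real.exp |a / (p.re / 2)|)) ?_ ?_
  · have := continuous_besselKernel
    exact (by fun_prop : Continuous _).aestronglyMeasurable
  · filter_upwards [ae_restrict_mem measurableSet_Ioi] with u hu
    have h := abs_besselKernel_mul_le (a / (p.re / 2)) (p.re / 2 * u)
    rw [show a / (p.re / 2) * (p.re / 2 * u) = a * u by field_simp,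
      abs_of_pos (mul_pos hc (mem_Ioi.1 hu))] at h
    rw [norm_mul, Complex.norm_real, Complex.norm_exp, Real.norm_eq_abs]
    calc |besselKernel (a * u)| * Real.exp ((-p * u).re)
        ≤ Real.exp |a / (p.re / 2)| * Real.exp (p.re / 2 * u) * Real.exp ((-p * u).re) := by gcongr
      _ = _ := by
        rw [mul_assoc, ← Real.exp_add]
        congr 2
        simp
        ring

/-- The Laplace transform of the Bessel kernel. -/
lemma cexp_neg_div_eq {p : ℂ} (hp : 0 < p.re) (a : ℝ) :
    Complex.exp (-a / p) = 1 - a * ∫ u in Ioi (0 : ℝ),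
      (besselKernel (a * u) : ℂ) * Complex.exp (-p * u) := by
  have hp0 : p ≠ 0 := by rintro rfl; simp at hp
  have h := hasSum_integral_of_summable_integral_norm
    (fun j => (integrableOn_pow_mul_cexp_neg_mul hp j).const_mul
      ((besselCoeff j * a ^ j : ℝ) : ℂ)) (summable_integral_norm_besselTerm hp a)
  simp_rw [tsum_besselTerm, integral_const_mul, integral_pow_mul_cexp_neg_mul hp] at h
  have h2 := (NormedSpace.expSeries_div_hasSum_exp (𝔸 := ℂ) (-a / p))
  rw [← Complex.exp_eq_exp_ℂ, ← hasSum_nat_add_iff' 1] at h2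
  have h3 := (h.mul_left (-a : ℂ)).unique (by
    convert! h2 using 1
    funext j
    have : (j.factorial : ℂ) ≠ 0 := by exact_mod_cast j.factorial_ne_zero
    have : ((j + 1).factorial : ℂ) ≠ 0 := by exact_mod_cast (j + 1).factorial_ne_zero
    simp only [besselCoeff]
    push_cast
    rw [div_pow, neg_pow (a : ℂ) (j + 1)]
    field_simp
    ring)
  simp only [Finset.range_one, Finset.sum_singleton, pow_zero, Nat.factorial_zero,
    Nat.cast_one, div_one] at h3
  linear_combination -h3

/-- Pairing `e^{ia/s}` with `g` in terms of the Fourier transform of `g`, for `a ≥ 0`. -/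
lemma integral_cexp_div_mul_of_nonneg {g : ℝ → ℂ} (hg : Integrable g) {a : ℝ} (ha : 0 ≤ a)
    (hsupp : HasCompactSupport fun u : ℝ => ∫ s : ℝ, Complex.exp (-Complex.I * u * s) * g s) :
    ∫ s : ℝ, Complex.exp (Complex.I * a / s) * g s = (∫ s, g s) - a * ∫ u in Ioi (0 : ℝ),
      besselKernel (a * u) * ∫ s : ℝ, Complex.exp (-Complex.I * u * s) * g s := by
  have hre (δ s : ℝ) : ((δ : ℂ) + Complex.I * s).re = δ := by simp
  have hcont : Continuous fun u : ℝ => ∫ s : ℝ, Complex.exp (-Complex.I * u * s) * g s := by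
    refine continuous_of_dominated (bound := fun s => ‖g s‖) (fun u => ?_) (fun u => ?_)
      hg.norm ?_
    · exact (by fun_prop : Continuous fun s : ℝ =>
        Complex.exp (-Complex.I * u * s)).aestronglyMeasurable.mul hg.1
    · filter_upwards with s
      simp [Complex.norm_exp]
    · filter_upwards with s
      fun_prop
  have hK := continuous_besselKernel
  have key (δ : ℝ) (hδ : 0 < δ) :
      ∫ s : ℝ, Complex.exp (-a / (δ + Complex.I * s)) * g s = (∫ s, g s) - a *
        ∫ u in Ioi (0 : ℝ), Complex.exp (-δ * u) *
          (besselKernel (a * u) * ∫ s : ℝ, Complex.exp (-Complex.I * u * s) * g s) := by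
    have hint : Integrable (Function.uncurry fun (s u : ℝ) =>
        (besselKernel (a * u) : ℂ) * Complex.exp (-(δ + Complex.I * s) * u) * g s)
        (volume.prod (volume.restrict (Ioi 0))) := by
      have h := hg.mul_prod (integrableOn_besselKernel_mul_cexp (p := δ) (by simpa using hδ) a)
      refine h.mono ?_ ?_
      · refine AEStronglyMeasurable.mul ?_ hg.1.comp_fst
        exact (by fun_prop : Continuous fun z : ℝ × ℝ => (besselKernel (a * z.2) : ℂ) *
          Complex.exp (-(δ + Complex.I * z.1) * z.2)).aestronglyMeasurable
      · filter_upwards with z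
        simp [Function.uncurry, Complex.norm_exp, mul_comm]
    have h1 (s : ℝ) : Complex.exp (-a / (δ + Complex.I * s)) * g s = g s - a *
        ∫ u in Ioi (0 : ℝ),
          (besselKernel (a * u) : ℂ) * Complex.exp (-(δ + Complex.I * s) * u) * g s := by
      rw [cexp_neg_div_eq (by rwa [hre]), integral_mul_const]
      ring
    simp_rw [h1]
    have hint' : Integrable fun s : ℝ => ∫ u in Ioi (0 : ℝ),
        (besselKernel (a * u) : ℂ) * Complex.exp (-(δ + Complex.I * s) * u) * g s :=
      hint.integral_prod_left
    rw [integral_sub hg (hint'.const_mul _), integral_const_mul,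
      integral_integral_swap hint]
    congr 2
    refine integral_congr_ae (Eventually.of_forall fun u => ?_)
    simp only
    rw [← integral_const_mul, ← integral_const_mul]
    refine integral_congr_ae (Eventually.of_forall fun s => ?_)
    simp only
    rw [show -(δ + Complex.I * s) * u = -δ * u + -Complex.I * u * s by ring, Complex.exp_add]
    ring
  have hL : Tendsto (fun δ : ℝ => ∫ s : ℝ, Complex.exp (-a / (δ + Complex.I * s)) * g s)
      (𝓝[>] 0) (𝓝 (∫ s : ℝ, Complex.exp (Complex.I * a / s) * g s)) := by
    refine tendsto_integral_filter_of_dominated_convergence (fun s => ‖g s‖) ?_ ?_ hg.norm ?_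
    · filter_upwards [self_mem_nhdsWithin] with δ hδ
      refine AEStronglyMeasurable.mul (Continuous.aestronglyMeasurable ?_) hg.1
      have (s : ℝ) : (δ : ℂ) + Complex.I * s ≠ 0 := fun h => by
        have := hre δ s
        rw [h] at this
        exact (mem_Ioi.1 hδ).ne this
      fun_prop (disch := assumption)
    · filter_upwards [self_mem_nhdsWithin] with δ hδ
      filter_upwards with s
      rw [norm_mul, Complex.norm_exp]
      refine mul_le_of_le_one_left (norm_nonneg _) (Real.exp_le_one_iff.2 ?_)
      rw [Complex.div_re]
      have := mem_Ioi.1 hδ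
      have hnn : 0 ≤ a * δ / Complex.normSq (δ + Complex.I * s) :=
        div_nonneg (mul_nonneg ha this.le) (Complex.normSq_nonneg _)
      simpa [neg_div] using hnn
    · filter_upwards [compl_mem_ae_iff.2 (measure_singleton (0 : ℝ))] with s hs
      have hs : (s : ℂ) ≠ 0 := by simpa using hs
      refine Tendsto.mul_const _ ?_
      have : ContinuousAt (fun δ : ℝ => Complex.exp (-a / (δ + Complex.I * s))) 0 := by
        have : ((0 : ℝ) : ℂ) + Complex.I * s ≠ 0 := by simpa using hs
        fun_prop (disch := assumption)
      have h := this.tendsto.mono_left (nhdsWithin_le_nhds (s := Ioi 0))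
      convert! h using 3
      simp
      field_simp
      simp
  have hR : Tendsto (fun δ : ℝ => (∫ s, g s) - a *
        ∫ u in Ioi (0 : ℝ), Complex.exp (-δ * u) *
          (besselKernel (a * u) * ∫ s : ℝ, Complex.exp (-Complex.I * u * s) * g s))
      (𝓝[>] 0) (𝓝 ((∫ s, g s) - a * ∫ u in Ioi (0 : ℝ),
        besselKernel (a * u) * ∫ s : ℝ, Complex.exp (-Complex.I * u * s) * g s)) := by
    refine Tendsto.const_sub _ (Tendsto.const_mul _ ?_)
    have hc : Continuous fun u : ℝ => (besselKernel (a * u) : ℂ) *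
        ∫ s : ℝ, Complex.exp (-Complex.I * u * s) * g s := by fun_prop
    refine tendsto_integral_filter_of_dominated_convergence (fun u => ‖(besselKernel (a * u) : ℂ) *
        ∫ s : ℝ, Complex.exp (-Complex.I * u * s) * g s‖) ?_ ?_ ?_ ?_
    · filter_upwards with δ
      exact (by fun_prop : Continuous _).aestronglyMeasurable
    · filter_upwards [self_mem_nhdsWithin] with δ hδ
      filter_upwards [ae_restrict_mem measurableSet_Ioi] with u hu
      rw [norm_mul, Complex.norm_exp]
      refine mul_le_of_le_one_left (norm_nonneg _) (Real.exp_le_one_iff.2 ?_)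
      have := mul_pos (mem_Ioi.1 hδ) (mem_Ioi.1 hu)
      simpa using this.le
    · exact (hc.integrable_of_hasCompactSupport hsupp.mul_left).norm.integrableOn
    · filter_upwards with u
      have : Continuous (fun δ : ℝ => Complex.exp (-δ * u)) := by fun_prop
      have h := (this.tendsto 0).mono_left (nhdsWithin_le_nhds (s := Ioi 0))
      simpa using h.mul_const _
  refine tendsto_nhds_unique hL (hR.congr' ?_)
  filter_upwards [self_mem_nhdsWithin] with δ hδ
  exact (key δ hδ).symm

lemma exists_integrable_fourier_eq_bump {y₀ : ℝ} {U : Set ℝ} (hU : U ∈ 𝓝 y₀) :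
    ∃ (g : ℝ → ℂ) (φ : ℝ → ℝ), Integrable g ∧ Continuous φ ∧ HasCompactSupport φ ∧
      (∀ y, 0 ≤ φ y) ∧ φ y₀ = 1 ∧ (∀ y, φ y ≠ 0 → y ∈ U) ∧
      ∀ y : ℝ, ∫ s : ℝ, Complex.exp (Complex.I * π * y * s) * g s = φ y := by
  obtain ⟨φ, hsub, hcs, hsm, hrange, hone⟩ := exists_contDiff_tsupport_subset (n := ⊤) hU
  have hcs2 : HasCompactSupport fun v : ℝ => (φ (2 * v) : ℂ) := by
    have h := hcs.comp_homeomorph (Homeomorph.mulLeft₀ (2 : ℝ) two_ne_zero)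
    exact h.comp_left (g := fun x : ℝ => (x : ℂ)) rfl
  have hsm2 : ContDiff ℝ ((⊤ : ℕ∞) : WithTop ℕ∞) fun v : ℝ => (φ (2 * v) : ℂ) :=
    Complex.ofRealCLM.contDiff.comp (hsm.comp (contDiff_const.mul contDiff_id))
  let Φ : SchwartzMap ℝ ℂ := hcs2.toSchwartzMap hsm2
  refine ⟨(FourierTransform.fourier Φ : SchwartzMap ℝ ℂ), φ, SchwartzMap.integrable _,
    hsm.continuous, hcs, fun y => (hrange (mem_range_self y)).1, hone,
    fun y hy => hsub (subset_tsupport φ hy), fun y => ?_⟩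
  have h : FourierTransformInv.fourierInv (FourierTransform.fourier Φ) = Φ :=
    FourierTransform.fourierInv_fourier_eq Φ
  have h' := congrArg (fun F : SchwartzMap ℝ ℂ => F (y / 2)) h
  simp only [SchwartzMap.fourierInv_coe, Real.fourierInv_eq'] at h'
  have e : Φ (y / 2) = φ y := by
    change ((φ (2 * (y / 2)) : ℝ) : ℂ) = φ y
    congr 2
    ring
  rw [← e, ← h']
  refine integral_congr_ae (Eventually.of_forall fun s => ?_)
  simp only [smul_eq_mul]
  congr 2
  simp
  ring

lemma integral_cexp_mul_of_fourier_eq {g : ℝ → ℂ} {φ : ℝ → ℝ} (hg : Integrable g)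
    (hφ : HasCompactSupport φ)
    (hgφ : ∀ y : ℝ, ∫ s : ℝ, Complex.exp (Complex.I * π * y * s) * g s = φ y)
    {c : ℝ} (hc : 0 ≤ c) (b : ℝ) :
    ∫ s : ℝ, Complex.exp (Complex.I * π * (c / s + b * s)) * g s =
      ((φ b - π * c * ∫ u in Ioi (0 : ℝ), besselKernel (π * c * u) * φ (b - u / π) : ℝ) : ℂ) := by
  have hg' : Integrable fun s : ℝ => Complex.exp (Complex.I * π * b * s) * g s := by
    refine hg.norm.mono' ((by fun_prop : Continuous fun s : ℝ =>
      Complex.exp (Complex.I * π * b * s)).aestronglyMeasurable.mul hg.1) ?_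
    filter_upwards with s
    simp [Complex.norm_exp]
  have hF (u : ℝ) : ∫ s : ℝ, Complex.exp (-Complex.I * u * s) *
      (Complex.exp (Complex.I * π * b * s) * g s) = φ (b - u / π) := by
    rw [← hgφ]
    refine integral_congr_ae (Eventually.of_forall fun s => ?_)
    simp only
    rw [← mul_assoc, ← Complex.exp_add]
    congr 2
    have : (π : ℂ) ≠ 0 := by exact_mod_cast Real.pi_ne_zero
    push_cast
    field_simp
    ring
  have hsupp : HasCompactSupport fun u : ℝ => (φ (b - u / π) : ℂ) := by
    refine HasCompactSupport.comp_left (g := fun x : ℝ => (x : ℂ)) ?_ rfl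
    simp_rw [div_eq_mul_inv]
    exact hφ.comp_homeomorph
      ((Homeomorph.mulRight₀ π⁻¹ (inv_ne_zero Real.pi_ne_zero)).trans (Homeomorph.subLeft b))
  have h := integral_cexp_div_mul_of_nonneg hg' (mul_nonneg Real.pi_pos.le hc) (by
    simpa only [hF] using hsupp)
  simp_rw [hF, hgφ] at h
  push_cast
  rw [← integral_complex_ofReal]
  push_cast at h ⊢
  rw [← h]
  refine integral_congr_ae (Eventually.of_forall fun s => ?_)
  simp only
  rw [← mul_assoc, ← Complex.exp_add]
  congr 2
  ring

lemma integral_cexp_mul_of_fourier_eq_signed {g : ℝ → ℂ} {φ : ℝ → ℝ} (hg : Integrable g)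
    (hφ : HasCompactSupport φ)
    (hgφ : ∀ y : ℝ, ∫ s : ℝ, Complex.exp (Complex.I * π * y * s) * g s = φ y)
    {σ : ℝ} (hσ : σ = 1 ∨ σ = -1) {c : ℝ} (hc : 0 ≤ c) (b : ℝ) :
    ∫ s : ℝ, Complex.exp (Complex.I * π * ((σ * c : ℝ) / s + b * s)) * g s =
      ((φ b - π * c * ∫ u in Ioi (0 : ℝ),
        besselKernel (π * c * u) * φ (b - σ * u / π) : ℝ) : ℂ) := by
  rcases hσ with rfl | rfl
  · simpa using integral_cexp_mul_of_fourier_eq hg hφ hgφ hc b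
  · have h := integral_cexp_mul_of_fourier_eq (g := fun s => g (-s)) (φ := fun y => φ (-y))
      hg.comp_neg (hφ.comp_homeomorph (Homeomorph.neg ℝ)) (fun y => ?_) hc (-b)
    · rw [← integral_neg_eq_self]
      convert! h using 6 with s
      · push_cast
        ring
      · rw [neg_neg]
      · congr 2
        ring
    · rw [← hgφ, ← integral_neg_eq_self]
      simp

/-- Test functions whose transform vanishes on `[0, ∞) × {0}` and on `{0} × αℕ`. -/
lemma exists_integrable_annihilator {α : ℝ} (hα : 0 < α) (a b : ℝ)
    (h : a < 0 ∨ (0 < b ∧ (a ≠ 0 ∨ ∀ n : ℕ, b ≠ α * n))) :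
    ∃ g : ℝ → ℂ, Integrable g ∧
      (∀ x : ℝ, 0 ≤ x → ∫ s : ℝ, Complex.exp (Complex.I * π * x / s) * g s = 0) ∧
      (∀ n : ℕ, ∫ s : ℝ, Complex.exp (Complex.I * π * α * n * s) * g s = 0) ∧
      (∫ s : ℝ, Complex.exp (Complex.I * π * (a / s + b * s)) * g s) ≠ 0 := by
  suffices H : ∃ y₀ : ℝ, ∃ U ∈ 𝓝 y₀, (∀ y ∈ U, 0 < y ∧ Real.sin (π * y / α) ≠ 0) ∧
      ∀ (g : ℝ → ℂ) (φ : ℝ → ℝ), Integrable g → Continuous φ → HasCompactSupport φ →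
        (∀ y, 0 ≤ φ y) → φ y₀ = 1 → (∀ y, φ y ≠ 0 → y ∈ U) →
        (∀ y : ℝ, ∫ s : ℝ, Complex.exp (Complex.I * π * y * s) * g s = φ y) →
        (∫ s : ℝ, Complex.exp (Complex.I * π * (a / s + b * s)) * g s) ≠ 0 by
    obtain ⟨y₀, U, hU, hUpos, hne⟩ := H
    obtain ⟨g, φ, hg, hφc, hφ, hφ0, hone, hsub, hgφ⟩ := exists_integrable_fourier_eq_bump hU
    refine ⟨g, hg, fun x hx => ?_, fun n => ?_, hne g φ hg hφc hφ hφ0 hone hsub hgφ⟩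
    · have hz (y : ℝ) (hy : y ≤ 0) : φ y = 0 := by
        by_contra hy'
        exact absurd (hUpos y (hsub y hy')).1 hy.not_gt
      have h := integral_cexp_mul_of_fourier_eq hg hφ hgφ hx 0
      rw [hz 0 le_rfl, setIntegral_eq_zero_of_forall_eq_zero, mul_zero, sub_zero,
        Complex.ofReal_zero] at h
      · rw [← h]
        refine integral_congr_ae (Eventually.of_forall fun s => ?_)
        simp only
        congr 2
        ring
      · intro u hu
        rw [hz, mul_zero]
        have := div_pos (mem_Ioi.1 hu) Real.pi_pos
        linarith
    · have h := hgφ (α * n)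
      have hz : φ (α * n) = 0 := by
        by_contra hy'
        refine (hUpos _ (hsub _ hy')).2 ?_
        rw [show π * (α * n) / α = n * π by field_simp]
        exact Real.sin_nat_mul_pi n
      rw [hz] at h
      simpa [mul_assoc] using h
  have hsin : Continuous fun y : ℝ => Real.sin (π * y / α) := by fun_prop
  rcases eq_or_ne a 0 with rfl | ha
  · obtain ⟨hb, hbn⟩ : 0 < b ∧ ∀ n : ℕ, b ≠ α * n := by simpa using h
    refine ⟨b, {y | 0 < y ∧ Real.sin (π * y / α) ≠ 0}, ?_, fun y hy => hy, ?_⟩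
    · refine ((isOpen_lt continuous_const continuous_id).inter
        (isOpen_ne_fun hsin continuous_const)).mem_nhds ⟨hb, fun h0 => ?_⟩
      obtain ⟨n, hn⟩ := Real.sin_eq_zero_iff.1 h0
      have hn' : b = α * n := by
        field_simp at hn
        linarith
      have hnpos : 0 < n := by
        rw [hn'] at hb
        exact_mod_cast (pos_iff_pos_of_mul_pos hb).1 hα
      lift n to ℕ using hnpos.le
      exact hbn n (by exact_mod_cast hn')
    · intro g φ _ _ _ _ hone _ hgφ
      have h := hgφ b
      rw [hone] at h
      simp only [Complex.ofReal_zero, zero_div, zero_add, ← mul_assoc]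
      rw [h]
      simp
  obtain ⟨σ, c, hσ, hc, rfl⟩ : ∃ σ c : ℝ, (σ = 1 ∨ σ = -1) ∧ 0 < c ∧ a = σ * c := by
    rcases ha.lt_or_gt with ha | ha
    · exact ⟨-1, -a, Or.inr rfl, by linarith, by ring⟩
    · exact ⟨1, a, Or.inl rfl, ha, by ring⟩
  have hσ2 : σ * σ = 1 := by rcases hσ with rfl | rfl <;> norm_num
  let k : ℝ → ℝ := fun y => besselKernel (π * c * (π * (σ * (b - y))))
  have hk : AnalyticOnNhd ℝ k univ :=
    analyticOnNhd_besselKernel.comp (fun y _ => by fun_prop) (mapsTo_univ _ _)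
  have hkc : Continuous k := continuousOn_univ.1 hk.continuousOn
  let V : Set ℝ := {y | 0 < y ∧ 0 < σ * (b - y)}
  have hV : IsOpen V := (isOpen_lt continuous_const continuous_id).inter
    (isOpen_lt continuous_const (continuous_const.mul (continuous_const.sub continuous_id)))
  have hVne : V.Nonempty := by
    rcases hσ with rfl | rfl
    · have hb : 0 < b := by
        rcases h with h | h
        · linarith
        · exact h.1
      exact ⟨b / 2, by positivity, by linarith⟩
    · exact ⟨|b| + 1, by positivity, by have := le_abs_self b; linarith⟩
  obtain ⟨y₀, hy₀V, hy₀k, hy₀s⟩ : ∃ y₀ ∈ V, k y₀ ≠ 0 ∧ Real.sin (π * y₀ / α) ≠ 0 := by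
    by_contra! hcon
    obtain ⟨v, hv⟩ := hVne
    have hs : AnalyticOnNhd ℝ (fun y => Real.sin (π * y / α)) univ := fun y _ => by fun_prop
    have hprod : EqOn (fun y => k y * Real.sin (π * y / α)) 0 univ := by
      refine (hk.mul hs).eqOn_zero_of_preconnected_of_eventuallyEq_zero isPreconnected_univ
        (mem_univ v) ?_
      filter_upwards [hV.mem_nhds hv] with y hy
      by_cases hky : k y = 0
      · simp [hky]
      · simp [hcon y hy hky]
    rcases AnalyticOnNhd.eq_zero_or_eq_zero_of_mul_eq_zero hk hs (fun y hy => hprod hy)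
      isPreconnected_univ with h0 | h0
    · have := h0 b (mem_univ b)
      simp [k, besselKernel_zero] at this
    · have := h0 (α / 2) (mem_univ _)
      rw [show π * (α / 2) / α = π / 2 by field_simp] at this
      simp at this
  refine ⟨y₀, {y | y ∈ V ∧ Real.sin (π * y / α) ≠ 0 ∧ 0 < k y₀ * k y}, ?_,
    fun y hy => ⟨hy.1.1, hy.2.1⟩, ?_⟩
  · exact (hV.inter ((isOpen_ne_fun hsin continuous_const).inter
      (isOpen_lt continuous_const (hkc.const_mul (k y₀))))).mem_nhds
      ⟨hy₀V, hy₀s, mul_self_pos.2 hy₀k⟩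
  intro g φ hg hφc hφ hφ0 hone hsub hgφ
  rw [integral_cexp_mul_of_fourier_eq_signed hg hφ hgφ hσ hc.le b]
  have hb : φ b = 0 := by
    by_contra hb
    have := (hsub b hb).1.2
    simp at this
  have hku (u : ℝ) : k (b - σ * u / π) = besselKernel (π * c * u) := by
    simp only [k]
    congr 2
    rw [show σ * (b - (b - σ * u / π)) = σ * σ * u / π by ring, hσ2]
    field_simp
  have hsub' (u : ℝ) (hu : φ (b - σ * u / π) ≠ 0) : 0 < u ∧ 0 < k y₀ * besselKernel (π * c * u) := by
    have h := hsub _ hu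
    refine ⟨?_, by simpa only [hku] using h.2.2⟩
    have h2 := h.1.2
    rw [show σ * (b - (b - σ * u / π)) = σ * σ * u / π by ring, hσ2, one_mul] at h2
    exact (div_pos_iff_of_pos_right Real.pi_pos).1 h2
  have hσ0 : σ ≠ 0 := by rintro rfl; simp at hσ2
  have hpos : 0 < ∫ u : ℝ, k y₀ * (besselKernel (π * c * u) * φ (b - σ * u / π)) := by
    have hK := continuous_besselKernel
    refine Continuous.integral_pos_of_hasCompactSupport_nonneg_nonzero
      (x := π * (σ * (b - y₀))) (by fun_prop) ?_ ?_ ?_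
    · have : HasCompactSupport fun u : ℝ => φ (b - σ * u / π) := by
        simp_rw [div_eq_mul_inv]
        exact hφ.comp_homeomorph ((Homeomorph.mulLeft₀ σ hσ0).trans
          ((Homeomorph.mulRight₀ π⁻¹ (inv_ne_zero Real.pi_ne_zero)).trans (Homeomorph.subLeft b)))
      exact this.mul_left.mul_left
    · intro u
      by_cases hu : φ (b - σ * u / π) = 0
      · simp [hu]
      · simp only [Pi.zero_apply]
        rw [← mul_assoc]
        exact mul_nonneg (hsub' u hu).2.le (hφ0 _)
    · have e : b - σ * (π * (σ * (b - y₀))) / π = y₀ := by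
        field_simp
        linear_combination (y₀ - b) * hσ2
      simp only [e, hone, mul_one]
      exact mul_ne_zero hy₀k hy₀k
  rw [integral_const_mul] at hpos
  rw [setIntegral_eq_integral_of_forall_compl_eq_zero, hb, zero_sub, Complex.ofReal_ne_zero,
    neg_ne_zero]
  · exact mul_ne_zero (by positivity) (right_ne_zero_of_mul hpos.ne')
  · intro u hu
    by_contra h0
    exact hu (hsub' u (right_ne_zero_of_mul h0)).1

lemma integral_inv_sq_smul_comp_inv (F : ℝ → ℂ) :
    ∫ t : ℝ, |-(t ^ 2)⁻¹| • F t⁻¹ = ∫ s, F s := by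
  have himg : (fun t : ℝ => t⁻¹) '' {0}ᶜ = {0}ᶜ := by
    ext s
    simp
  have h := integral_image_eq_integral_abs_deriv_smul (s := {(0 : ℝ)}ᶜ) (f := fun t => t⁻¹)
    (f' := fun t => -(t ^ 2)⁻¹) (measurableSet_singleton 0).compl
    (fun t ht => (hasDerivAt_inv ht).hasDerivWithinAt) inv_injective.injOn F
  rw [himg] at h
  simpa [restrict_compl_singleton] using h.symm

lemma integrable_inv_sq_smul_comp_inv {F : ℝ → ℂ} (hF : Integrable F) :
    Integrable fun t : ℝ => |-(t ^ 2)⁻¹| • F t⁻¹ := by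
  have himg : (fun t : ℝ => t⁻¹) '' {0}ᶜ = {0}ᶜ := by
    ext s
    simp
  have h := integrableOn_image_iff_integrableOn_abs_deriv_smul (s := {(0 : ℝ)}ᶜ)
    (f := fun t => t⁻¹) (f' := fun t => -(t ^ 2)⁻¹) (measurableSet_singleton 0).compl
    (fun t ht => (hasDerivAt_inv ht).hasDerivWithinAt) inv_injective.injOn F
  rw [himg] at h
  simp only [IntegrableOn, restrict_compl_singleton] at h
  exact h.1 hF

/-- Time-like quarter lattice-cross (normalized `α = 1`, `M = 2π`): the
Zariski closure of `(ℤ≥0 × {0}) ∪ ({0} × βℤ≥1)` contains no extraneous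
points. -/
theorem stmt_7 (β : ℝ) (hβ : 0 < β) (a b : ℝ)
    (h1 : ¬ ∃ m : ℕ, a = m ∧ b = 0)
    (h2 : ¬ ∃ n : ℕ, 1 ≤ n ∧ a = 0 ∧ b = β * n) :
    ∃ f : ℝ → ℂ, Integrable f ∧
      (∀ m : ℕ, ∫ t : ℝ, Complex.exp (Complex.I * π * m * t) * f t = 0) ∧
      (∀ n : ℕ, 1 ≤ n → ∫ t : ℝ, Complex.exp (Complex.I * π * β * n / t) * f t = 0) ∧
      (∫ t : ℝ, Complex.exp (Complex.I * π * (a * t + b / t)) * f t) ≠ 0 := by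
  by_cases hcase : a < 0 ∨ (0 < b ∧ (a ≠ 0 ∨ ∀ n : ℕ, b ≠ β * n))
  · obtain ⟨g, hg, hx, hn, hne⟩ := exists_integrable_annihilator hβ a b hcase
    have hsub (E : ℝ → ℂ) : ∫ t : ℝ, E t * (|-(t ^ 2)⁻¹| • g t⁻¹) = ∫ s : ℝ, E s⁻¹ * g s := by
      rw [← integral_inv_sq_smul_comp_inv fun s : ℝ => E s⁻¹ * g s]
      refine integral_congr_ae (Eventually.of_forall fun t => ?_)
      simp only [inv_inv, mul_smul_comm]
    refine ⟨fun t => |-(t ^ 2)⁻¹| • g t⁻¹, integrable_inv_sq_smul_comp_inv hg,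
      fun m => ?_, fun n _ => ?_, ?_⟩
    · rw [hsub fun t => Complex.exp (Complex.I * π * m * t)]
      simpa [div_eq_mul_inv] using hx m m.cast_nonneg
    · rw [hsub fun t => Complex.exp (Complex.I * π * β * n / t)]
      simpa [div_eq_mul_inv] using hn n
    · rw [hsub fun t => Complex.exp (Complex.I * π * (a * t + b / t))]
      simpa [div_eq_mul_inv] using hne
  · have hcase' : b < 0 ∨ (0 < a ∧ (b ≠ 0 ∨ ∀ n : ℕ, a ≠ 1 * n)) := by
      push Not at hcase
      obtain ⟨ha, hb⟩ := hcase
      rcases lt_trichotomy b 0 with hb0 | rfl | hb0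
      · exact Or.inl hb0
      · have hne (m : ℕ) : a ≠ m := fun h => h1 ⟨m, h, rfl⟩
        refine Or.inr ⟨ha.lt_of_ne fun h => hne 0 (by simp [← h]), Or.inr fun n => ?_⟩
        simpa using hne n
      · obtain ⟨ha0, n, hn⟩ := hb hb0
        refine absurd ⟨n, Nat.one_le_iff_ne_zero.2 ?_, ha0, hn⟩ h2
        rintro rfl
        simp [hn] at hb0
    obtain ⟨g, hg, hx, hn, hne⟩ := exists_integrable_annihilator one_pos b a hcase'
    refine ⟨g, hg, fun m => by simpa using hn m, fun n _ => ?_, ?_⟩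
    · simpa [mul_assoc] using hx (β * n) (by positivity)
    · simpa [add_comm] using hne
end

section
/- For each ε > 0 and x ∈ ℝ, the integral G_ε(x) := (1/(2π)) ∫_ℝ e^{i/t + itx − ε|t|} dt converges absolutely. Let B(x) := ∑_{j=0}^∞ (−1)^j x^j / (j!·(j+1)!) for x ≥ 0 (so that B(x) = x^{−1/2} J₁(2√x), with J₁ the Bessel function). Then for every compactly supported C^∞ function φ : ℝ → ℂ, lim_{ε→0⁺} ∫_ℝ G_ε(x) φ(x) dx = φ(0) − ∫₀^∞ B(x) φ(x) dx. -/
open MeasureTheory Real Filter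

/-- The entire function `∑ (-1)^j x^j / (j! (j+1)!)`, equal to `x^{-1/2} J₁(2√x)` for `x > 0`. -/
noncomputable def besselB (x : ℝ) : ℝ :=
  ∑' j : ℕ, (-1 : ℝ) ^ j * x ^ j / ((j.factorial : ℝ) * ((j + 1).factorial : ℝ))

/-- The oscillatory integral `∫ e^{itx} φ(x) dx`. -/
noncomputable def oscInt (φ : ℝ → ℂ) (t : ℝ) : ℂ :=
  ∫ x : ℝ, Complex.exp (Complex.I * t * x) * φ x

lemma norm_besselB_term_le {δ : ℝ} (hδ : 0 < δ) (x : ℝ) (j : ℕ) :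
    ‖(-1 : ℝ) ^ j * x ^ j / ((j.factorial : ℝ) * ((j + 1).factorial : ℝ))‖ ≤
      exp δ⁻¹ * ((δ * |x|) ^ j / j.factorial) := by
  have h1 : δ⁻¹ ^ j / j.factorial ≤ exp δ⁻¹ := pow_div_factorial_le_exp _ (by positivity) j
  have h2 : (j.factorial : ℝ) ≤ (j + 1).factorial := by
    exact_mod_cast Nat.factorial_le (Nat.le_succ j)
  have hj : (0 : ℝ) < j.factorial := by positivity
  calc
    _ = |x| ^ j / (j.factorial * (j + 1).factorial) := by
      simp
    _ ≤ |x| ^ j / (j.factorial * j.factorial) := by gcongr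
    _ = (δ⁻¹ ^ j / j.factorial) * ((δ * |x|) ^ j / j.factorial) := by
      rw [mul_pow, inv_pow]; field_simp
    _ ≤ _ := by gcongr

lemma hasSum_mul_pow_div_factorial (c y : ℝ) :
    HasSum (fun j : ℕ => c * (y ^ j / j.factorial)) (c * exp y) := by
  rw [Real.exp_eq_exp_ℝ]
  exact (NormedSpace.expSeries_div_hasSum_exp y).mul_left c

lemma hasSum_besselB (x : ℝ) :
    HasSum (fun j : ℕ => (-1 : ℝ) ^ j * x ^ j / ((j.factorial : ℝ) * ((j + 1).factorial : ℝ)))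
      (besselB x) :=
  (Summable.of_norm_bounded (hasSum_mul_pow_div_factorial _ _).summable
    (norm_besselB_term_le one_pos x)).hasSum

lemma norm_besselB_le {δ : ℝ} (hδ : 0 < δ) (x : ℝ) :
    ‖besselB x‖ ≤ exp δ⁻¹ * exp (δ * |x|) :=
  tsum_of_norm_bounded (hasSum_mul_pow_div_factorial _ _) (norm_besselB_term_le hδ x)

lemma measurable_besselB : Measurable besselB :=
  measurable_of_tendsto_metrizable
    (f := fun n x => ∑ j ∈ Finset.range n,
      (-1 : ℝ) ^ j * x ^ j / ((j.factorial : ℝ) * ((j + 1).factorial : ℝ)))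
    (fun n => by fun_prop)
    (tendsto_pi_nhds.2 fun x => (hasSum_besselB x).tendsto_sum_nat)

lemma integrableOn_pow_mul_cexp {z : ℂ} (hz : 0 < z.re) (j : ℕ) :
    IntegrableOn (fun x : ℝ => (x : ℂ) ^ j * Complex.exp (-z * x)) (Set.Ioi 0) := by
  have h := integrableOn_rpow_mul_exp_neg_mul_rpow (s := j) (p := 1) (b := z.re)
    (by linarith [(Nat.cast_nonneg j : (0 : ℝ) ≤ j)]) one_pos hz
  refine Integrable.mono' h (by fun_prop) ?_
  filter_upwards [ae_restrict_mem measurableSet_Ioi] with x hx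
  have hx : 0 < x := hx
  simp [Complex.norm_exp, abs_of_pos hx]

lemma integral_pow_mul_cexp {z : ℂ} (hz : 0 < z.re) (j : ℕ) :
    ∫ x in Set.Ioi (0 : ℝ), (x : ℂ) ^ j * Complex.exp (-z * x) = j.factorial / z ^ (j + 1) := by
  have hz0 : z ≠ 0 := by rintro rfl; simp at hz
  induction j with
  | zero =>
    have := integral_exp_mul_complex_Ioi (a := -z) (by simpa using hz) 0
    simp only [pow_zero, one_mul, this]
    simp
  | succ j ih =>
    have hd : ∀ x : ℝ, HasDerivAt (fun x : ℝ => (x : ℂ) ^ (j + 1) * Complex.exp (-z * x))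
        ((j + 1) * ((x : ℂ) ^ j * Complex.exp (-z * x)) -
          z * ((x : ℂ) ^ (j + 1) * Complex.exp (-z * x))) x := by
      intro x
      have h1 : HasDerivAt (fun y : ℂ => y ^ (j + 1) * Complex.exp (-z * y))
          ((j + 1) * ((x : ℂ) ^ j * Complex.exp (-z * x)) -
          z * ((x : ℂ) ^ (j + 1) * Complex.exp (-z * x))) (x : ℂ) := by
        have := (hasDerivAt_pow (j + 1) (x : ℂ)).mul
          (((hasDerivAt_id (x : ℂ)).const_mul (-z)).cexp)
        convert! this using 1
        simp
        ring
      exact h1.comp_ofReal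
    have hi := ((integrableOn_pow_mul_cexp hz j).const_mul (j + 1 : ℂ))
    have hi' := ((integrableOn_pow_mul_cexp hz (j + 1)).const_mul z)
    have hlim := tendsto_zero_of_hasDerivAt_of_integrableOn_Ioi (a := 0) (fun x _ => hd x)
      (hi.sub hi') (integrableOn_pow_mul_cexp hz (j + 1))
    have key := integral_Ioi_of_hasDerivAt_of_tendsto' (a := 0) (fun x _ => hd x) (hi.sub hi') hlim
    rw [integral_sub hi hi', integral_const_mul, integral_const_mul, ih] at key
    have key' : z * ∫ x in Set.Ioi (0 : ℝ), (x : ℂ) ^ (j + 1) * Complex.exp (-z * x) =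
        (j + 1) * (j.factorial / z ^ (j + 1)) := by
      rw [Complex.ofReal_zero, zero_pow j.succ_ne_zero] at key
      linear_combination -key
    apply mul_left_cancel₀ hz0
    rw [key', Nat.factorial_succ]
    push_cast
    field_simp
    ring

lemma integrableOn_besselB_mul_cexp {z : ℂ} (hz : 0 < z.re) :
    IntegrableOn (fun x : ℝ => (besselB x : ℂ) * Complex.exp (-z * x)) (Set.Ioi 0) := by
  have h := (integrableOn_exp_mul_Ioi (a := -(z.re / 2)) (by linarith) 0).const_mul
    (exp (z.re / 2)⁻¹)
  refine Integrable.mono' h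
    ((Complex.measurable_ofReal.comp measurable_besselB).mul (by fun_prop)).aestronglyMeasurable ?_
  filter_upwards [ae_restrict_mem measurableSet_Ioi] with x hx
  have hx : 0 < x := hx
  have hb := norm_besselB_le (half_pos hz) x
  rw [abs_of_pos hx] at hb
  rw [norm_mul, Complex.norm_exp, Complex.norm_real]
  calc
    _ ≤ exp (z.re / 2)⁻¹ * exp (z.re / 2 * x) * exp (-z * x).re := by gcongr
    _ = _ := by
      rw [mul_assoc, ← exp_add]
      congr 2
      simp
      ring

/-- The Laplace transform of `besselB`. -/
lemma integral_besselB_mul_cexp {z : ℂ} (hz : 0 < z.re) :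
    ∫ x in Set.Ioi (0 : ℝ), (besselB x : ℂ) * Complex.exp (-z * x) =
      1 - Complex.exp (-z⁻¹) := by
  have hz0 : z ≠ 0 := by rintro rfl; simp at hz
  set δ := z.re / 2 with hδ
  have hδ0 : 0 < δ := half_pos hz
  have hsum : HasSum (fun j : ℕ => ∫ x in Set.Ioi (0 : ℝ),
      (((-1 : ℝ) ^ j * x ^ j / ((j.factorial : ℝ) * ((j + 1).factorial : ℝ)) : ℝ) : ℂ) *
        Complex.exp (-z * x))
      (∫ x in Set.Ioi (0 : ℝ), (besselB x : ℂ) * Complex.exp (-z * x)) := by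
    have hb : ∀ x : ℝ, HasSum (fun j : ℕ =>
        exp δ⁻¹ * ((δ * |x|) ^ j / j.factorial) * exp (-z.re * x))
        (exp δ⁻¹ * exp (δ * |x|) * exp (-z.re * x)) := fun x =>
      (hasSum_mul_pow_div_factorial _ _).mul_right _
    refine hasSum_integral_of_dominated_convergence
      (fun j x => exp δ⁻¹ * ((δ * |x|) ^ j / j.factorial) * exp (-z.re * x))
      (fun j => by fun_prop) (fun j => ae_of_all _ fun x => ?_)
      (ae_of_all _ fun x => (hb x).summable) ?_ (ae_of_all _ fun x => ?_)
    · rw [norm_mul, Complex.norm_exp, Complex.norm_real]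
      have := norm_besselB_term_le hδ0 x j
      have h2 : (-z * x).re = -z.re * x := by simp
      rw [h2]
      gcongr
    · simp_rw [fun x => (hb x).tsum_eq]
      refine ((integrableOn_exp_mul_Ioi (a := -δ) (by linarith) 0).const_mul
        (exp δ⁻¹)).congr ?_
      filter_upwards [ae_restrict_mem measurableSet_Ioi] with x hx
      have hx : 0 < x := hx
      simp only [abs_of_pos hx, ← exp_add]
      congr 1
      rw [hδ]; ring
    · exact (Complex.hasSum_ofReal.2 (hasSum_besselB x)).mul_right _
  have hexp : HasSum (fun j : ℕ => -((-z⁻¹) ^ (j + 1) / ((j + 1).factorial : ℂ)))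
      (1 - Complex.exp (-z⁻¹)) := by
    have h := NormedSpace.expSeries_div_hasSum_exp (-z⁻¹)
    rw [← Complex.exp_eq_exp_ℂ, ← hasSum_nat_add_iff' 1] at h
    simpa using h.neg
  refine hsum.unique (hexp.congr_fun ?_)
  intro j
  have : ∀ x : ℝ, (((-1 : ℝ) ^ j * x ^ j / ((j.factorial : ℝ) * ((j + 1).factorial : ℝ)) : ℝ) : ℂ)
      * Complex.exp (-z * x) = ((-1) ^ j / ((j.factorial : ℂ) * ((j + 1).factorial : ℂ))) *
        ((x : ℂ) ^ j * Complex.exp (-z * x)) := by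
    intro x; push_cast; ring
  have hj : (j.factorial : ℂ) ≠ 0 := by exact_mod_cast j.factorial_ne_zero
  have hj' : ((j + 1).factorial : ℂ) ≠ 0 := by exact_mod_cast (j + 1).factorial_ne_zero
  simp_rw [this]
  rw [integral_const_mul, integral_pow_mul_cexp hz, neg_pow z⁻¹, inv_pow]
  field_simp
  ring

lemma oscInt_eq_fourierInv (φ : ℝ → ℂ) (t : ℝ) :
    oscInt φ t = FourierTransformInv.fourierInv φ (t / (2 * π)) := by
  rw [Real.fourierInv_eq', oscInt]
  congr 1 with x
  rw [smul_eq_mul]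
  congr 2
  simp only [RCLike.inner_apply, conj_trivial]
  push_cast
  have : (π : ℂ) ≠ 0 := by exact_mod_cast pi_ne_zero
  field_simp

lemma integrable_fourierInv_of_contDiff_of_hasCompactSupport {φ : ℝ → ℂ}
    (hφ : ContDiff ℝ (⊤ : ℕ∞) φ) (hc : HasCompactSupport φ) :
    Integrable (FourierTransformInv.fourierInv φ) := by
  have h := (FourierTransformInv.fourierInv (hc.toSchwartzMap hφ)).integrable (μ := volume)
  rwa [SchwartzMap.fourierInv_coe] at h

lemma integrable_oscInt {φ : ℝ → ℂ}
    (hφ : ContDiff ℝ (⊤ : ℕ∞) φ) (hc : HasCompactSupport φ) : Integrable (oscInt φ) := by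
  simp_rw [funext (oscInt_eq_fourierInv φ)]
  exact (integrable_fourierInv_of_contDiff_of_hasCompactSupport hφ hc).comp_div (by positivity)

lemma integral_oscInt_mul_cexp {φ : ℝ → ℂ}
    (hφ : ContDiff ℝ (⊤ : ℕ∞) φ) (hc : HasCompactSupport φ) (x : ℝ) :
    ∫ t : ℝ, oscInt φ t * Complex.exp (-Complex.I * t * x) = 2 * π * φ x := by
  have hinv := congrFun (hφ.continuous.fourier_fourierInv_eq
    (hφ.continuous.integrable_of_hasCompactSupport hc) ?_) x
  · rw [Real.fourier_real_eq_integral_exp_smul] at hinv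
    have hs := Measure.integral_comp_div (fun v : ℝ => Complex.exp (↑(-2 * π * v * x) * Complex.I) •
      FourierTransformInv.fourierInv φ v) (2 * π)
    rw [hinv, abs_of_pos (by positivity)] at hs
    rw [show (2 * π * φ x : ℂ) = (2 * π : ℝ) • φ x by simp, ← hs]
    congr 1 with t
    rw [oscInt_eq_fourierInv, smul_eq_mul, mul_comm]
    congr 2
    push_cast
    have : (π : ℂ) ≠ 0 := by exact_mod_cast pi_ne_zero
    field_simp
  · have h := (integrable_fourierInv_of_contDiff_of_hasCompactSupport hφ hc).comp_neg
    refine h.congr (ae_of_all _ fun v => ?_)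
    simp [Real.fourierInv_eq_fourier_neg]

/-- Fubini for a kernel `e^{ctx}` with `c` imaginary, between two integrable functions. -/
lemma integral_mul_integral_cexp_mul_swap {μ : Measure ℝ} [SFinite μ] {f g : ℝ → ℂ} (c : ℂ)
    (hc : c.re = 0) (hf : Integrable f) (hg : Integrable g μ) :
    ∫ t, f t * ∫ x, g x * Complex.exp (c * t * x) ∂μ =
      ∫ x, g x * (∫ t, f t * Complex.exp (c * t * x)) ∂μ := by
  simp_rw [← integral_const_mul]
  rw [integral_integral_swap]
  · congr 1 with x
    congr 1 with t
    ring
  · have h := hf.mul_prod hg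
    refine Integrable.mono h ?_ (ae_of_all _ fun p => ?_)
    · have := h.aestronglyMeasurable.mul (g := fun p : ℝ × ℝ => Complex.exp (c * p.1 * p.2))
        (by fun_prop)
      refine this.congr (ae_of_all _ fun p => ?_)
      simp [Function.uncurry, mul_assoc]
    · simp [Function.uncurry, Complex.norm_exp, hc]

lemma integrable_exp_neg_mul_abs {ε : ℝ} (hε : 0 < ε) :
    Integrable (fun t : ℝ => exp (-ε * |t|)) := by
  have := (integrable_fun_norm_addHaar (volume : Measure ℝ) (f := fun t => exp (-ε * t))).2
    (by simpa using integrableOn_exp_mul_Ioi (a := -ε) (by linarith) 0)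
  simpa using this

lemma norm_cexp_I_div_sub (ε t : ℝ) :
    ‖Complex.exp (Complex.I / t - ε * |t|)‖ = exp (-ε * |t|) := by
  rw [Complex.norm_exp]
  congr 1
  simp [Complex.div_re]

lemma integrable_cexp_I_div_sub {ε : ℝ} (hε : 0 < ε) :
    Integrable (fun t : ℝ => Complex.exp (Complex.I / t - ε * |t|)) := by
  refine (integrable_exp_neg_mul_abs hε).mono' (by fun_prop) (ae_of_all _ fun t => ?_)
  exact (norm_cexp_I_div_sub ε t).le

lemma cexp_I_div_add_sub (ε t x : ℝ) :
    Complex.exp (Complex.I / t + Complex.I * t * x - ε * |t|) =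
      Complex.exp (Complex.I / t - ε * |t|) * Complex.exp (Complex.I * t * x) := by
  rw [← Complex.exp_add]
  ring_nf

lemma norm_cexp_neg_inv_le_one {η : ℝ} (hη : 0 < η) (t : ℝ) :
    ‖Complex.exp (-(η + Complex.I * t)⁻¹)‖ ≤ 1 := by
  rw [Complex.norm_exp, exp_le_one_iff, Complex.neg_re, neg_nonpos, Complex.inv_re]
  refine div_nonneg ?_ (Complex.normSq_nonneg _)
  simpa using hη.le

lemma integrable_oscInt_mul_cexp_neg_inv {φ : ℝ → ℂ}
    (hφ : ContDiff ℝ (⊤ : ℕ∞) φ) (hc : HasCompactSupport φ) {η : ℝ} (hη : 0 < η) :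
    Integrable (fun t : ℝ => oscInt φ t * Complex.exp (-(η + Complex.I * t)⁻¹)) :=
  (integrable_oscInt hφ hc).mul_bdd (c := 1) (by fun_prop)
    (ae_of_all _ (norm_cexp_neg_inv_le_one hη))

lemma integral_oscInt_mul_cexp_neg_inv {φ : ℝ → ℂ}
    (hφ : ContDiff ℝ (⊤ : ℕ∞) φ) (hc : HasCompactSupport φ) {η : ℝ} (hη : 0 < η) :
    ∫ t : ℝ, oscInt φ t * Complex.exp (-(η + Complex.I * t)⁻¹) =
      2 * π * (φ 0 - ∫ x in Set.Ioi (0 : ℝ), (besselB x : ℂ) * Complex.exp (-η * x) * φ x) := by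
  have hη' : 0 < (η : ℂ).re := by simpa
  have hL : ∀ t : ℝ, Complex.exp (-(η + Complex.I * t)⁻¹) = 1 -
      ∫ x in Set.Ioi (0 : ℝ), (besselB x : ℂ) * Complex.exp (-η * x) *
        Complex.exp (-Complex.I * t * x) := by
    intro t
    have h := integral_besselB_mul_cexp (z := η + Complex.I * t) (by simpa)
    have h2 : ∀ x : ℝ, (besselB x : ℂ) * Complex.exp (-(η + Complex.I * t) * x) =
        (besselB x : ℂ) * Complex.exp (-η * x) * Complex.exp (-Complex.I * t * x) := by
      intro x
      rw [mul_assoc, ← Complex.exp_add]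
      ring_nf
    simp_rw [h2] at h
    rw [h]; ring
  have hψ := integrable_oscInt hφ hc
  have hE := integrable_oscInt_mul_cexp_neg_inv hφ hc hη
  have hB := integral_mul_integral_cexp_mul_swap (-Complex.I) (by simp) hψ
    (integrableOn_besselB_mul_cexp hη')
  have h0 : ∫ t, oscInt φ t = 2 * π * φ 0 := by
    simpa using integral_oscInt_mul_cexp hφ hc 0
  have hsub := integral_sub hψ hE
  have hpt : ∀ t : ℝ, oscInt φ t - oscInt φ t * Complex.exp (-(η + Complex.I * t)⁻¹) =
      oscInt φ t * ∫ x in Set.Ioi (0 : ℝ), (besselB x : ℂ) * Complex.exp (-η * x) *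
        Complex.exp (-Complex.I * t * x) := by
    intro t
    rw [hL t]; ring
  simp_rw [hpt] at hsub
  simp_rw [integral_oscInt_mul_cexp hφ hc] at hB
  have hpull : ∫ x in Set.Ioi (0 : ℝ), (besselB x : ℂ) * Complex.exp (-η * x) * (2 * π * φ x) =
      2 * π * ∫ x in Set.Ioi (0 : ℝ), (besselB x : ℂ) * Complex.exp (-η * x) * φ x := by
    rw [← integral_const_mul]
    congr 1 with x
    ring
  rw [hB, hpull, h0] at hsub
  linear_combination hsub

lemma tendsto_integral_besselB_mul_cexp_mul {φ : ℝ → ℂ} (hφ : Continuous φ)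
    (hc : HasCompactSupport φ) :
    Tendsto (fun η : ℝ => ∫ x in Set.Ioi (0 : ℝ),
        (besselB x : ℂ) * Complex.exp (-η * x) * φ x)
      (nhdsWithin 0 (Set.Ioi 0)) (nhds (∫ x in Set.Ioi (0 : ℝ), (besselB x : ℂ) * φ x)) := by
  have hBm : Measurable fun x => (besselB x : ℂ) := Complex.measurable_ofReal.comp measurable_besselB
  have hint : Integrable (fun x : ℝ => exp 1 * exp |x| * ‖φ x‖) := by
    refine Continuous.integrable_of_hasCompactSupport (by fun_prop) ?_
    exact hc.norm.mul_left
  refine tendsto_integral_filter_of_dominated_convergence _ ?_ ?_ hint.integrableOn ?_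
  · refine Eventually.of_forall fun η => ?_
    exact ((hBm.mul (by fun_prop)).mul hφ.measurable).aestronglyMeasurable
  · filter_upwards [self_mem_nhdsWithin] with η hη
    have hη : 0 < η := hη
    filter_upwards [ae_restrict_mem measurableSet_Ioi] with x hx
    have hx : 0 < x := hx
    have hb : ‖(besselB x : ℂ)‖ ≤ exp 1 * exp |x| := by
      simpa using norm_besselB_le one_pos x
    have he : ‖Complex.exp (-η * x)‖ ≤ 1 := by
      rw [Complex.norm_exp, exp_le_one_iff]
      simpa using (mul_pos hη hx).le
    rw [norm_mul, norm_mul]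
    refine mul_le_mul_of_nonneg_right ?_ (norm_nonneg _)
    exact (mul_le_of_le_one_right (norm_nonneg _) he).trans hb
  · refine ae_of_all _ fun x => ?_
    have hcont : Continuous fun η : ℝ => (besselB x : ℂ) * Complex.exp (-η * x) * φ x := by
      fun_prop
    simpa using (hcont.tendsto 0).mono_left nhdsWithin_le_nhds

lemma integral_oscInt_mul_cexp_I_div {φ : ℝ → ℂ}
    (hφ : ContDiff ℝ (⊤ : ℕ∞) φ) (hc : HasCompactSupport φ) :
    ∫ t : ℝ, oscInt φ t * Complex.exp (Complex.I / t) =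
      2 * π * (φ 0 - ∫ x in Set.Ioi (0 : ℝ), (besselB x : ℂ) * φ x) := by
  have hψ := integrable_oscInt hφ hc
  have hlim := ((tendsto_integral_besselB_mul_cexp_mul hφ.continuous hc).const_sub (φ 0)).const_mul
    (2 * π : ℂ)
  refine tendsto_nhds_unique (f := fun η : ℝ =>
    ∫ t : ℝ, oscInt φ t * Complex.exp (-(η + Complex.I * t)⁻¹)) ?_ (hlim.congr' ?_)
  · refine tendsto_integral_filter_of_dominated_convergence (fun t => ‖oscInt φ t‖) ?_ ?_ hψ.norm ?_
    · filter_upwards [self_mem_nhdsWithin] with η hη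
      exact (integrable_oscInt_mul_cexp_neg_inv hφ hc hη).aestronglyMeasurable
    · filter_upwards [self_mem_nhdsWithin] with η hη
      refine ae_of_all _ fun t => ?_
      rw [norm_mul]
      exact mul_le_of_le_one_right (norm_nonneg _) (norm_cexp_neg_inv_le_one hη t)
    · filter_upwards [Measure.ae_ne volume (0 : ℝ)] with t ht
      have hne : ((0 : ℝ) : ℂ) + Complex.I * t ≠ 0 := by simpa using ht
      have hcont : ContinuousAt
          (fun η : ℝ => oscInt φ t * Complex.exp (-((η : ℂ) + Complex.I * t)⁻¹)) 0 :=
        continuousAt_const.mul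
          (((Complex.continuous_ofReal.continuousAt.add continuousAt_const).inv₀ hne).neg.cexp)
      have heq : -((0 : ℝ) + Complex.I * t : ℂ)⁻¹ = Complex.I / t := by
        rw [Complex.ofReal_zero, zero_add, mul_inv, Complex.inv_I]
        ring
      have h := hcont.tendsto
      rw [heq] at h
      exact h.mono_left nhdsWithin_le_nhds
  · filter_upwards [self_mem_nhdsWithin] with η hη
    exact (integral_oscInt_mul_cexp_neg_inv hφ hc hη).symm

lemma integral_integral_cexp_mul {φ : ℝ → ℂ} (hφ : Integrable φ) {ε : ℝ} (hε : 0 < ε) (c : ℂ) :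
    ∫ x : ℝ, c * (∫ t : ℝ, Complex.exp (Complex.I / t + Complex.I * t * x - ε * |t|)) * φ x =
      c * ∫ t : ℝ, oscInt φ t * Complex.exp (Complex.I / t - ε * |t|) := by
  have h := integral_mul_integral_cexp_mul_swap Complex.I (by simp)
    (integrable_cexp_I_div_sub hε) hφ
  have h1 : ∀ t : ℝ, ∫ x, φ x * Complex.exp (Complex.I * t * x) = oscInt φ t := fun t => by
    simp_rw [oscInt, mul_comm]
  simp_rw [h1, mul_comm _ (oscInt φ _)] at h
  rw [h, ← integral_const_mul c]
  simp_rw [cexp_I_div_add_sub]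
  congr 1 with x
  ring

/-- The distributional Fourier transform of `t ↦ e^{i/t}` equals
`δ₀(x) - 1_{ℝ₊}(x) x^{-1/2} J₁(2√x)`. -/
theorem stmt_9 :
    (∀ ε : ℝ, 0 < ε → ∀ x : ℝ,
      Integrable (fun t : ℝ =>
        Complex.exp (Complex.I / t + Complex.I * t * x - ε * |t|))) ∧
    (∀ φ : ℝ → ℂ, ContDiff ℝ (⊤ : ℕ∞) φ → HasCompactSupport φ →
      Tendsto
        (fun ε : ℝ => ∫ x : ℝ,
          ((1 / (2 * π) : ℝ) : ℂ) *
            (∫ t : ℝ, Complex.exp (Complex.I / t + Complex.I * t * x - ε * |t|)) * φ x)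
        (nhdsWithin 0 (Set.Ioi 0))
        (nhds (φ 0 - ∫ x in Set.Ioi (0:ℝ),
          ((∑' j : ℕ, (-1 : ℝ) ^ j * x ^ j /
            ((j.factorial : ℝ) * ((j + 1).factorial : ℝ)) : ℝ) : ℂ) * φ x))) := by
  refine ⟨fun ε hε x => ?_, fun φ hφ hc => ?_⟩
  · refine (integrable_exp_neg_mul_abs hε).mono' (by fun_prop) (ae_of_all _ fun t => ?_)
    rw [cexp_I_div_add_sub, norm_mul, norm_cexp_I_div_sub]
    simp [Complex.norm_exp]
  change Tendsto _ _ (nhds (φ 0 - ∫ x in Set.Ioi (0 : ℝ), (besselB x : ℂ) * φ x))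
  have hψ := integrable_oscInt hφ hc
  have hlim : Tendsto (fun ε : ℝ => ∫ t : ℝ, oscInt φ t * Complex.exp (Complex.I / t - ε * |t|))
      (nhdsWithin 0 (Set.Ioi 0)) (nhds (∫ t : ℝ, oscInt φ t * Complex.exp (Complex.I / t))) := by
    refine tendsto_integral_filter_of_dominated_convergence (fun t => ‖oscInt φ t‖) ?_ ?_ hψ.norm
      (ae_of_all _ fun t => ?_)
    · exact Eventually.of_forall fun ε => hψ.aestronglyMeasurable.mul (by fun_prop)
    · filter_upwards [self_mem_nhdsWithin] with ε hε
      have hε : 0 < ε := hε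
      refine ae_of_all _ fun t => ?_
      rw [norm_mul, norm_cexp_I_div_sub]
      refine mul_le_of_le_one_right (norm_nonneg _) (exp_le_one_iff.2 ?_)
      rw [neg_mul, neg_nonpos]
      positivity
    · have hcont : Continuous fun ε : ℝ =>
          oscInt φ t * Complex.exp (Complex.I / t - ε * |t|) := by fun_prop
      simpa using (hcont.tendsto 0).mono_left nhdsWithin_le_nhds
  have hlim' := hlim.const_mul ((1 / (2 * π) : ℝ) : ℂ)
  have hval : ((1 / (2 * π) : ℝ) : ℂ) * (2 * π * (φ 0 -
      ∫ x in Set.Ioi (0 : ℝ), (besselB x : ℂ) * φ x)) =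
      φ 0 - ∫ x in Set.Ioi (0 : ℝ), (besselB x : ℂ) * φ x := by
    have : (π : ℂ) ≠ 0 := by exact_mod_cast pi_ne_zero
    push_cast
    field_simp
  rw [integral_oscInt_mul_cexp_I_div hφ hc, hval] at hlim'
  refine hlim'.congr' ?_
  filter_upwards [self_mem_nhdsWithin] with ε hε
  exact (integral_integral_cexp_mul (hφ.continuous.integrable_of_hasCompactSupport hc) hε _).symm
end
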